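/- For every positive integer k there exists a constant C > 0 (depending only on k) with the following property. Let g(x) = a_0 + a_1x + ⋯ + a_kx^k ∈ ℤ[x] with a_k > 0, let X, Y, Z ≥ 2 with Y·Z ≤ X, let a, q be positive integers with gcd(a,q) = 1, and let α ∈ ℝ with |α − a/q| < 1/q². Then | ∑_{1 ≤ n ≤ X, n ∈ W(g;Y)} e(g(n)α) | ≤ C·cont(g)⁶·(log Y)^{e·k}·X·( e^{−(log Z)/(log Y)} + ( a_k·(log(a_k·q·X))^{k²}·( q^{−1} + Z/X + q·Z^k/(a_k·X^k) ) )^{2^{−k}} ). -/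

import Mathlib

/-- `γ(g;p)`: the smallest positive integer `γ` such that the derivative `g'` does not vanish
identically modulo `p^γ`. -/
noncomputable def gammaExp (g : Polynomial ℤ) (p : ℕ) : ℕ :=
  sInf {c : ℕ | 0 < c ∧ ¬ ∀ n : ℤ, ((p : ℤ) ^ c) ∣ (Polynomial.derivative g).eval n}

/-- `j(g;p)`: the number of residues `s` modulo `p^{γ(g;p)}` with `g'(s) ≡ 0 (mod p^{γ(g;p)})`. -/
noncomputable def jCount (g : Polynomial ℤ) (p : ℕ) : ℕ := by
  classical
  exact ((Finset.range (p ^ gammaExp g p)).filter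
    (fun s => ((p : ℤ) ^ gammaExp g p) ∣ (Polynomial.derivative g).eval (s : ℤ))).card

/-- `∏_{p ≤ Y} (1 - j(g;p)/p^{γ(g;p)})`, the product being over primes `p ≤ Y`. -/
noncomputable def wProd (g : Polynomial ℤ) (Y : ℝ) : ℝ := by
  classical
  exact ∏ p ∈ (Finset.range (⌊Y⌋₊ + 1)).filter Nat.Prime,
    (1 - (jCount g p : ℝ) / (p : ℝ) ^ gammaExp g p)

/-- `W(g;Y) = {n ∈ ℤ : g'(n) ≢ 0 (mod p^{γ(g;p)}) for all primes p ≤ Y}`. -/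
def WSet (g : Polynomial ℤ) (Y : ℝ) : Set ℤ :=
  {n : ℤ | ∀ p : ℕ, p.Prime → (p : ℝ) ≤ Y →
    ¬ ((p : ℤ) ^ gammaExp g p ∣ (Polynomial.derivative g).eval n)}

/-- `W_q(g;Y) = {n ∈ ℤ : g'(n) ≢ 0 (mod p^{γ(g;p)}) for all primes p ≤ Y with p^{γ(g;p)} ∣ q}`. -/
def WqSet (g : Polynomial ℤ) (Y : ℝ) (q : ℕ) : Set ℤ :=
  {n : ℤ | ∀ p : ℕ, p.Prime → (p : ℝ) ≤ Y → p ^ gammaExp g p ∣ q →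
    ¬ ((p : ℤ) ^ gammaExp g p ∣ (Polynomial.derivative g).eval n)}
/-- `cont(g)`: the gcd of the nonconstant coefficients of `g`. -/
noncomputable def cont (g : Polynomial ℤ) : ℕ :=
  (Finset.Icc 1 g.natDegree).gcd (fun i => (g.coeff i).natAbs)
/-- `e(x) = e^{2πix}`. -/
noncomputable def e (x : ℝ) : ℂ := Complex.exp (2 * Real.pi * Complex.I * x)

/-!
Sieving out the primes `k < p ≤ Y` replaces the condition `n ∈ W(g;Y)` by residue classes modulo
`(k!)² d` with `d ≤ D = (X/Y) ^ (1/B)` squarefree, a power of `X/Y` so small that Weyl differencing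
loses nothing on the progressions; Rankin's trick bounds what the truncation discards by
`X exp(-log X / log Y)` up to powers of `log Y`, since at most `k - 1` classes are removed modulo
each prime.

Along such a progression the polynomial has leading phase `k! a_k α` up to a bounded power of `d`.
Let `b/r` be a Dirichlet approximation to it, and let `R ≥ r` also measure how well `b/r`
approximates. If `R` is at least a small power of `X`, Weyl's inequality saves more than
enough, uniformly in `d`. Otherwise the phase lies on a major arc, and the sum is at most
`X (gcd(r,d)/d) R ^ (-3θ/2)` up to a constant, where `θ = 2 ^ (-k)`. The excess over the exponent
`-θ` pays for the divisor bound `∑ gcd(r,d)/d ≪ r ^ (θ/2) (log Y) ^ (2(k-1))`. Finally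
`|α - a/q| ≤ 1/q²` forces `R ≫ (a_k/q + a_k/X + q/X ^ k)⁻¹`.
-/

section

open Finset Polynomial

/-! ### Exponential sums of linear polynomials -/

lemma e_eq_fourierChar (x : ℝ) : e x = Real.fourierChar x := by
  rw [e, Real.fourierChar_apply]
  push_cast
  ring_nf

lemma e_add (x y : ℝ) : e (x + y) = e x * e y := by
  simp [e_eq_fourierChar, AddChar.map_add_eq_mul]

lemma norm_e (x : ℝ) : ‖e x‖ = 1 := by
  rw [e_eq_fourierChar, Circle.norm_coe]

lemma conj_e (x : ℝ) : (starRingEnd ℂ) (e x) = e (-x) := by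
  simp only [e_eq_fourierChar, Circle.starRingEnd_addChar]

lemma e_intCast (n : ℤ) : e n = 1 := by
  rw [e, Complex.exp_eq_one_iff]
  exact ⟨n, by push_cast; ring⟩

lemma four_mul_norm_coe_le_norm_e_sub_one (x : ℝ) :
    4 * ‖(x : UnitAddCircle)‖ ≤ ‖e x - 1‖ := by
  rw [UnitAddCircle.norm_eq]
  set y := x - round x with hy
  have e_eq : e x = Complex.exp (Complex.I * ((2 * Real.pi * y : ℝ) : ℂ)) := by
    rw [show x = y + (round x : ℤ) by rw [hy]; ring, e_add, e_intCast, mul_one, e]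
    push_cast
    ring_nf
  have pi_mul_y_le : |Real.pi * y| ≤ Real.pi / 2 := by
    rw [abs_mul, abs_of_pos Real.pi_pos]
    nlinarith [abs_sub_round x, Real.pi_pos]
  have le_sin := Real.mul_abs_le_abs_sin pi_mul_y_le
  rw [abs_mul, abs_of_pos Real.pi_pos, ← mul_assoc, div_mul_cancel₀ _ Real.pi_ne_zero] at le_sin
  rw [e_eq, Complex.norm_exp_I_mul_ofReal_sub_one, Real.norm_eq_abs, abs_mul, abs_two,
    mul_assoc 2 Real.pi y, mul_div_cancel_left₀ _ two_ne_zero]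
  linarith

/-- A smooth version of `min (2 * N) (2 / ‖x‖)`, where `‖x‖` is the distance from `x` to the nearest
integer. It majorizes the exponential sums with linear phase of slope `x` and length at most `N`. -/
noncomputable def geomKernel (N x : ℝ) : ℝ := 2 * N / (1 + N * ‖(x : UnitAddCircle)‖)

lemma geomKernel_nonneg {N : ℝ} (hN : 0 ≤ N) (x : ℝ) : 0 ≤ geomKernel N x := by
  unfold geomKernel
  positivity

lemma geomKernel_le {N : ℝ} (hN : 0 ≤ N) (x : ℝ) : geomKernel N x ≤ 2 * N :=
  div_le_self (by positivity) (le_add_of_nonneg_right (by positivity))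

lemma geomKernel_le_two_div {N x y : ℝ} (hN : 0 ≤ N) (hy : 0 < y)
    (hxy : y ≤ ‖(x : UnitAddCircle)‖) : geomKernel N x ≤ 2 / y := by
  unfold geomKernel
  rw [div_le_div_iff₀ (by positivity) hy]
  nlinarith [mul_le_mul_of_nonneg_left hxy hN]

lemma geomKernel_neg (N x : ℝ) : geomKernel N (-x) = geomKernel N x := by
  simp [geomKernel]

lemma sum_e_linear_mul (x c : ℝ) {u v : ℤ} (huv : u ≤ v) :
    (∑ m ∈ Ico u v, e (c + m * x)) * (e x - 1) = e (c + v * x) - e (c + u * x) := by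
  induction v, huv using Int.leInduction with
  | base => simp
  | succ v huv ih =>
    have e_succ : e (c + ((v + 1 : ℤ) : ℝ) * x) = e (c + v * x) * e x := by
      rw [← e_add]
      push_cast
      ring_nf
    rw [← insert_Ico_right_eq_Ico_add_one huv, sum_insert (by simp), add_mul, ih, e_succ]
    ring

lemma norm_sum_e_Ico_le (φ : ℤ → ℝ) {N : ℕ} {u v : ℤ} (huv : v - u ≤ N) :
    ‖∑ m ∈ Ico u v, e (φ m)‖ ≤ N := by
  calc ‖∑ m ∈ Ico u v, e (φ m)‖ ≤ ∑ m ∈ Ico u v, ‖e (φ m)‖ := norm_sum_le _ _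
    _ = (v - u).toNat := by simp [norm_e]
    _ ≤ N := by exact_mod_cast Int.toNat_le.mpr huv

lemma norm_sum_e_linear_le_geomKernel (x c : ℝ) {N : ℕ} {u v : ℤ} (huv : v - u ≤ N) :
    ‖∑ m ∈ Ico u v, e (c + m * x)‖ ≤ geomKernel N x := by
  set S := ∑ m ∈ Ico u v, e (c + m * x) with hS
  have trivial_bound : ‖S‖ ≤ N := norm_sum_e_Ico_le (fun m => c + m * x) huv
  have telescoped : ‖S‖ * ‖e x - 1‖ ≤ 2 := by
    rcases le_total v u with h | h
    · simp [hS, Ico_eq_empty_of_le h]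
    · rw [← norm_mul, hS, sum_e_linear_mul x c h]
      exact (norm_sub_le _ _).trans_eq (by rw [norm_e, norm_e]; norm_num)
  have geometric_bound : ‖S‖ * (4 * ‖(x : UnitAddCircle)‖) ≤ 2 :=
    (mul_le_mul_of_nonneg_left (four_mul_norm_coe_le_norm_e_sub_one x) (norm_nonneg _)).trans
      telescoped
  rw [geomKernel, le_div_iff₀ (by positivity)]
  nlinarith [mul_le_mul_of_nonneg_left geometric_bound N.cast_nonneg (α := ℝ)]

/-! ### Sums over products of differencing parameters -/

lemma card_Ioo_neg_le (N : ℕ) : (#(Ioo (-(N : ℤ)) N) : ℝ) ≤ 2 * N := by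
  have : #(Ioo (-(N : ℤ)) N) ≤ 2 * N := by simp only [Int.card_Ioo]; omega
  exact_mod_cast this

/-- The sum of `F (h₁ ⋯ hⱼ)` over all integers `h₁, …, hⱼ` in `(-N, N)`, which are the shifts that
`j` Weyl differencing steps of a sum of length `N` produce. -/
noncomputable def boxProductSum (N j : ℕ) (F : ℤ → ℝ) : ℝ :=
  ∑ h ∈ Fintype.piFinset fun _ : Fin j => Ioo (-(N : ℤ)) N, F (∏ i, h i)

section boxProductSum

variable {N j : ℕ} {F G : ℤ → ℝ}

lemma boxProductSum_zero (N : ℕ) (F : ℤ → ℝ) : boxProductSum N 0 F = F 1 := by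
  simp [boxProductSum]

lemma boxProductSum_succ (N j : ℕ) (F : ℤ → ℝ) :
    boxProductSum N (j + 1) F =
      ∑ h ∈ Ioo (-(N : ℤ)) N, boxProductSum N j fun m => F (h * m) := by
  simp only [boxProductSum]
  rw [← sum_product']
  refine sum_equiv (Fin.consEquiv fun _ => ℤ).symm (fun h => ?_) (fun h _ => ?_)
  · simp [Fin.forall_fin_succ, Fin.consEquiv, Fin.tail]
  · simp [Fin.prod_univ_succ, Fin.consEquiv, Fin.tail]

lemma boxProductSum_nonneg (hF : ∀ m, 0 ≤ F m) : 0 ≤ boxProductSum N j F :=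
  sum_nonneg fun _ _ => hF _

lemma boxProductSum_le_of_le_on (hFG : ∀ m : ℤ, |m| ≤ (N : ℤ) ^ j → F m ≤ G m) :
    boxProductSum N j F ≤ boxProductSum N j G := by
  refine sum_le_sum fun h hh => hFG _ ?_
  rw [abs_prod]
  refine (prod_le_prod (fun i _ => abs_nonneg _) fun i _ => ?_).trans_eq (Fin.prod_const j (N : ℤ))
  have := mem_Ioo.mp (Fintype.mem_piFinset.mp hh i)
  exact abs_le.mpr ⟨this.1.le, this.2.le⟩

lemma boxProductSum_add : boxProductSum N j (fun m => F m + G m) =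
    boxProductSum N j F + boxProductSum N j G :=
  sum_add_distrib

lemma boxProductSum_const_mul (c : ℝ) :
    boxProductSum N j (fun m => c * F m) = c * boxProductSum N j F :=
  (mul_sum _ _ _).symm

lemma boxProductSum_sum {ι : Type*} (s : Finset ι) (F : ι → ℤ → ℝ) :
    boxProductSum N j (fun m => ∑ i ∈ s, F i m) = ∑ i ∈ s, boxProductSum N j (F i) :=
  sum_comm

lemma boxProductSum_one_le (N j : ℕ) : boxProductSum N j (fun _ => 1) ≤ (2 * N : ℝ) ^ j := by
  simp only [boxProductSum, sum_const, Fintype.card_piFinset, prod_const, card_univ,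
    Fintype.card_fin, nsmul_eq_mul, mul_one, Nat.cast_pow]
  gcongr
  exact card_Ioo_neg_le N

end boxProductSum

/-- The majorant of the `2 ^ j`-th power of a normalized exponential sum of length `N` whose
phase has degree `j + 1` and `(j + 1)`-st derivative `ξ`. -/
noncomputable def weylMean (N j : ℕ) (ξ : ℝ) : ℝ :=
  boxProductSum N j (fun m => geomKernel N (m * ξ)) / (2 * N : ℝ) ^ (j + 1)

lemma weylMean_nonneg (N j : ℕ) (ξ : ℝ) : 0 ≤ weylMean N j ξ :=
  div_nonneg (boxProductSum_nonneg fun _ => geomKernel_nonneg N.cast_nonneg _) (by positivity)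

lemma weylMean_neg (N j : ℕ) (ξ : ℝ) : weylMean N j (-ξ) = weylMean N j ξ := by
  simp only [weylMean, mul_neg, geomKernel_neg]

lemma weylMean_succ (N j : ℕ) (ξ : ℝ) :
    weylMean N (j + 1) ξ = (∑ h ∈ Ioo (-(N : ℤ)) N, weylMean N j (h * ξ)) / (2 * N) := by
  simp only [weylMean, boxProductSum_succ]
  rw [← sum_div, div_div, ← pow_succ]
  simp only [Int.cast_mul]
  congr 1
  exact sum_congr rfl fun h _ => by congr 1; ext m; ring_nf

/-! ### Weyl's inequality -/

section taylor

variable {R : Type*} [CommRing R] {φ : R[X]}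

lemma coeff_taylor_of_natDegree_le_succ {n : ℕ} (hφ : φ.natDegree ≤ n + 1) (h : R) :
    (taylor h φ).coeff n = φ.coeff n + (n + 1) * h * φ.coeff (n + 1) := by
  have hasse : hasseDeriv n φ = C (φ.coeff n) + C ((n + 1) * φ.coeff (n + 1)) * X := by
    ext i
    rw [hasseDeriv_coeff, coeff_add, coeff_C, coeff_C_mul, coeff_X]
    rcases i with _ | _ | i
    · simp
    · simp [add_comm 1 n, Nat.choose_succ_self_right]
    · rw [coeff_eq_zero_of_natDegree_lt (by omega)]
      simp
  rw [taylor_coeff, hasse, eval_add, eval_mul, eval_C, eval_C, eval_X]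
  ring

lemma coeff_taylor_sub_self {j : ℕ} (hφ : φ.natDegree ≤ j + 1) (h : R) :
    (taylor h φ - φ).coeff j = (j + 1) * h * φ.coeff (j + 1) := by
  rw [coeff_sub, coeff_taylor_of_natDegree_le_succ hφ, add_sub_cancel_left]

lemma natDegree_taylor_sub_self_le {j : ℕ} (hφ : φ.natDegree ≤ j + 1) (h : R) :
    (taylor h φ - φ).natDegree ≤ j := by
  rw [natDegree_le_iff_coeff_eq_zero]
  intro n hn
  rw [coeff_taylor_sub_self (by omega), coeff_eq_zero_of_natDegree_lt (by omega), mul_zero]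

end taylor

lemma sq_norm_sum_e_le (φ : ℝ → ℝ) {N : ℕ} {u v : ℤ} (huv : v - u ≤ N) :
    ‖∑ m ∈ Ico u v, e (φ m)‖ ^ 2 ≤ ∑ h ∈ Ioo (-(N : ℤ)) N,
      ‖∑ m ∈ Ico (max u (u - h)) (min v (v - h)), e (φ (m + h) - φ m)‖ := by
  set S := ∑ m ∈ Ico u v, e (φ m) with hS
  have expanded : S * (starRingEnd ℂ) S = ∑ h ∈ Ioo (-(N : ℤ)) N,
      ∑ m ∈ Ico (max u (u - h)) (min v (v - h)), e (φ (m + h) - φ m) := by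
    rw [hS, map_sum, sum_mul_sum, ← sum_product', sum_sigma']
    symm
    refine sum_bij' (fun x _ => ((x.2 + x.1, x.2) : ℤ × ℤ)) (fun y _ => ⟨y.1 - y.2, y.2⟩)
      ?_ ?_ ?_ ?_ ?_
    · rintro ⟨h, m⟩ hx
      simp only [mem_sigma, mem_Ioo, mem_Ico, mem_product] at hx ⊢
      omega
    · rintro ⟨a, b⟩ hx
      simp only [mem_sigma, mem_Ioo, mem_Ico, mem_product] at hx ⊢
      omega
    · simp
    · simp
    · rintro ⟨h, m⟩ -
      simp only [conj_e, ← e_add, ← sub_eq_add_neg, Int.cast_add]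
  calc ‖S‖ ^ 2 = ‖S * (starRingEnd ℂ) S‖ := by simp [sq]
    _ ≤ _ := by rw [expanded]; exact norm_sum_le _ _

lemma sum_div_pow_le_sum_pow_div {ι : Type*} {s : Finset ι} {f : ι → ℝ} (hf : ∀ i ∈ s, 0 ≤ f i)
    {M : ℝ} (hM : 0 < M) (hs : #s ≤ M) {n : ℕ} (hn : n ≠ 0) :
    ((∑ i ∈ s, f i) / M) ^ n ≤ (∑ i ∈ s, f i ^ n) / M := by
  obtain ⟨n, rfl⟩ := Nat.exists_eq_succ_of_ne_zero hn
  have sum_pow_nonneg : 0 ≤ ∑ i ∈ s, f i ^ (n + 1) :=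
    sum_nonneg fun i hi => pow_nonneg (hf i hi) _
  rcases s.eq_empty_or_nonempty with rfl | hne
  · simp
  have : (0 : ℝ) < #s := by exact_mod_cast hne.card_pos
  have power_mean := pow_sum_div_card_le_sum_pow hf n
  rw [div_le_iff₀ (by positivity)] at power_mean
  rw [div_pow, div_le_div_iff₀ (by positivity) hM]
  calc (∑ i ∈ s, f i) ^ (n + 1) * M ≤ ((∑ i ∈ s, f i ^ (n + 1)) * #s ^ n) * M := by gcongr
    _ ≤ ((∑ i ∈ s, f i ^ (n + 1)) * M ^ n) * M := by gcongr
    _ = (∑ i ∈ s, f i ^ (n + 1)) * M ^ (n + 1) := by ring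

lemma norm_sum_e_div_pow_le_weylMean_zero {N : ℕ} {φ : ℝ[X]} (hφ : φ.natDegree ≤ 1) {u v : ℤ}
    (huv : v - u ≤ N) :
    ‖∑ m ∈ Ico u v, e (φ.eval (m : ℝ))‖ / (2 * N) ≤ weylMean N 0 (φ.coeff 1) := by
  have eval_eq (m : ℤ) : φ.eval (m : ℝ) = φ.coeff 0 + m * φ.coeff 1 := by
    conv_lhs => rw [eq_X_add_C_of_natDegree_le_one hφ]
    simp only [eval_add, eval_mul, eval_C, eval_X]
    ring
  simp only [weylMean, boxProductSum_zero, eval_eq, Int.cast_one, one_mul, zero_add, pow_one]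
  gcongr
  exact norm_sum_e_linear_le_geomKernel _ _ huv

theorem norm_sum_e_div_pow_le_weylMean {N : ℕ} (hN : 0 < N) (j : ℕ) {φ : ℝ[X]}
    (hφ : φ.natDegree ≤ j + 1) {u v : ℤ} (huv : v - u ≤ N) :
    (‖∑ m ∈ Ico u v, e (φ.eval (m : ℝ))‖ / (2 * N)) ^ 2 ^ j ≤
      weylMean N j ((j + 1).factorial * φ.coeff (j + 1)) := by
  induction j generalizing φ u v with
  | zero => simpa using norm_sum_e_div_pow_le_weylMean_zero hφ huv
  | succ j ih =>
    have hN2 : (0 : ℝ) < 2 * N := by positivity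
    set S : ℤ → ℝ := fun h => ‖∑ m ∈ Ico (max u (u - h)) (min v (v - h)),
      e (φ.eval ((m : ℝ) + h) - φ.eval (m : ℝ))‖ / (2 * N) with hS
    have differenced (h : ℤ) :
        S h ^ 2 ^ j ≤ weylMean N j (h * ((j + 2).factorial * φ.coeff (j + 2))) := by
      have := ih (natDegree_taylor_sub_self_le hφ (h : ℝ)) (u := max u (u - h))
        (v := min v (v - h)) (by omega)
      simp only [eval_sub, taylor_eval, coeff_taylor_sub_self hφ] at this
      convert this using 2
      rw [Nat.factorial_succ (j + 1)]
      push_cast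
      ring
    calc (‖∑ m ∈ Ico u v, e (φ.eval (m : ℝ))‖ / (2 * N)) ^ 2 ^ (j + 1)
        = (‖∑ m ∈ Ico u v, e (φ.eval (m : ℝ))‖ ^ 2 / (2 * N) / (2 * N)) ^ 2 ^ j := by
          rw [pow_succ' 2 j, pow_mul, div_pow, sq (2 * N : ℝ), div_div]
      _ ≤ ((∑ h ∈ Ioo (-(N : ℤ)) N, S h) / (2 * N)) ^ 2 ^ j := by
          rw [hS, ← sum_div]
          gcongr
          exact sq_norm_sum_e_le (fun x => φ.eval x) huv
      _ ≤ (∑ h ∈ Ioo (-(N : ℤ)) N, S h ^ 2 ^ j) / (2 * N) :=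
          sum_div_pow_le_sum_pow_div (fun h _ => by positivity) hN2 (card_Ioo_neg_le N)
            (by positivity)
      _ ≤ weylMean N (j + 1) ((j + 2).factorial * φ.coeff (j + 2)) := by
          rw [weylMean_succ]
          gcongr with h
          exact differenced h

end

section

open Finset Polynomial

/-! ### Bounds for `boxProductSum` through divisor sums -/

lemma sum_Ioo_neg_le_two_mul_sum_Icc {f : ℤ → ℝ} (hf : ∀ m, 0 ≤ f m) (hf_even : f.Even)
    (hf_zero : f 0 = 0) (N : ℕ) :
    ∑ h ∈ Ioo (-(N : ℤ)) N, f h ≤ 2 * ∑ h ∈ Icc 1 N, f h := by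
  refine (sum_le_sum_of_subset_of_nonneg Ioo_subset_Icc_self fun h _ _ => hf h).trans_eq ?_
  rw [sum_Icc_of_even_eq_range hf_even, hf_zero, sub_zero, nsmul_eq_mul, Nat.cast_ofNat,
    sum_range_succ', Nat.cast_zero, hf_zero, add_zero, range_eq_Ico,
    sum_Ico_add' (fun h : ℕ => f h)]
  rfl

lemma single_zero_mul_le (h m : ℤ) :
    (Pi.single 0 1 : ℤ → ℝ) (h * m) ≤ (Pi.single 0 1 : ℤ → ℝ) h + (Pi.single 0 1 : ℤ → ℝ) m := by
  by_cases hh : h = 0 <;> by_cases hm : m = 0 <;> simp [hh, hm]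

lemma boxProductSum_single_zero_le {N : ℕ} (hN : 0 < N) (j : ℕ) :
    (2 * N : ℝ) * boxProductSum N j (Pi.single 0 1) ≤ j * (2 * N : ℝ) ^ j := by
  have single_nonneg (h : ℤ) : 0 ≤ (Pi.single 0 1 : ℤ → ℝ) h :=
    Pi.single_nonneg (α := fun _ : ℤ => ℝ).mpr zero_le_one h
  induction j with
  | zero => simp [boxProductSum_zero]
  | succ j ih =>
    have inner_le (h : ℤ) : boxProductSum N j (fun m => (Pi.single 0 1 : ℤ → ℝ) (h * m)) ≤
        (Pi.single 0 1 : ℤ → ℝ) h * (2 * N : ℝ) ^ j + boxProductSum N j (Pi.single 0 1) := by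
      refine (boxProductSum_le_of_le_on fun m _ => single_zero_mul_le h m).trans ?_
      rw [boxProductSum_add, ← mul_one (Pi.single 0 1 h), boxProductSum_const_mul, mul_one]
      gcongr
      · exact single_nonneg h
      · exact boxProductSum_one_le N j
    have sum_single_le : ∑ h ∈ Ioo (-(N : ℤ)) N, (Pi.single 0 1 : ℤ → ℝ) h ≤ 1 := by
      rw [sum_pi_single']
      split_ifs <;> norm_num
    have box_nonneg : 0 ≤ boxProductSum N j (Pi.single 0 1) :=
      boxProductSum_nonneg single_nonneg
    calc (2 * N : ℝ) * boxProductSum N (j + 1) (Pi.single 0 1)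
        ≤ 2 * N * (1 * (2 * N : ℝ) ^ j + 2 * N * boxProductSum N j (Pi.single 0 1)) := by
          rw [boxProductSum_succ]
          refine mul_le_mul_of_nonneg_left ((sum_le_sum fun h _ => inner_le h).trans ?_)
            (by positivity)
          rw [sum_add_distrib, ← sum_mul, sum_const, nsmul_eq_mul]
          gcongr
          exact card_Ioo_neg_le N
      _ ≤ 2 * N * (1 * (2 * N : ℝ) ^ j + j * (2 * N : ℝ) ^ j) := by gcongr
      _ = ((j + 1 : ℕ) : ℝ) * (2 * N : ℝ) ^ (j + 1) := by push_cast; ring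

lemma card_divisorsAntidiagonal (n : ℕ) : #n.divisorsAntidiagonal = #n.divisors := by
  simpa using Nat.sum_divisorsAntidiagonal (n := n) fun _ _ => (1 : ℕ)

lemma sum_sum_mul_le_card_divisors_mul_sum {F : ℕ → ℝ} (hF : ∀ m, 0 ≤ F m) {A B K : ℕ}
    (hK : ∀ m ∈ Icc 1 (A * B), #m.divisors ≤ K) :
    ∑ h ∈ Icc 1 A, ∑ m ∈ Icc 1 B, F (h * m) ≤ K * ∑ m ∈ Icc 1 (A * B), F m := by
  have mul_mem : ∀ x ∈ Icc 1 A ×ˢ Icc 1 B, x.1 * x.2 ∈ Icc 1 (A * B) := by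
    rintro ⟨a, b⟩ hx
    simp only [mem_product, mem_Icc] at hx ⊢
    exact ⟨Nat.mul_pos hx.1.1 hx.2.1, Nat.mul_le_mul hx.1.2 hx.2.2⟩
  rw [← sum_product' (Icc 1 A) (Icc 1 B) fun h m => F (h * m), ← sum_fiberwise_of_maps_to mul_mem,
    mul_sum]
  refine sum_le_sum fun m hm => ?_
  have fiber_subset : {x ∈ Icc 1 A ×ˢ Icc 1 B | x.1 * x.2 = m} ⊆ m.divisorsAntidiagonal := by
    intro x hx
    rw [Nat.mem_divisorsAntidiagonal]
    exact ⟨(mem_filter.mp hx).2, Nat.one_le_iff_ne_zero.mp (mem_Icc.mp hm).1⟩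
  rw [sum_congr rfl fun x hx => congrArg F (mem_filter.mp hx).2, sum_const, nsmul_eq_mul]
  gcongr
  · exact hF m
  · exact (card_le_card fiber_subset).trans
      ((card_divisorsAntidiagonal m).trans_le (hK m hm))

lemma boxProductSum_le_of_map_zero {N : ℕ} (hN : 0 < N) {j K : ℕ}
    (hK : ∀ m ∈ Icc 1 (N ^ j), #m.divisors ≤ K) {G : ℤ → ℝ} (hG : ∀ m, 0 ≤ G m)
    (hG_even : G.Even) (hG_zero : G 0 = 0) :
    boxProductSum N j G ≤ (2 * K : ℝ) ^ j * ∑ m ∈ Icc 1 (N ^ j), G m := by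
  induction j generalizing G with
  | zero => simp [boxProductSum_zero]
  | succ j ih =>
    have hK' : ∀ m ∈ Icc 1 (N ^ j), #m.divisors ≤ K := fun m hm =>
      hK m (Icc_subset_Icc_right (Nat.pow_le_pow_right hN j.le_succ) hm)
    have ih_slice (h : ℤ) := ih hK' (G := fun m => G (h * m)) (fun _ => hG _)
      (fun m => by simp only [mul_neg, hG_even (h * m)]) (by rw [mul_zero, hG_zero])
    have double_sum := sum_sum_mul_le_card_divisors_mul_sum (F := fun m => G m) (fun _ => hG _)
      (A := N) (B := N ^ j) (by rwa [← pow_succ'])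
    rw [← pow_succ'] at double_sum
    calc boxProductSum N (j + 1) G
        ≤ ∑ h ∈ Ioo (-(N : ℤ)) N, (2 * K : ℝ) ^ j * ∑ m ∈ Icc 1 (N ^ j), G (h * m) := by
          rw [boxProductSum_succ]
          exact sum_le_sum fun h _ => ih_slice h
      _ ≤ 2 * ∑ h ∈ Icc 1 N, (2 * K : ℝ) ^ j * ∑ m ∈ Icc 1 (N ^ j), G (h * m) :=
          sum_Ioo_neg_le_two_mul_sum_Icc
            (fun h => mul_nonneg (by positivity) (sum_nonneg fun _ _ => hG _))
            (fun h => by simp only [neg_mul, hG_even _]) (by simp [hG_zero]) N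
      _ ≤ 2 * ((2 * K : ℝ) ^ j * (K * ∑ m ∈ Icc 1 (N ^ (j + 1)), G m)) := by
          rw [← mul_sum]
          gcongr
          exact_mod_cast double_sum
      _ = (2 * K : ℝ) ^ (j + 1) * ∑ m ∈ Icc 1 (N ^ (j + 1)), G m := by ring

lemma boxProductSum_le {N : ℕ} (hN : 0 < N) {j K : ℕ}
    (hK : ∀ m ∈ Icc 1 (N ^ j), #m.divisors ≤ K) {F : ℤ → ℝ} (hF : ∀ m, 0 ≤ F m)
    (hF_even : F.Even) :
    boxProductSum N j F ≤
      F 0 * boxProductSum N j (Pi.single 0 1) + (2 * K : ℝ) ^ j * ∑ m ∈ Icc 1 (N ^ j), F m := by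
  have split (m : ℤ) : F m = F 0 * (Pi.single 0 1 : ℤ → ℝ) m + Function.update F 0 0 m := by
    by_cases hm : m = 0 <;> simp [hm]
  have update_bound := boxProductSum_le_of_map_zero hN hK (G := Function.update F 0 0)
    (fun m => by by_cases hm : m = 0 <;> simp [hm, hF])
    (fun m => by by_cases hm : m = 0 <;> simp [hm, hF_even m]) (by simp)
  rw [funext split, boxProductSum_add, boxProductSum_const_mul, ← funext split]
  refine add_le_add_right (update_bound.trans_eq ?_) _
  congr 1
  refine sum_congr rfl fun m hm => Function.update_of_ne ?_ _ _
  exact_mod_cast Nat.one_le_iff_ne_zero.mp (mem_Icc.mp hm).1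

/-- `|m| ^ (-s)` on the nonzero multiples `m` of `u`, and zero elsewhere. -/
noncomputable def multiplesRpow (s : ℝ) (u : ℕ) (m : ℤ) : ℝ :=
  if m ≠ 0 ∧ (u : ℤ) ∣ m then (m.natAbs : ℝ) ^ (-s) else 0

lemma multiplesRpow_nonneg (s : ℝ) (u : ℕ) (m : ℤ) : 0 ≤ multiplesRpow s u m := by
  unfold multiplesRpow
  split_ifs <;> positivity

lemma multiplesRpow_even (s : ℝ) (u : ℕ) : (multiplesRpow s u).Even := fun m => by
  simp [multiplesRpow]

lemma multiplesRpow_mul_le (s : ℝ) {u : ℕ} (hu : u ≠ 0) (h m : ℤ) :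
    multiplesRpow s u (h * m) ≤
      ∑ d ∈ u.divisorsAntidiagonal, multiplesRpow s d.1 h * multiplesRpow s d.2 m := by
  have terms_nonneg : ∀ d ∈ u.divisorsAntidiagonal,
      0 ≤ multiplesRpow s d.1 h * multiplesRpow s d.2 m :=
    fun d _ => mul_nonneg (multiplesRpow_nonneg _ _ _) (multiplesRpow_nonneg _ _ _)
  by_cases hc : h * m ≠ 0 ∧ (u : ℤ) ∣ h * m
  · obtain ⟨hh, hm⟩ := mul_ne_zero_iff.mp hc.1
    obtain ⟨d₁, d₂, hd₁, hd₂, hd⟩ : ∃ d₁ d₂, d₁ ∣ h.natAbs ∧ d₂ ∣ m.natAbs ∧ u = d₁ * d₂ :=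
      exists_dvd_and_dvd_of_dvd_mul (by rw [← Int.natAbs_mul]; exact Int.natCast_dvd.mp hc.2)
    have hd_mem : (d₁, d₂) ∈ u.divisorsAntidiagonal :=
      Nat.mem_divisorsAntidiagonal.mpr ⟨hd.symm, hu⟩
    refine le_trans (le_of_eq ?_) (single_le_sum terms_nonneg hd_mem)
    simp only [multiplesRpow]
    rw [if_pos hc, if_pos ⟨hh, Int.natCast_dvd.mpr hd₁⟩, if_pos ⟨hm, Int.natCast_dvd.mpr hd₂⟩,
      Int.natAbs_mul, Nat.cast_mul, Real.mul_rpow (by positivity) (by positivity)]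
  · rw [multiplesRpow, if_neg hc]
    exact sum_nonneg terms_nonneg

lemma mul_sum_rpow_sub_one_le {t : ℝ} (ht : 0 < t) (ht1 : t ≤ 1) (n : ℕ) :
    t * ∑ i ∈ Icc 1 n, (i : ℝ) ^ (t - 1) ≤ (n : ℝ) ^ t := by
  induction n with
  | zero => simp [ht.ne']
  | succ n ih =>
    have hpos : (0 : ℝ) < (n + 1 : ℕ) := by positivity
    have neg_one_le : -1 ≤ -1 / ((n + 1 : ℕ) : ℝ) := by
      rw [le_div_iff₀ hpos]
      push_cast
      linarith [n.cast_nonneg (α := ℝ)]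
    have bernoulli := rpow_one_add_le_one_add_mul_self neg_one_le ht.le ht1
    have rpow_le : (n : ℝ) ^ t ≤
        ((n + 1 : ℕ) : ℝ) ^ t - t * ((n + 1 : ℕ) : ℝ) ^ (t - 1) := by
      calc (n : ℝ) ^ t = (((n + 1 : ℕ) : ℝ) * (1 + -1 / ((n + 1 : ℕ) : ℝ))) ^ t := by
            congr 1; field_simp; push_cast; ring
        _ ≤ ((n + 1 : ℕ) : ℝ) ^ t * (1 + t * (-1 / ((n + 1 : ℕ) : ℝ))) := by
            rw [Real.mul_rpow hpos.le (by linarith)]; gcongr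
        _ = _ := by rw [Real.rpow_sub_one hpos.ne']; field_simp; ring
    rw [sum_Icc_succ_top (by omega), mul_add]
    linarith

lemma sum_Icc_multiplesRpow {s : ℝ} {d : ℕ} (hd : 0 < d) (N : ℕ) :
    ∑ h ∈ Icc 1 N, multiplesRpow s d h = (d : ℝ) ^ (-s) * ∑ i ∈ Icc 1 (N / d), (i : ℝ) ^ (-s) := by
  have multiples_eq : {h ∈ Icc 1 N | d ∣ h} = (Icc 1 (N / d)).image (d * ·) := by
    ext h
    simp only [mem_filter, mem_Icc, mem_image]
    constructor
    · rintro ⟨⟨h_pos, hhN⟩, i, rfl⟩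
      exact ⟨i, ⟨pos_of_mul_pos_right h_pos d.zero_le,
        by rwa [Nat.le_div_iff_mul_le hd, mul_comm]⟩, rfl⟩
    · rintro ⟨i, ⟨hi, hiN⟩, rfl⟩
      exact ⟨⟨Nat.mul_pos hd hi, by rwa [Nat.le_div_iff_mul_le hd, mul_comm] at hiN⟩,
        dvd_mul_right d i⟩
  calc ∑ h ∈ Icc 1 N, multiplesRpow s d h
      = ∑ h ∈ {h ∈ Icc 1 N | d ∣ h}, (h : ℝ) ^ (-s) := by
        rw [sum_filter]
        refine sum_congr rfl fun h hh => ?_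
        have h_ne : h ≠ 0 := by have := (mem_Icc.mp hh).1; omega
        simp [multiplesRpow, Int.natCast_dvd_natCast, h_ne]
    _ = ∑ i ∈ Icc 1 (N / d), ((d * i : ℕ) : ℝ) ^ (-s) := by
        rw [multiples_eq, sum_image fun a _ b _ hab => Nat.eq_of_mul_eq_mul_left hd hab]
    _ = _ := by
        rw [mul_sum]
        exact sum_congr rfl fun i _ => by
          rw [Nat.cast_mul, Real.mul_rpow (by positivity) (by positivity)]

lemma sum_Icc_multiplesRpow_le {s : ℝ} (hs : 0 ≤ s) (hs1 : s < 1) {d : ℕ} (hd : 0 < d) (N : ℕ) :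
    ∑ h ∈ Icc 1 N, multiplesRpow s d h ≤ (N : ℝ) ^ (1 - s) / ((1 - s) * d) := by
  have ht : 0 < 1 - s := by linarith
  have hd' : (0 : ℝ) < d := by exact_mod_cast hd
  have sum_le : ∑ i ∈ Icc 1 (N / d), (i : ℝ) ^ (-s) ≤ ((N : ℝ) / d) ^ (1 - s) / (1 - s) := by
    have := mul_sum_rpow_sub_one_le ht (by linarith) (N / d)
    rw [show 1 - s - 1 = -s by ring] at this
    rw [le_div_iff₀' ht]
    exact this.trans (Real.rpow_le_rpow (by positivity) Nat.cast_div_le ht.le)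
  calc ∑ h ∈ Icc 1 N, multiplesRpow s d h
      ≤ (d : ℝ) ^ (-s) * (((N : ℝ) / d) ^ (1 - s) / (1 - s)) := by
        rw [sum_Icc_multiplesRpow hd]
        gcongr
    _ = (N : ℝ) ^ (1 - s) / ((1 - s) * d) := by
        rw [Real.div_rpow (by positivity) hd'.le, Real.rpow_sub hd', Real.rpow_one,
          Real.rpow_neg hd'.le]
        field_simp

lemma sum_Ioo_neg_multiplesRpow_le {s : ℝ} (hs : 0 ≤ s) (hs1 : s < 1) {d : ℕ} (hd : 0 < d)
    (N : ℕ) :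
    ∑ h ∈ Ioo (-(N : ℤ)) N, multiplesRpow s d h ≤ 2 * ((N : ℝ) ^ (1 - s) / ((1 - s) * d)) :=
  (sum_Ioo_neg_le_two_mul_sum_Icc (multiplesRpow_nonneg s d) (multiplesRpow_even s d)
    (by simp [multiplesRpow]) N).trans (by gcongr; exact sum_Icc_multiplesRpow_le hs hs1 hd N)

lemma boxProductSum_succ_multiplesRpow_le (s : ℝ) (N j : ℕ) {u : ℕ} (hu : u ≠ 0) :
    boxProductSum N (j + 1) (multiplesRpow s u) ≤ ∑ d ∈ u.divisorsAntidiagonal,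
      (∑ h ∈ Ioo (-(N : ℤ)) N, multiplesRpow s d.1 h) *
        boxProductSum N j (multiplesRpow s d.2) := by
  simp only [sum_mul]
  rw [boxProductSum_succ, sum_comm]
  refine sum_le_sum fun h _ =>
    (boxProductSum_le_of_le_on fun m _ => multiplesRpow_mul_le s hu h m).trans_eq ?_
  simp only [boxProductSum_sum, boxProductSum_const_mul]

lemma boxProductSum_multiplesRpow_le {s : ℝ} (hs : 0 ≤ s) (hs1 : s < 1) (N j : ℕ) {u : ℕ}
    (hu : u ≠ 0) :
    boxProductSum N j (multiplesRpow s u) ≤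
      (2 / (1 - s) * #u.divisors * (N : ℝ) ^ (1 - s)) ^ j / u := by
  have ht : 0 < 1 - s := by linarith
  induction j generalizing u with
  | zero =>
    rw [boxProductSum_zero, multiplesRpow]
    split_ifs with h
    · obtain rfl : u = 1 := by simpa [Int.natCast_dvd] using h.2
      simp
    · positivity
  | succ j ih =>
    have term_le : ∀ d ∈ u.divisorsAntidiagonal,
        (∑ h ∈ Ioo (-(N : ℤ)) N, multiplesRpow s d.1 h) * boxProductSum N j (multiplesRpow s d.2) ≤
          2 * ((N : ℝ) ^ (1 - s) / (1 - s)) *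
            (2 / (1 - s) * #u.divisors * (N : ℝ) ^ (1 - s)) ^ j / u := by
      rintro ⟨d₁, d₂⟩ hd
      obtain ⟨rfl, -⟩ := Nat.mem_divisorsAntidiagonal.mp hd
      obtain ⟨hd₁, hd₂⟩ := mul_ne_zero_iff.mp hu
      calc _ ≤ 2 * ((N : ℝ) ^ (1 - s) / ((1 - s) * d₁)) *
            ((2 / (1 - s) * #d₂.divisors * (N : ℝ) ^ (1 - s)) ^ j / d₂) :=
            mul_le_mul (sum_Ioo_neg_multiplesRpow_le hs hs1 (Nat.pos_of_ne_zero hd₁) N) (ih hd₂)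
              (boxProductSum_nonneg (multiplesRpow_nonneg _ _)) (by positivity)
        _ ≤ 2 * ((N : ℝ) ^ (1 - s) / ((1 - s) * d₁)) *
            ((2 / (1 - s) * #(d₁ * d₂).divisors * (N : ℝ) ^ (1 - s)) ^ j / d₂) := by
            gcongr
            exact dvd_mul_left d₂ d₁
        _ = _ := by push_cast; field_simp
    calc boxProductSum N (j + 1) (multiplesRpow s u)
        ≤ ∑ d ∈ u.divisorsAntidiagonal, 2 * ((N : ℝ) ^ (1 - s) / (1 - s)) *
            (2 / (1 - s) * #u.divisors * (N : ℝ) ^ (1 - s)) ^ j / u :=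
          (boxProductSum_succ_multiplesRpow_le s N j hu).trans (sum_le_sum term_le)
      _ = _ := by
          rw [sum_const, card_divisorsAntidiagonal, nsmul_eq_mul]
          ring

/-! ### The divisor bound -/

lemma natCast_add_one_le_mul_two_rpow_pow {ε : ℝ} (hε : 0 < ε) (a : ℕ) :
    (a : ℝ) + 1 ≤ (1 + 1 / (ε * Real.log 2)) * ((2 : ℝ) ^ ε) ^ a := by
  have : 0 < ε * Real.log 2 := mul_pos hε (Real.log_pos one_lt_two)
  have exp_bound : 1 + a * (ε * Real.log 2) ≤ ((2 : ℝ) ^ ε) ^ a := by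
    rw [← Real.rpow_mul_natCast zero_le_two, Real.rpow_def_of_pos two_pos]
    linarith [Real.add_one_le_exp (Real.log 2 * (ε * a))]
  calc (a : ℝ) + 1 ≤ a + 1 + (a * (ε * Real.log 2) + 1 / (ε * Real.log 2)) :=
        le_add_of_nonneg_right (by positivity)
    _ = (1 + 1 / (ε * Real.log 2)) * (1 + a * (ε * Real.log 2)) := by field_simp; ring
    _ ≤ _ := by gcongr

lemma natCast_add_one_le_rpow_pow {ε : ℝ} (hε : 0 < ε) {x : ℝ} (hx : 2 ^ (1 / ε) ≤ x) (a : ℕ) :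
    (a : ℝ) + 1 ≤ (x ^ ε) ^ a := by
  have two_le : (2 : ℝ) ≤ x ^ ε := by
    calc (2 : ℝ) = ((2 : ℝ) ^ (1 / ε)) ^ ε := by
          rw [← Real.rpow_mul zero_le_two, one_div_mul_cancel hε.ne', Real.rpow_one]
      _ ≤ x ^ ε := Real.rpow_le_rpow (by positivity) hx hε.le
  calc (a : ℝ) + 1 ≤ (2 : ℝ) ^ a := by exact_mod_cast (Nat.lt_two_pow_self : a < 2 ^ a)
    _ ≤ (x ^ ε) ^ a := pow_le_pow_left₀ zero_le_two two_le a

lemma prod_primeFactors_rpow_pow_factorization {n : ℕ} (hn : n ≠ 0) (ε : ℝ) :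
    ∏ p ∈ n.primeFactors, ((p : ℝ) ^ ε) ^ n.factorization p = (n : ℝ) ^ ε := by
  conv_rhs => rw [← Nat.prod_factorization_pow_eq_self hn]
  rw [Nat.prod_factorization_eq_prod_primeFactors, Nat.cast_prod,
    ← Real.finsetProd_rpow _ _ fun i _ => by positivity]
  refine prod_congr rfl fun p _ => ?_
  rw [Nat.cast_pow, Real.rpow_pow_comm p.cast_nonneg]

lemma exists_card_divisors_le_mul_rpow {ε : ℝ} (hε : 0 < ε) :
    ∃ C : ℝ, 1 ≤ C ∧ ∀ n : ℕ, n ≠ 0 → (#n.divisors : ℝ) ≤ C * (n : ℝ) ^ ε := by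
  have : 0 < ε * Real.log 2 := mul_pos hε (Real.log_pos one_lt_two)
  set c : ℝ := 1 + 1 / (ε * Real.log 2)
  have one_le_c : 1 ≤ c := le_add_of_nonneg_right (by positivity)
  obtain ⟨P, hP⟩ := exists_nat_ge ((2 : ℝ) ^ (1 / ε))
  refine ⟨c ^ P, one_le_pow₀ one_le_c, fun n hn => ?_⟩
  have factor_le : ∀ p ∈ n.primeFactors, ((n.factorization p : ℝ) + 1) ≤
      (if p < P then c else 1) * ((p : ℝ) ^ ε) ^ n.factorization p := by
    intro p hp
    have two_le_p : (2 : ℝ) ≤ p := by exact_mod_cast (Nat.prime_of_mem_primeFactors hp).two_le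
    split_ifs with hpP
    · refine (natCast_add_one_le_mul_two_rpow_pow hε _).trans ?_
      gcongr
    · rw [one_mul]
      exact natCast_add_one_le_rpow_pow hε (hP.trans (by exact_mod_cast not_lt.mp hpP)) _
  have prod_const_le : ∏ p ∈ n.primeFactors, (if p < P then c else 1) ≤ c ^ P := by
    rw [← prod_filter, prod_const]
    refine pow_le_pow_right₀ one_le_c ((card_le_card fun p hp => ?_).trans_eq (card_range P))
    exact mem_range.mpr (mem_filter.mp hp).2
  calc (#n.divisors : ℝ) = ∏ p ∈ n.primeFactors, ((n.factorization p : ℝ) + 1) := by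
        rw [Nat.card_divisors hn]
        push_cast
        rfl
    _ ≤ ∏ p ∈ n.primeFactors, ((if p < P then c else 1) * ((p : ℝ) ^ ε) ^ n.factorization p) :=
        prod_le_prod (fun _ _ => by positivity) factor_le
    _ ≤ c ^ P * (n : ℝ) ^ ε := by
        rw [prod_mul_distrib, prod_primeFactors_rpow_pow_factorization hn]
        gcongr

lemma exists_card_divisors_pow_le_mul_rpow {ε : ℝ} (hε : 0 < ε) (j : ℕ) :
    ∃ C : ℝ, 1 ≤ C ∧ ∀ n : ℕ, n ≠ 0 → (#n.divisors : ℝ) ^ j ≤ C * (n : ℝ) ^ ε := by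
  obtain ⟨C, hC, card_le⟩ := exists_card_divisors_le_mul_rpow (ε := ε / (j + 1)) (by positivity)
  refine ⟨C ^ j, one_le_pow₀ hC, fun n hn => ?_⟩
  have hn1 : (1 : ℝ) ≤ n := Nat.one_le_cast.mpr (Nat.pos_of_ne_zero hn)
  calc (#n.divisors : ℝ) ^ j ≤ (C * (n : ℝ) ^ (ε / (j + 1))) ^ j := by
        gcongr
        exact card_le n hn
    _ = C ^ j * (n : ℝ) ^ (ε / (j + 1) * j) := by
        rw [mul_pow, Real.rpow_mul_natCast n.cast_nonneg]
    _ ≤ C ^ j * (n : ℝ) ^ ε := by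
        gcongr
        rw [div_mul_eq_mul_div, div_le_iff₀ (by positivity)]
        linarith

end

section

open Finset Polynomial

/-! ### Sums of `geomKernel` along multiples of a well-approximated number -/

/-- A majorant of `geomKernel N x` for `x` within `2 / r` of the fraction `t / r` modulo `1`: the
trivial bound `2 * N` when `t / r` is itself that close to an integer, and otherwise a multiple of
the reciprocal distance. At `t = 0` the term `1 / t` is `0`. -/
noncomputable def nearFractionBound (N : ℝ) (r t : ℕ) : ℝ :=
  (if t ∈ ({0, 1, 2, r - 1, r - 2} : Finset ℕ) then 2 * N else 0) +
    6 * r * (1 / (t : ℝ) + 1 / ((r - t : ℕ) : ℝ))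

lemma norm_toAddCircle {r : ℕ} [NeZero r] (j : ZMod r) :
    ‖ZMod.toAddCircle j‖ = ((min j.val (r - j.val) : ℕ) : ℝ) / r := by
  have : Fact ((0 : ℝ) < 1) := ⟨one_pos⟩
  have := AddCircle.norm_div_natCast (p := 1) (m := j.val) (n := r)
  rwa [mul_one, one_mul, Nat.mod_eq_of_lt j.val_lt, ← ZMod.toAddCircle_apply] at this

lemma geomKernel_le_nearFractionBound {N : ℝ} (hN : 0 ≤ N) {r : ℕ} [NeZero r] {x : ℝ} {j : ZMod r}
    (hxj : ‖(x : UnitAddCircle) - ZMod.toAddCircle j‖ ≤ 2 / r) :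
    geomKernel N x ≤ nearFractionBound N r j.val := by
  have hr : 0 < (r : ℝ) := Nat.cast_pos.mpr (NeZero.pos r)
  rw [nearFractionBound]
  split_ifs with near
  · exact (geomKernel_le hN x).trans (le_add_of_nonneg_right (by positivity))
  · set d := min j.val (r - j.val) with hd
    have hd3 : (3 : ℝ) ≤ d := by
      have := j.val_lt
      simp only [mem_insert, mem_singleton, not_or] at near
      exact_mod_cast (show 3 ≤ d by omega)
    have far : d / (3 * r) ≤ ‖(x : UnitAddCircle)‖ := by
      have h := norm_sub_norm_le (ZMod.toAddCircle j) (x : UnitAddCircle)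
      rw [norm_sub_rev, norm_toAddCircle, ← hd] at h
      have : d / (3 * r) + 2 / r ≤ (d : ℝ) / r := by
        rw [div_add_div _ _ (by positivity) hr.ne', div_le_div_iff₀ (by positivity) hr]
        nlinarith [mul_le_mul_of_nonneg_right hd3 (mul_pos hr hr).le]
      linarith
    have inv_le : 1 / (d : ℝ) ≤ 1 / (j.val : ℝ) + 1 / ((r - j.val : ℕ) : ℝ) := by
      rcases min_choice j.val (r - j.val) with h | h <;> rw [hd, h]
      · exact le_add_of_nonneg_right (by positivity)
      · exact le_add_of_nonneg_left (by positivity)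
    calc geomKernel N x ≤ 2 / (d / (3 * r)) := geomKernel_le_two_div hN (by positivity) far
      _ = 6 * r * (1 / (d : ℝ)) := by field_simp; ring
      _ ≤ 0 + 6 * r * (1 / (j.val : ℝ) + 1 / ((r - j.val : ℕ) : ℝ)) := by rw [zero_add]; gcongr

lemma sum_range_one_div_add_one_div_sub_le (r : ℕ) :
    ∑ t ∈ range r, (1 / (t : ℝ) + 1 / ((r - t : ℕ) : ℝ)) ≤ 2 * (1 + Real.log r) := by
  have harmonic_bound : ∑ t ∈ range r, 1 / ((t + 1 : ℕ) : ℝ) ≤ 1 + Real.log r := by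
    simpa [harmonic] using harmonic_le_one_add_log r
  have ascending : ∑ t ∈ range r, 1 / (t : ℝ) ≤ ∑ t ∈ range r, 1 / ((t + 1 : ℕ) : ℝ) := by
    cases r with
    | zero => simp
    | succ n =>
      rw [sum_range_succ', sum_range_succ, Nat.cast_zero, div_zero]
      gcongr
      positivity
  have descending :
      ∑ t ∈ range r, 1 / ((r - t : ℕ) : ℝ) = ∑ t ∈ range r, 1 / ((t + 1 : ℕ) : ℝ) := by
    rw [← sum_range_reflect]
    refine sum_congr rfl fun t ht => ?_
    rw [show r - (r - 1 - t) = t + 1 by have := mem_range.mp ht; omega]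
  rw [sum_add_distrib]
  linarith

lemma sum_nearFractionBound_le {N : ℝ} (hN : 0 ≤ N) (r : ℕ) :
    ∑ t ∈ range r, nearFractionBound N r t ≤ 10 * N + 12 * r * (1 + Real.log r) := by
  have near : (#{t ∈ range r | t ∈ ({0, 1, 2, r - 1, r - 2} : Finset ℕ)} : ℝ) ≤ 5 := by
    exact_mod_cast (card_le_card fun t ht => (mem_filter.mp ht).2).trans card_le_five
  simp only [nearFractionBound, sum_add_distrib, ← mul_sum, ← sum_filter, sum_const, nsmul_eq_mul]
  have far := sum_range_one_div_add_one_div_sub_le r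
  rw [sum_add_distrib] at far
  calc _ ≤ 2 * (5 * N) + 6 * r * (2 * (1 + Real.log r)) := by gcongr
    _ = _ := by ring

lemma sum_range_natCast_zmod {M : Type*} [AddCommMonoid M] (r : ℕ) [NeZero r] (f : ZMod r → M) :
    ∑ i ∈ range r, f i = ∑ x, f x :=
  sum_nbij' Nat.cast ZMod.val (by simp) (by simp [ZMod.val_lt])
    (fun i hi => ZMod.val_cast_of_lt (mem_range.mp hi)) (by simp) (by simp)

lemma sum_range_val {M : Type*} [AddCommMonoid M] (r : ℕ) [NeZero r] (f : ℕ → M) :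
    ∑ x : ZMod r, f x.val = ∑ i ∈ range r, f i := by
  rw [← sum_range_natCast_zmod r]
  exact sum_congr rfl fun i hi => by rw [ZMod.val_cast_of_lt (mem_range.mp hi)]

lemma sum_range_affine_val {M : Type*} [AddCommMonoid M] {r : ℕ} [NeZero r] {b : ℤ}
    (hb : IsCoprime b r) (c : ℤ) (f : ℕ → M) :
    ∑ i ∈ range r, f ((c + i * b : ℤ) : ZMod r).val = ∑ i ∈ range r, f i := by
  have unit : IsUnit (b : ZMod r) := by
    obtain ⟨u, v, huv⟩ := hb
    refine IsUnit.of_mul_eq_one_right (u : ZMod r) ?_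
    simpa using congrArg (Int.cast : ℤ → ZMod r) huv
  have affine := ((unit.unit.mulRight).trans (Equiv.addLeft (c : ZMod r))).sum_comp fun x => f x.val
  simp only [Equiv.trans_apply, Units.mulRight_apply, IsUnit.unit_spec, Equiv.coe_addLeft] at affine
  rw [← sum_range_val r f, ← affine, ← sum_range_natCast_zmod r]
  simp

section Approximation

variable {r : ℕ} [NeZero r] {b : ℤ} {β : ℝ}

lemma norm_add_mul_sub_toAddCircle_le (hβ : |β - b / r| ≤ 1 / (r : ℝ) ^ 2) (y : ℝ) {i : ℕ}
    (hi : i ≤ r) :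
    ‖((y + i * β : ℝ) : UnitAddCircle) - ZMod.toAddCircle ((⌊r * y⌋ + i * b : ℤ) : ZMod r)‖
      ≤ 2 / r := by
  have hr : 0 < (r : ℝ) := Nat.cast_pos.mpr (NeZero.pos r)
  rw [ZMod.toAddCircle_intCast, ← AddCircle.coe_sub]
  refine (QuotientAddGroup.norm_mk_le_norm).trans ?_
  have split : y + i * β - ((⌊r * y⌋ + i * b : ℤ) : ℝ) / r =
      Int.fract (r * y) / r + i * (β - b / r) := by
    rw [Int.fract]; push_cast; field_simp; ring
  have frac : |Int.fract (r * y) / r| ≤ 1 / r := by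
    rw [abs_div, abs_of_pos hr, Int.abs_fract]
    gcongr
    exact (Int.fract_lt_one _).le
  have drift : |(i : ℝ) * (β - b / r)| ≤ 1 / r := by
    rw [abs_mul, Nat.abs_cast]
    calc (i : ℝ) * |β - b / r| ≤ r * (1 / (r : ℝ) ^ 2) := by gcongr
      _ = 1 / r := by field_simp
  rw [split, Real.norm_eq_abs]
  calc _ ≤ _ := abs_add_le _ _
    _ ≤ 1 / (r : ℝ) + 1 / r := add_le_add frac drift
    _ = 2 / r := by ring

lemma sum_range_geomKernel_le {N : ℝ} (hN : 0 ≤ N) (hb : IsCoprime b r)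
    (hβ : |β - b / r| ≤ 1 / (r : ℝ) ^ 2) (y : ℝ) :
    ∑ i ∈ range r, geomKernel N (y + i * β) ≤ 10 * N + 12 * r * (1 + Real.log r) :=
  calc ∑ i ∈ range r, geomKernel N (y + i * β)
      ≤ ∑ i ∈ range r, nearFractionBound N r ((⌊r * y⌋ + i * b : ℤ) : ZMod r).val :=
        sum_le_sum fun _ hi => geomKernel_le_nearFractionBound hN
          (norm_add_mul_sub_toAddCircle_le hβ y (mem_range.mp hi).le)
    _ = ∑ t ∈ range r, nearFractionBound N r t := sum_range_affine_val hb _ _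
    _ ≤ _ := sum_nearFractionBound_le hN r

lemma sum_Icc_geomKernel_le {N : ℝ} (hN : 0 ≤ N) (hb : IsCoprime b r)
    (hβ : |β - b / r| ≤ 1 / (r : ℝ) ^ 2) (M : ℕ) :
    ∑ m ∈ Icc 1 M, geomKernel N (m * β) ≤
      ((M : ℝ) / r + 1) * (10 * N + 12 * r * (1 + Real.log r)) := by
  set B := 10 * N + 12 * r * (1 + Real.log r)
  have : 0 ≤ B := by positivity
  have blocks : ∀ n : ℕ, ∑ i ∈ range (r * n), geomKernel N ((i + 1 : ℕ) * β) ≤ n * B := by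
    intro n
    induction n with
    | zero => simp
    | succ n ih =>
      have next := sum_range_geomKernel_le hN hb hβ ((r * n + 1 : ℕ) * β)
      rw [Nat.mul_succ, sum_range_add, Nat.cast_succ, add_one_mul]
      refine add_le_add ih (next.trans_eq' <| sum_congr rfl fun i _ => ?_)
      push_cast
      ring_nf
  have covered : M ≤ r * (M / r + 1) := (Nat.lt_mul_div_succ M (NeZero.pos r)).le
  calc ∑ m ∈ Icc 1 M, geomKernel N (m * β) = ∑ i ∈ range M, geomKernel N ((i + 1 : ℕ) * β) := by
        rw [range_eq_Ico, sum_Ico_add' (fun i : ℕ => geomKernel N (i * β)) 0 M 1]; rfl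
    _ ≤ ∑ i ∈ range (r * (M / r + 1)), geomKernel N ((i + 1 : ℕ) * β) :=
        sum_le_sum_of_subset_of_nonneg (range_mono covered) fun i _ _ => geomKernel_nonneg hN _
    _ ≤ ((M / r + 1 : ℕ) : ℝ) * B := blocks _
    _ ≤ ((M : ℝ) / r + 1) * B := by push_cast; gcongr; exact Nat.cast_div_le

lemma boxProductSum_geomKernel_le {N : ℕ} (hN : 0 < N) {j K : ℕ}
    (hK : ∀ m ∈ Icc 1 (N ^ j), #m.divisors ≤ K) (hb : IsCoprime b r)
    (hβ : |β - b / r| ≤ 1 / (r : ℝ) ^ 2) {c : ℕ} (hc : 0 < c) :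
    boxProductSum N j (fun m => geomKernel N (m * (c * β))) ≤ j * (2 * N) ^ j +
      (2 * K) ^ j * ((c * (N : ℝ) ^ j / r + 1) * (10 * N + 12 * r * (1 + Real.log r))) := by
  have kernel_nonneg : ∀ x, 0 ≤ geomKernel N x := geomKernel_nonneg N.cast_nonneg
  refine (boxProductSum_le hN hK (fun m => kernel_nonneg _) fun m => ?_).trans (add_le_add ?_ ?_)
  · rw [Int.cast_neg, neg_mul, geomKernel_neg]
  · refine le_trans ?_ (boxProductSum_single_zero_le hN j)
    gcongr
    · exact boxProductSum_nonneg
        (Pi.single_nonneg (α := fun _ : ℤ => ℝ).mpr zero_le_one)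
    · exact geomKernel_le N.cast_nonneg _
  · gcongr
    calc ∑ m ∈ Icc 1 (N ^ j), geomKernel N ((m : ℤ) * (c * β))
        = ∑ m ∈ (Icc 1 (N ^ j)).map ⟨(c * ·), mul_right_injective₀ hc.ne'⟩,
            geomKernel N (m * β) := by
          rw [sum_map]
          exact sum_congr rfl fun m _ => by simp [mul_left_comm, mul_assoc]
      _ ≤ ∑ m ∈ Icc 1 (c * N ^ j), geomKernel N (m * β) := by
          refine sum_le_sum_of_subset_of_nonneg (fun x hx => ?_) fun m _ _ => kernel_nonneg _
          obtain ⟨m, hm, rfl⟩ := mem_map.mp hx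
          rw [mem_Icc] at hm
          exact mem_Icc.mpr ⟨Nat.mul_pos hc hm.1, Nat.mul_le_mul_left c hm.2⟩
      _ ≤ _ := by exact_mod_cast sum_Icc_geomKernel_le N.cast_nonneg hb hβ (c * N ^ j)

lemma geomKernel_le_rpow {N s x y : ℝ} (hN : 0 < N) (hs : 0 ≤ s) (hs1 : s ≤ 1)
    (hy : s = 0 ∨ 0 < y) (hxy : y ≤ ‖(x : UnitAddCircle)‖) :
    geomKernel N x ≤ 2 * N * (N * y) ^ (-s) := by
  obtain rfl | hy := hy
  · simpa using geomKernel_le hN.le x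
  · have hNy : 0 < N * y := by positivity
    rw [geomKernel, Real.rpow_neg hNy.le, ← div_eq_mul_inv]
    gcongr
    calc (N * y) ^ s ≤ max 1 (N * y) := by
          rcases le_total (N * y) 1 with h | h
          · exact (Real.rpow_le_one hNy.le h hs).trans (le_max_left _ _)
          · exact (Real.rpow_le_self_of_one_le h hs1).trans (le_max_right _ _)
      _ ≤ 1 + N * ‖(x : UnitAddCircle)‖ := max_le (le_add_of_nonneg_right (by positivity))
          ((mul_le_mul_of_nonneg_left hxy hN.le).trans (le_add_of_nonneg_left zero_le_one))

lemma norm_coe_div_add_of_dvd {z : ℤ} (hz : (r : ℤ) ∣ z) {δ : ℝ} (hδ : |δ| ≤ 1 / 2) :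
    ‖((z / r + δ : ℝ) : UnitAddCircle)‖ = |δ| := by
  rw [AddCircle.coe_add, ← ZMod.toAddCircle_intCast, (ZMod.intCast_zmod_eq_zero_iff_dvd z r).mpr hz,
    map_zero, zero_add, AddCircle.norm_coe_eq_abs_iff _ one_ne_zero, abs_one]
  exact hδ

lemma le_norm_coe_div_add_of_not_dvd {z : ℤ} (hz : ¬ (r : ℤ) ∣ z) {δ : ℝ}
    (hδ : |δ| ≤ 1 / (2 * r)) : 1 / (2 * r) ≤ ‖((z / r + δ : ℝ) : UnitAddCircle)‖ := by
  have hr : 0 < (r : ℝ) := Nat.cast_pos.mpr (NeZero.pos r)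
  have residue_ne_zero : (z : ZMod r) ≠ 0 := (ZMod.intCast_zmod_eq_zero_iff_dvd z r).not.mpr hz
  have residue_norm : 1 / (r : ℝ) ≤ ‖ZMod.toAddCircle (z : ZMod r)‖ := by
    rw [norm_toAddCircle]
    gcongr
    have := (z : ZMod r).val_lt
    have := ZMod.val_pos.mpr residue_ne_zero
    exact_mod_cast (show 1 ≤ min (z : ZMod r).val (r - (z : ZMod r).val) by omega)
  have triangle := norm_sub_le_norm_add (ZMod.toAddCircle (z : ZMod r)) (δ : UnitAddCircle)
  have : ‖(δ : UnitAddCircle)‖ ≤ |δ| := QuotientAddGroup.norm_mk_le_norm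
  rw [AddCircle.coe_add, ← ZMod.toAddCircle_intCast]
  have : 1 / (r : ℝ) = 1 / (2 * r) + 1 / (2 * r) := by field_simp; norm_num
  linarith

lemma dvd_mul_mul_iff_div_gcd_dvd (hb : IsCoprime b r) (c : ℕ) (m : ℤ) :
    (r : ℤ) ∣ m * c * b ↔ ((r / r.gcd c : ℕ) : ℤ) ∣ m := by
  rw [show (r : ℤ) ∣ m * c * b ↔ (r : ℤ) ∣ m * c from
    ⟨hb.symm.dvd_of_dvd_mul_right, (Dvd.dvd.mul_right · b)⟩, Int.natCast_dvd, Int.natCast_dvd,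
    Int.natAbs_mul, Int.natAbs_natCast, Nat.div_dvd_iff_dvd_mul (r.gcd_dvd_left c)
      (Nat.gcd_pos_of_pos_left c (NeZero.pos r)), Nat.dvd_gcd_mul_iff_dvd_mul, mul_comm]

lemma geomKernel_mul_le_add_multiplesRpow {N : ℝ} (hN : 0 < N) (hb : IsCoprime b r) {c : ℕ} {s : ℝ}
    (hs : 0 ≤ s) (hs1 : s ≤ 1) {m : ℤ} (hm : m ≠ 0) (hsm : s = 0 ∨ 0 < |m * c * (β - b / r)|)
    (hδ : |m * c * (β - b / r)| ≤ 1 / (2 * r)) :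
    geomKernel N (m * (c * β)) ≤ 4 * r +
      2 * N * (N * c * |β - b / r|) ^ (-s) * multiplesRpow s (r / r.gcd c) m := by
  have hr : 1 ≤ (r : ℝ) := Nat.one_le_cast.mpr (NeZero.pos r)
  have split : (m * (c * β) : ℝ) = ((m * c * b : ℤ) : ℝ) / r + m * c * (β - b / r) := by
    push_cast; ring
  by_cases dvd : ((r / r.gcd c : ℕ) : ℤ) ∣ m
  · have distance : |m * c * (β - b / r)| ≤ ‖((m * (c * β) : ℝ) : UnitAddCircle)‖ := by
      rw [split, norm_coe_div_add_of_dvd ((dvd_mul_mul_iff_div_gcd_dvd hb c m).mpr dvd)]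
      refine hδ.trans (one_div_le_one_div_of_le two_pos ?_)
      linarith
    refine (geomKernel_le_rpow hN hs hs1 hsm distance).trans ?_
    rw [multiplesRpow, if_pos ⟨hm, dvd⟩, mul_assoc (2 * N), Nat.cast_natAbs, Int.cast_abs,
      ← Real.mul_rpow (by positivity) (abs_nonneg _)]
    refine (le_of_eq ?_).trans (le_add_of_nonneg_left (by positivity))
    rw [abs_mul, abs_mul, Nat.abs_cast]
    ring_nf
  · have distance : 1 / (2 * r) ≤ ‖((m * (c * β) : ℝ) : UnitAddCircle)‖ := by
      rw [split]
      exact le_norm_coe_div_add_of_not_dvd ((dvd_mul_mul_iff_div_gcd_dvd hb c m).not.mpr dvd) hδ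
    refine (geomKernel_le_two_div hN.le (by positivity) distance).trans ?_
    rw [show 2 / (1 / (2 * (r : ℝ))) = 4 * r by field_simp; norm_num]
    have := multiplesRpow_nonneg s (r / r.gcd c) m
    exact le_add_of_nonneg_right (by positivity)

lemma boxProductSum_geomKernel_le_of_close {N : ℕ} (hN : 0 < N) (j : ℕ) (hb : IsCoprime b r)
    {c : ℕ} (hc : 0 < c) {s : ℝ} (hs : 0 ≤ s) (hs1 : s < 1) (hsβ : s = 0 ∨ 0 < |β - b / r|)
    (hβ : 2 * (N : ℝ) ^ j * c * |β - b / r| ≤ 1 / r) :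
    boxProductSum N j (fun m => geomKernel N (m * (c * β))) ≤
      j * (2 * N) ^ j + 4 * r * (2 * N) ^ j + 2 * N * (N * c * |β - b / r|) ^ (-s) *
        ((2 / (1 - s) * #(r / r.gcd c).divisors * (N : ℝ) ^ (1 - s)) ^ j / (r / r.gcd c : ℕ)) := by
  have hN' : 0 < (N : ℝ) := Nat.cast_pos.mpr hN
  have hu : r / r.gcd c ≠ 0 :=
    (Nat.div_pos (Nat.le_of_dvd (NeZero.pos r) (r.gcd_dvd_left c))
      (Nat.gcd_pos_of_pos_left c (NeZero.pos r))).ne'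
  set D := 2 * (N : ℝ) * (N * c * |β - b / r|) ^ (-s)
  have pointwise (m : ℤ) (hm : |m| ≤ (N : ℤ) ^ j) : geomKernel N (m * (c * β)) ≤
      2 * N * (Pi.single 0 1 : ℤ → ℝ) m + 4 * r * 1 + D * multiplesRpow s (r / r.gcd c) m := by
    have rpow_nonneg := multiplesRpow_nonneg s (r / r.gcd c) m
    obtain rfl | hm0 := eq_or_ne m 0
    · refine (geomKernel_le hN'.le _).trans ?_
      rw [Pi.single_eq_same, mul_one, add_assoc]
      exact le_add_of_nonneg_right (by positivity)
    · have hm' : |(m : ℝ)| ≤ (N : ℝ) ^ j := by exact_mod_cast hm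
      have hδ : |m * c * (β - b / r)| ≤ 1 / (2 * r) := by
        rw [abs_mul, abs_mul, Nat.abs_cast, mul_comm 2, ← div_div, le_div_iff₀ two_pos]
        calc _ ≤ (N : ℝ) ^ j * c * |β - b / r| * 2 := by gcongr
          _ ≤ 1 / r := by linarith
      have hsm : s = 0 ∨ 0 < |m * c * (β - b / r)| := hsβ.imp_right fun h => by
        rw [abs_mul, abs_mul]; positivity
      rw [Pi.single_eq_of_ne hm0, mul_zero, zero_add, mul_one]
      exact geomKernel_mul_le_add_multiplesRpow hN' hb hs hs1.le hm0 hsm hδ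
  refine (boxProductSum_le_of_le_on pointwise).trans ?_
  simp only [boxProductSum_add, boxProductSum_const_mul]
  refine add_le_add (add_le_add (boxProductSum_single_zero_le hN j) ?_) ?_
  · gcongr
    exact boxProductSum_one_le N j
  · gcongr
    exact boxProductSum_multiplesRpow_le hs hs1 N j hu

end Approximation
end

section

open Finset Polynomial

/-! ### The local conditions defining `WSet` -/

lemma exists_gammaExp_eq_add_one {g : ℤ[X]} (hg : derivative g ≠ 0) {p : ℕ} (hp : p.Prime) :
    ∃ c, gammaExp g p = c + 1 ∧ (∀ n : ℤ, (p : ℤ) ^ c ∣ (derivative g).eval n) ∧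
      ∃ n : ℤ, ¬ (p : ℤ) ^ (c + 1) ∣ (derivative g).eval n := by
  set S := {c : ℕ | 0 < c ∧ ¬ ∀ n : ℤ, (p : ℤ) ^ c ∣ (derivative g).eval n}
  have hS : S.Nonempty := by
    obtain ⟨n, hn⟩ : ∃ n : ℤ, (derivative g).eval n ≠ 0 := by
      by_contra! h
      exact hg (funext fun n => by simp [h n])
    obtain ⟨c, hc⟩ := Int.finiteMultiplicity_iff (a := (p : ℤ)) |>.mpr
      ⟨by simpa using hp.ne_one, hn⟩
    exact ⟨c + 1, c.succ_pos, fun h => hc (h n)⟩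
  obtain ⟨c, hc⟩ := Nat.exists_eq_add_one_of_ne_zero (Nat.sInf_mem hS).1.ne'
  refine ⟨c, hc, fun n => ?_, by simpa [hc] using (Nat.sInf_mem hS).2⟩
  by_contra h
  rcases c.eq_zero_or_pos with rfl | hc0
  · simp at h
  · have := Nat.sInf_le (show c ∈ S from ⟨hc0, fun h' => h (h' n)⟩)
    lia

lemma dvd_fwdDiff_iter {d : ℤ} {F : ℤ → ℤ} (hF : ∀ n, d ∣ F n) (i : ℕ) (n : ℤ) :
    d ∣ (fwdDiff 1)^[i] F n := by
  rw [fwdDiff_iter_eq_sum_shift]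
  exact dvd_sum fun j _ => (hF _).mul_left _

lemma dvd_choose_factorial_sq {k p i : ℕ} (hp : 0 < p) (hpk : p ≤ k) (hi : i < k) :
    p ∣ (k.factorial ^ 2).choose (i + 1) := by
  obtain ⟨N, hN⟩ := Nat.exists_eq_add_one_of_ne_zero (pow_ne_zero 2 k.factorial_ne_zero)
  obtain ⟨w, hw⟩ := Nat.dvd_factorial i.succ_pos hi
  have choose_eq : (k.factorial ^ 2).choose (i + 1) = k.factorial * w * N.choose i := by
    apply Nat.eq_of_mul_eq_mul_right i.succ_pos
    rw [Nat.succ_eq_add_one] at hw ⊢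
    rw [hN, ← Nat.add_one_mul_choose_eq, ← hN, sq]
    nth_rw 2 [hw]
    ring
  rw [choose_eq, mul_assoc]
  exact (Nat.dvd_factorial hp hpk).mul_right _

/-- Newton's expansion of `f (n + k!²)`: each binomial coefficient involved supplies one more
factor `p` than the values of `f` have in common. -/
lemma pow_dvd_eval_add_factorial_sq_iff {f : ℤ[X]} {k p c : ℕ} (hf : f.natDegree < k) (hp : 0 < p)
    (hpk : p ≤ k) (hdvd : ∀ n : ℤ, (p : ℤ) ^ c ∣ f.eval n) (n : ℤ) :
    (p : ℤ) ^ (c + 1) ∣ f.eval (n + (k.factorial ^ 2 : ℕ)) ↔ (p : ℤ) ^ (c + 1) ∣ f.eval n := by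
  suffices (p : ℤ) ^ (c + 1) ∣ f.eval (n + (k.factorial ^ 2 : ℕ)) - f.eval n from
    dvd_iff_dvd_of_dvd_sub this
  have newton := shift_eq_sum_fwdDiff_iter (1 : ℤ) (fun x => f.eval x) (k.factorial ^ 2) n
  simp only [nsmul_eq_mul, mul_one] at newton
  rw [newton, sum_range_succ']
  simp only [Nat.choose_zero_right, Nat.cast_one, one_mul, Function.iterate_zero, id,
    add_sub_cancel_right]
  refine dvd_sum fun i _ => ?_
  rcases lt_or_ge i k with hik | hik
  · rw [pow_succ']
    exact mul_dvd_mul (Int.natCast_dvd_natCast.mpr (dvd_choose_factorial_sq hp hpk hik))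
      (dvd_fwdDiff_iter hdvd (i + 1) n)
  · have vanish := congrFun
      (Polynomial.fwdDiff_iter_eq_zero_of_degree_lt (P := f) (n := i + 1) (by lia)) n
    rw [show (fwdDiff 1)^[i + 1] (fun x => f.eval x) n = 0 by simpa using vanish, mul_zero]
    exact dvd_zero _

lemma eval_map_zmod_eq_zero_iff (p : ℕ) (f : ℤ[X]) (n : ℤ) :
    (f.map (Int.castRingHom (ZMod p))).eval (n : ZMod p) = 0 ↔ (p : ℤ) ∣ f.eval n := by
  rw [eval_intCast_map, eq_intCast, ZMod.intCast_zmod_eq_zero_iff_dvd, Int.cast_id]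

lemma C_dvd_of_forall_dvd_eval {f : ℤ[X]} {p : ℕ} (hp : p.Prime) (hf : f.natDegree < p)
    (hdvd : ∀ n : ℤ, (p : ℤ) ∣ f.eval n) : C (p : ℤ) ∣ f := by
  have : Fact p.Prime := ⟨hp⟩
  have map_eq_zero : f.map (Int.castRingHom (ZMod p)) = 0 := by
    apply eq_zero_of_natDegree_lt_card_of_eval_eq_zero _ (f := id) Function.injective_id
    · intro x
      obtain ⟨n, rfl⟩ := ZMod.intCast_surjective x
      exact (eval_map_zmod_eq_zero_iff p f n).mpr (hdvd n)
    · rw [ZMod.card]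
      exact natDegree_map_le.trans_lt hf
  refine C_dvd_iff_dvd_coeff _ _ |>.mpr fun i => (ZMod.intCast_zmod_eq_zero_iff_dvd _ _).mp ?_
  simpa using congrArg (coeff · i) map_eq_zero

lemma C_pow_dvd_of_forall_pow_dvd_eval {f : ℤ[X]} {p : ℕ} (hp : p.Prime) (hf : f.natDegree < p)
    {c : ℕ} (hdvd : ∀ n : ℤ, (p : ℤ) ^ c ∣ f.eval n) : C ((p : ℤ) ^ c) ∣ f := by
  have hp0 : (p : ℤ) ≠ 0 := mod_cast hp.ne_zero
  induction c with
  | zero => simp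
  | succ c ih =>
    obtain ⟨f', rfl⟩ := ih fun n => (pow_dvd_pow _ c.le_succ).trans (hdvd n)
    rw [natDegree_C_mul (pow_ne_zero c hp0)] at hf
    rw [pow_succ, C_mul]
    refine mul_dvd_mul_left _ (C_dvd_of_forall_dvd_eval hp hf fun n => ?_)
    have := hdvd n
    rw [eval_mul, eval_C, pow_succ] at this
    exact Int.dvd_of_mul_dvd_mul_left (pow_ne_zero c hp0) this

lemma exists_pow_dvd_eval_iff_mem {f : ℤ[X]} {p : ℕ} (hp : p.Prime) (hf : f.natDegree < p) {c : ℕ}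
    (hdvd : ∀ n : ℤ, (p : ℤ) ^ c ∣ f.eval n) (hndvd : ∃ n : ℤ, ¬ (p : ℤ) ^ (c + 1) ∣ f.eval n) :
    ∃ R : Finset (ZMod p), #R ≤ f.natDegree ∧
      ∀ n : ℤ, (p : ℤ) ^ (c + 1) ∣ f.eval n ↔ (n : ZMod p) ∈ R := by
  have : Fact p.Prime := ⟨hp⟩
  have hpc : (p : ℤ) ^ c ≠ 0 := pow_ne_zero c (mod_cast hp.ne_zero)
  obtain ⟨f', rfl⟩ := C_pow_dvd_of_forall_pow_dvd_eval hp hf hdvd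
  have dvd_iff : ∀ n : ℤ, (p : ℤ) ^ (c + 1) ∣ (C ((p : ℤ) ^ c) * f').eval n ↔
      (f'.map (Int.castRingHom (ZMod p))).eval (n : ZMod p) = 0 := fun n => by
    rw [eval_map_zmod_eq_zero_iff, eval_mul, eval_C, pow_succ, Int.mul_dvd_mul_iff_left hpc]
  have map_ne_zero : f'.map (Int.castRingHom (ZMod p)) ≠ 0 := fun h => by
    obtain ⟨n, hn⟩ := hndvd
    exact hn ((dvd_iff n).mpr (by rw [h, eval_zero]))
  refine ⟨(f'.map (Int.castRingHom (ZMod p))).roots.toFinset, ?_, fun n => ?_⟩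
  · rw [natDegree_C_mul hpc]
    exact (Multiset.toFinset_card_le _).trans ((card_roots' _).trans natDegree_map_le)
  · rw [dvd_iff, Multiset.mem_toFinset, mem_roots map_ne_zero, IsRoot.def]

/-- The primes in the interval `(k, Y]`. -/
noncomputable def primesIoc (k : ℕ) (Y : ℝ) : Finset ℕ := {p ∈ Ioc k ⌊Y⌋₊ | p.Prime}

lemma mem_primesIoc {k : ℕ} {Y : ℝ} {p : ℕ} :
    p ∈ primesIoc k Y ↔ p.Prime ∧ k < p ∧ (p : ℝ) ≤ Y := by
  rw [primesIoc, mem_filter, mem_Ioc, and_comm]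
  refine and_congr_right fun hp => and_congr_right fun _ => ?_
  rw [Nat.le_floor_iff' hp.ne_zero]

lemma exists_mem_WSet_iff {g : ℤ[X]} (hg : 0 < g.natDegree) (Y : ℝ) :
    ∃ (U : ℤ → Prop) (R : ∀ p : ℕ, Finset (ZMod p)),
      Function.Periodic U (g.natDegree.factorial ^ 2 : ℕ) ∧ (∀ p, #(R p) ≤ g.natDegree - 1) ∧
      ∀ n, n ∈ WSet g Y ↔ U n ∧ ∀ p ∈ primesIoc g.natDegree Y, (n : ZMod p) ∉ R p := by
  have natDegree_lt : (derivative g).natDegree < g.natDegree := natDegree_derivative_lt hg.ne'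
  have hg' : derivative g ≠ 0 := fun h => hg.ne' (derivative_eq_zero.mp h)
  have residues : ∀ p : ℕ, ∃ R : Finset (ZMod p), #R ≤ g.natDegree - 1 ∧ (p.Prime →
      g.natDegree < p → ∀ n : ℤ, (p : ℤ) ^ gammaExp g p ∣ (derivative g).eval n ↔
        (n : ZMod p) ∈ R) := fun p => by
    by_cases hp : p.Prime ∧ g.natDegree < p
    · obtain ⟨c, hc, hdvd, hndvd⟩ := exists_gammaExp_eq_add_one hg' hp.1
      obtain ⟨R, hR, hmem⟩ :=
        exists_pow_dvd_eval_iff_mem hp.1 (natDegree_lt.trans hp.2) hdvd hndvd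
      exact ⟨R, by lia, fun _ _ => hc ▸ hmem⟩
    · exact ⟨∅, by simp, fun h h' => absurd ⟨h, h'⟩ hp⟩
  choose R hR hmem using residues
  refine ⟨fun n => ∀ p : ℕ, p.Prime → p ≤ g.natDegree → (p : ℝ) ≤ Y →
    ¬ (p : ℤ) ^ gammaExp g p ∣ (derivative g).eval n, R, fun n => ?_, hR,
    fun n => ⟨fun hn => ?_, ?_⟩⟩
  · refine propext (forall₄_congr fun p hp hpk _ => not_congr ?_)
    obtain ⟨c, hc, hdvd, -⟩ := exists_gammaExp_eq_add_one hg' hp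
    rw [hc, pow_dvd_eval_add_factorial_sq_iff natDegree_lt hp.pos hpk hdvd]
  · refine ⟨fun p hp _ hpY => hn p hp hpY, fun p hp hpR => ?_⟩
    rw [mem_primesIoc] at hp
    exact hn p hp.1 hp.2.2 ((hmem p hp.1 hp.2.1 n).mpr hpR)
  · rintro ⟨hU, hn⟩ p hp hpY
    rcases le_or_gt p g.natDegree with hpk | hpk
    · exact hU p hp hpk hpY
    · exact fun h => hn p (mem_primesIoc.mpr ⟨hp, hpk, hpY⟩) ((hmem p hp hpk n).mp h)

end

section

open Finset Real

/-! ### Sums over primes of Mertens type -/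

lemma sum_log_prime_Ioc_le (n : ℕ) :
    ∑ p ∈ Ioc n (2 * n) with p.Prime, log p ≤ n * (2 * log 2) := by
  have prime_of_mem : ∀ p ∈ {p ∈ Ioc n (2 * n) | p.Prime}, p.Prime := fun p hp =>
    (mem_filter.mp hp).2
  have prod_dvd : ∏ p ∈ Ioc n (2 * n) with p.Prime, p ∣ (2 * n).choose n := by
    refine prod_primes_dvd _ (fun p hp => (prime_of_mem p hp).prime) fun p hp => ?_
    rw [mem_filter, mem_Ioc] at hp
    exact hp.2.dvd_choose hp.1.1 (by lia) hp.1.2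
  have prod_le : ((∏ p ∈ Ioc n (2 * n) with p.Prime, p : ℕ) : ℝ) ≤ 2 ^ (2 * n) :=
    mod_cast (Nat.le_of_dvd (Nat.choose_pos (by lia)) prod_dvd).trans (Nat.choose_le_two_pow _ _)
  have prod_pos : 0 < ∏ p ∈ Ioc n (2 * n) with p.Prime, p :=
    prod_pos fun p hp => (prime_of_mem p hp).pos
  calc ∑ p ∈ Ioc n (2 * n) with p.Prime, log p
      = log (∏ p ∈ Ioc n (2 * n) with p.Prime, p : ℕ) := by
        rw [Nat.cast_prod, log_prod fun p hp => Nat.cast_ne_zero.mpr (prime_of_mem p hp).ne_zero]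
    _ ≤ log (2 ^ (2 * n)) := log_le_log (mod_cast prod_pos) prod_le
    _ = n * (2 * log 2) := by rw [log_pow]; push_cast; ring

lemma sum_log_prime_div_Ioc_two_pow_le (j : ℕ) :
    ∑ p ∈ Ioc ((2 : ℕ) ^ j) (2 * 2 ^ j) with p.Prime, log p / p ≤ 2 * log 2 :=
  calc ∑ p ∈ Ioc ((2 : ℕ) ^ j) (2 * 2 ^ j) with p.Prime, log p / p
      ≤ ∑ p ∈ Ioc ((2 : ℕ) ^ j) (2 * 2 ^ j) with p.Prime, log p / 2 ^ j := by
        refine sum_le_sum fun p hp => ?_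
        have : (2 : ℝ) ^ j ≤ p := mod_cast (mem_Ioc.mp (mem_filter.mp hp).1).1.le
        have := log_natCast_nonneg p
        gcongr
    _ ≤ ((2 ^ j : ℕ) : ℝ) * (2 * log 2) / 2 ^ j := by
        rw [← sum_div]
        gcongr
        exact sum_log_prime_Ioc_le (2 ^ j)
    _ = 2 * log 2 := by push_cast; field_simp

lemma sum_one_div_prime_Ioc_two_pow_le {j : ℕ} (hj : 0 < j) :
    ∑ p ∈ Ioc ((2 : ℕ) ^ j) (2 * 2 ^ j) with p.Prime, (1 : ℝ) / p ≤ 2 / j := by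
  have : 0 < log 2 := log_pos one_lt_two
  calc ∑ p ∈ Ioc ((2 : ℕ) ^ j) (2 * 2 ^ j) with p.Prime, (1 : ℝ) / p
      ≤ ∑ p ∈ Ioc ((2 : ℕ) ^ j) (2 * 2 ^ j) with p.Prime, log p / p / (j * log 2) := by
        refine sum_le_sum fun p hp => ?_
        have two_pow_le : (2 : ℝ) ^ j ≤ p := mod_cast (mem_Ioc.mp (mem_filter.mp hp).1).1.le
        have le_log : j * log 2 ≤ log p := by
          rw [← log_pow]
          exact log_le_log (by positivity) two_pow_le
        rw [le_div_iff₀ (by positivity), one_div_mul_eq_div]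
        gcongr
    _ ≤ 2 * log 2 / (j * log 2) := by
        rw [← sum_div]
        gcongr
        exact sum_log_prime_div_Ioc_two_pow_le j
    _ = 2 / j := by field_simp

lemma sum_prime_Ioc_two_pow_le {F G : ℕ → ℝ}
    (hFG : ∀ j, 0 < j → ∑ p ∈ Ioc (2 ^ j) (2 * 2 ^ j) with p.Prime, F p ≤ G j) (J : ℕ) :
    ∑ p ∈ Ioc 1 (2 ^ (J + 1)) with p.Prime, F p ≤ F 2 + ∑ j ∈ Icc 1 J, G j := by
  induction J with
  | zero =>
    rw [show {p ∈ Ioc 1 (2 ^ (0 + 1)) | p.Prime} = {2} by decide]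
    simp
  | succ J ih =>
    rw [pow_succ' 2 (J + 1), ← Ioc_union_Ioc_eq_Ioc (Nat.one_le_two_pow : 1 ≤ 2 ^ (J + 1)) (by lia),
      filter_union, sum_union (disjoint_filter_filter (Ioc_disjoint_Ioc_of_le le_rfl)),
      sum_Icc_succ_top (by lia)]
    linarith [hFG (J + 1) J.succ_pos]

lemma exists_sum_primesIoc_le {F G : ℕ → ℝ} (hF : ∀ p, 0 ≤ F p)
    (hFG : ∀ j, 0 < j → ∑ p ∈ Ioc (2 ^ j) (2 * 2 ^ j) with p.Prime, F p ≤ G j) (k : ℕ) {Y : ℝ}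
    (hY : 2 ≤ Y) :
    ∃ J : ℕ, 0 < J ∧ J * log 2 ≤ log Y ∧
      ∑ p ∈ primesIoc k Y, F p ≤ F 2 + ∑ j ∈ Icc 1 J, G j := by
  have two_le_floor : 2 ≤ ⌊Y⌋₊ := Nat.le_floor (mod_cast hY)
  refine ⟨Nat.log 2 ⌊Y⌋₊, Nat.log_pos one_lt_two two_le_floor, ?_, ?_⟩
  · rw [← log_pow]
    refine log_le_log (by positivity) (le_trans ?_ (Nat.floor_le (by linarith)))
    exact_mod_cast Nat.pow_log_le_self 2 (by lia)
  · refine le_trans (sum_le_sum_of_subset_of_nonneg (fun p hp => ?_) fun p _ _ => hF p)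
      (sum_prime_Ioc_two_pow_le hFG _)
    rw [primesIoc, mem_filter, mem_Ioc] at hp
    have := Nat.lt_pow_succ_log_self one_lt_two ⌊Y⌋₊
    exact mem_filter.mpr ⟨mem_Ioc.mpr ⟨hp.2.one_lt, by lia⟩, hp.2⟩

lemma sum_log_div_primesIoc_le (k : ℕ) {Y : ℝ} (hY : 2 ≤ Y) :
    ∑ p ∈ primesIoc k Y, log p / p ≤ 3 * log Y := by
  obtain ⟨J, -, hJ, hsum⟩ := exists_sum_primesIoc_le (F := fun p => log p / p)
    (fun p => div_nonneg (log_natCast_nonneg p) p.cast_nonneg)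
    (fun j _ => sum_log_prime_div_Ioc_two_pow_le j) k hY
  have : log 2 ≤ log Y := log_le_log two_pos hY
  have : 0 < log 2 := log_pos one_lt_two
  simp only [sum_const, Nat.card_Icc, add_tsub_cancel_right, nsmul_eq_mul, Nat.cast_ofNat] at hsum
  linarith

lemma sum_one_div_primesIoc_le (k : ℕ) {Y : ℝ} (hY : 2 ≤ Y) :
    ∑ p ∈ primesIoc k Y, (1 : ℝ) / p ≤ 2 * log (log Y) + (3 - 2 * log (log 2)) := by
  obtain ⟨J, hJ0, hJ, hsum⟩ := exists_sum_primesIoc_le (F := fun p => (1 : ℝ) / p)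
    (fun p => by positivity) (fun j hj => sum_one_div_prime_Ioc_two_pow_le hj) k hY
  have log_J_le : log J + log (log 2) ≤ log (log Y) := by
    have : 0 < log 2 := log_pos one_lt_two
    rw [← log_mul (by positivity) (by positivity)]
    exact log_le_log (by positivity) hJ
  calc ∑ p ∈ primesIoc k Y, (1 : ℝ) / p ≤ 1 / (2 : ℕ) + ∑ j ∈ Icc 1 J, (2 : ℝ) / j := hsum
    _ = 1 / 2 + 2 * (harmonic J : ℝ) := by
        simp only [harmonic_eq_sum_Icc, Rat.cast_sum, Rat.cast_inv, Rat.cast_natCast, mul_sum,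
          div_eq_mul_inv, Nat.cast_ofNat]
    _ ≤ 2 * log (log Y) + (3 - 2 * log (log 2)) := by linarith [harmonic_le_one_add_log J]

lemma rpow_div_log_sub_one_le {B Y : ℝ} (hB : 0 ≤ B) {p : ℕ} (hp : 0 < p) (hpY : p ≤ Y) :
    (p : ℝ) ^ (B / log Y - 1) ≤ 1 / p + exp B * B / log Y * (log p / p) := by
  have hp0 : (0 : ℝ) < p := Nat.cast_pos.mpr hp
  have log_p_nonneg : 0 ≤ log p := log_natCast_nonneg p
  have log_p_le : log p ≤ log Y := log_le_log hp0 hpY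
  rw [rpow_sub_one hp0.ne', rpow_def_of_pos hp0]
  set x := log p * (B / log Y) with hx
  have hx0 : 0 ≤ x := mul_nonneg log_p_nonneg (div_nonneg hB (log_p_nonneg.trans log_p_le))
  have hxB : x ≤ B := by
    rw [hx, mul_div_left_comm]
    exact mul_le_of_le_one_right hB (div_le_one_of_le₀ log_p_le (log_p_nonneg.trans log_p_le))
  have exp_le : exp x ≤ 1 + x * exp B := by
    have one_sub_le : 1 - x ≤ exp (-x) := by linarith [add_one_le_exp (-x)]
    calc exp x = exp x * (1 - x) + x * exp x := by ring
      _ ≤ exp x * exp (-x) + x * exp B := by gcongr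
      _ = 1 + x * exp B := by rw [← exp_add, add_neg_cancel, exp_zero]
  calc exp x / p ≤ (1 + x * exp B) / p := by gcongr
    _ = 1 / p + exp B * B / log Y * (log p / p) := by rw [hx]; ring

lemma sum_rpow_primesIoc_le (k : ℕ) {B Y : ℝ} (hB : 0 ≤ B) (hY : 2 ≤ Y) :
    ∑ p ∈ primesIoc k Y, (p : ℝ) ^ (B / log Y - 1) ≤
      2 * log (log Y) + (3 - 2 * log (log 2) + 3 * exp B * B) := by
  have log_Y_pos : 0 < log Y := log_pos (by linarith)
  calc ∑ p ∈ primesIoc k Y, (p : ℝ) ^ (B / log Y - 1)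
      ≤ ∑ p ∈ primesIoc k Y, (1 / (p : ℝ) + exp B * B / log Y * (log p / p)) :=
        sum_le_sum fun p hp =>
          rpow_div_log_sub_one_le hB (mem_primesIoc.mp hp).1.pos (mem_primesIoc.mp hp).2.2
    _ ≤ 2 * log (log Y) + (3 - 2 * log (log 2)) + exp B * B / log Y * (3 * log Y) := by
        rw [sum_add_distrib, ← mul_sum]
        gcongr
        · exact sum_one_div_primesIoc_le k hY
        · exact sum_log_div_primesIoc_le k hY
    _ = 2 * log (log Y) + (3 - 2 * log (log 2) + 3 * exp B * B) := by field_simp; ring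

lemma exists_prod_one_add_rpow_primesIoc_le (κ : ℕ) {B : ℝ} (hB : 0 ≤ B) :
    ∃ C : ℝ, 0 < C ∧ ∀ (k : ℕ) (Y : ℝ), 2 ≤ Y →
      ∏ p ∈ primesIoc k Y, (1 + κ * (p : ℝ) ^ (B / log Y - 1)) ≤ C * log Y ^ (2 * κ) := by
  refine ⟨exp (κ * (3 - 2 * log (log 2) + 3 * exp B * B)), exp_pos _, fun k Y hY => ?_⟩
  have log_Y_pos : 0 < log Y := log_pos (by linarith)
  calc ∏ p ∈ primesIoc k Y, (1 + κ * (p : ℝ) ^ (B / log Y - 1))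
      ≤ ∏ p ∈ primesIoc k Y, exp (κ * (p : ℝ) ^ (B / log Y - 1)) :=
        prod_le_prod (fun p _ => by positivity) fun p _ => by
          rw [add_comm]
          exact add_one_le_exp _
    _ = exp (κ * ∑ p ∈ primesIoc k Y, (p : ℝ) ^ (B / log Y - 1)) := by rw [← exp_sum, mul_sum]
    _ ≤ exp (κ * (2 * log (log Y) + (3 - 2 * log (log 2) + 3 * exp B * B))) := by
        gcongr
        exact sum_rpow_primesIoc_le k hB hY
    _ = exp (κ * (3 - 2 * log (log 2) + 3 * exp B * B)) * log Y ^ (2 * κ) := by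
        rw [mul_add, exp_add, mul_comm]
        congr 1
        rw [← exp_log (pow_pos log_Y_pos _), log_pow]
        push_cast
        ring_nf

end

section

open Finset

/-! ### Truncated inclusion–exclusion -/

section Progressions

variable {D Q : ℕ} {U : ℤ → Prop} [DecidablePred U]

lemma exists_sum_filter_modEq_eq_sum_Ico (hD : 0 < D) (M : ℕ) (t : ℤ) (F : ℤ → ℂ) :
    ∃ u v : ℤ, v - u ≤ (M / D + 1 : ℕ) ∧
      ∑ n ∈ Icc (1 : ℤ) M with n ≡ t [ZMOD D], F n = ∑ m ∈ Ico u v, F (D * m + t) := by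
  have hD0 : (0 : ℤ) < D := Nat.cast_pos.mpr hD
  have mem_iff : ∀ m : ℤ, m ∈ Ico (-((t - 1) / D)) ((M - t) / D + 1) ↔
      1 ≤ D * m + t ∧ D * m + t ≤ M := fun m => by
    rw [mem_Ico, neg_le, Int.le_ediv_iff_mul_le hD0, Int.lt_add_one_iff, Int.le_ediv_iff_mul_le hD0]
    refine and_congr ?_ ?_ <;> constructor <;> intro h <;> linarith
  refine ⟨-((t - 1) / D), (M - t) / D + 1, ?_, ?_⟩
  · have : (M - t) / D + (t - 1) / D ≤ (M / D : ℤ) := by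
      rw [Int.le_ediv_iff_mul_le hD0, add_mul]
      linarith [Int.ediv_mul_le (M - t) hD0.ne', Int.ediv_mul_le (t - 1) hD0.ne']
    push_cast
    linarith
  · rw [← sum_image (f := F) (g := fun m : ℤ => D * m + t)
      (fun m _ m' _ h => mul_left_cancel₀ hD0.ne' (add_right_cancel h))]
    refine sum_congr (ext fun n => ?_) fun _ _ => rfl
    rw [mem_filter, mem_Icc, mem_image]
    constructor
    · rintro ⟨hn, hmod⟩
      obtain ⟨m, hm⟩ := hmod.symm.dvd
      obtain rfl : n = D * m + t := by linarith
      exact ⟨m, (mem_iff m).mpr hn, rfl⟩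
    · rintro ⟨m, hm, rfl⟩
      exact ⟨(mem_iff m).mp hm, Int.modEq_iff_dvd.mpr ⟨-m, by ring⟩⟩

lemma norm_sum_filter_le_of_periodic (hD : 0 < D) (hU : Function.Periodic U (D : ℤ)) {M : ℕ}
    {F : ℤ → ℂ} {E : ℝ}
    (hE : ∀ t u v : ℤ, v - u ≤ (M / D + 1 : ℕ) → ‖∑ m ∈ Ico u v, F (D * m + t)‖ ≤ E) :
    ‖∑ n ∈ Icc (1 : ℤ) M with U n, F n‖ ≤ #{t ∈ Ico (0 : ℤ) D | U t} * E := by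
  have hD0 : (0 : ℤ) < D := Nat.cast_pos.mpr hD
  have U_emod : ∀ n, U (n % D) = U n := fun n => by
    rw [Int.emod_def, mul_comm]
    exact hU.sub_int_mul_eq _
  have maps_to : ∀ n ∈ {n ∈ Icc (1 : ℤ) M | U n}, n % D ∈ {t ∈ Ico (0 : ℤ) D | U t} := fun n hn =>
    mem_filter.mpr ⟨mem_Ico.mpr ⟨Int.emod_nonneg n hD0.ne', Int.emod_lt_of_pos n hD0⟩,
      U_emod n ▸ (mem_filter.mp hn).2⟩
  rw [← sum_fiberwise_of_maps_to maps_to, ← nsmul_eq_mul]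
  refine norm_sum_le_of_le _ (fun t ht => ?_) |>.trans (sum_const E).le
  obtain ⟨ht0, htU⟩ := mem_filter.mp ht
  have t_emod : t % D = t := Int.emod_eq_of_lt (mem_Ico.mp ht0).1 (mem_Ico.mp ht0).2
  have fiber_eq : {n ∈ {n ∈ Icc (1 : ℤ) M | U n} | n % D = t} =
      {n ∈ Icc (1 : ℤ) M | n ≡ t [ZMOD D]} := by
    rw [filter_filter]
    refine filter_congr fun n _ => ?_
    rw [Int.ModEq, t_emod]
    exact ⟨And.right, fun h => ⟨by rwa [← U_emod, h], h⟩⟩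
  obtain ⟨u, v, huv, hsum⟩ := exists_sum_filter_modEq_eq_sum_Ico hD M t F
  rw [fiber_eq, hsum]
  exact hE t u v huv

lemma card_filter_forall_mem_residues_le {S : Finset ℕ} (hS : ∀ p ∈ S, p.Prime) (hQ : 0 < Q)
    (hSQ : ∀ p ∈ S, Nat.Coprime p Q) {R : ∀ p : ℕ, Finset (ZMod p)} {κ : ℕ}
    (hR : ∀ p ∈ S, #(R p) ≤ κ) :
    #{t ∈ Ico (0 : ℤ) (Q * ∏ p ∈ S, p : ℕ) | ∀ p ∈ S, (t : ZMod p) ∈ R p} ≤ Q * κ ^ #S := by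
  have hQ0 : (0 : ℤ) < Q := Nat.cast_pos.mpr hQ
  calc #{t ∈ Ico (0 : ℤ) (Q * ∏ p ∈ S, p : ℕ) | ∀ p ∈ S, (t : ZMod p) ∈ R p}
      ≤ #(Ico (0 : ℤ) Q ×ˢ S.pi R) := by
        refine card_le_card_of_injOn (fun t => (t % Q, fun p _ => (t : ZMod p))) ?_ ?_
        · intro t ht
          simp only [coe_product, Set.mem_prod, mem_coe, mem_Ico, mem_pi]
          exact ⟨⟨Int.emod_nonneg t hQ0.ne', Int.emod_lt_of_pos t hQ0⟩, (mem_filter.mp ht).2⟩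
        · intro t ht s hs hts
          obtain ⟨modEq, residue_eq⟩ := Prod.mk.inj hts
          have Q_dvd : Q ∣ (s - t).natAbs := Int.natCast_dvd.mp (Int.modEq_iff_dvd.mp modEq)
          have prod_dvd : ∏ p ∈ S, p ∣ (s - t).natAbs :=
            prod_primes_dvd _ (fun p hp => (hS p hp).prime) fun p hp => Int.natCast_dvd.mp <|
              (ZMod.intCast_eq_intCast_iff_dvd_sub t s p).mp (congrFun₂ residue_eq p hp)
          have dvd := (Nat.Coprime.prod_right fun p hp => (hSQ p hp).symm).mul_dvd_of_dvd_of_dvd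
            Q_dvd prod_dvd
          have ht0 := mem_Ico.mp (mem_filter.mp ht).1
          have hs0 := mem_Ico.mp (mem_filter.mp hs).1
          have := Nat.eq_zero_of_dvd_of_lt dvd (by lia)
          lia
    _ = Q * ∏ p ∈ S, #(R p) := by
        rw [card_product, Int.card_Ico, sub_zero, Int.toNat_natCast, card_pi]
    _ ≤ Q * κ ^ #S := Nat.mul_le_mul_left _ (prod_le_pow_card _ _ _ hR)

lemma norm_sum_filter_residues_le {S : Finset ℕ} (hS : ∀ p ∈ S, p.Prime) (hQ : 0 < Q)
    (hSQ : ∀ p ∈ S, Nat.Coprime p Q) {R : ∀ p : ℕ, Finset (ZMod p)} {κ : ℕ}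
    (hR : ∀ p ∈ S, #(R p) ≤ κ) (hU : Function.Periodic U (Q : ℤ)) {M : ℕ} {F : ℤ → ℂ} {E : ℝ}
    (hE0 : 0 ≤ E) (hE : ∀ t u v : ℤ, v - u ≤ (M / (Q * ∏ p ∈ S, p) + 1 : ℕ) →
      ‖∑ m ∈ Ico u v, F ((Q * ∏ p ∈ S, p : ℕ) * m + t)‖ ≤ E) :
    ‖∑ n ∈ Icc (1 : ℤ) M with U n ∧ ∀ p ∈ S, (n : ZMod p) ∈ R p, F n‖ ≤ Q * κ ^ #S * E := by
  have periodic : Function.Periodic (fun n : ℤ => U n ∧ ∀ p ∈ S, (n : ZMod p) ∈ R p)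
      ((Q * ∏ p ∈ S, p : ℕ) : ℤ) := fun n => by
    refine congrArg₂ And ?_ (propext (forall₂_congr fun p hp => ?_))
    · rw [Nat.cast_mul, mul_comm]
      exact hU.int_mul _ n
    · have : (p : ℤ) ∣ (Q * ∏ p ∈ S, p : ℕ) :=
        Int.natCast_dvd_natCast.mpr ((dvd_prod_of_mem id hp).mul_left Q)
      rw [Int.cast_add, (ZMod.intCast_zmod_eq_zero_iff_dvd _ p).mpr this, add_zero]
  refine (norm_sum_filter_le_of_periodic
    (Nat.mul_pos hQ (prod_pos fun p hp => (hS p hp).pos)) periodic hE).trans ?_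
  gcongr
  norm_cast
  refine (card_le_card ?_).trans (card_filter_forall_mem_residues_le hS hQ hSQ hR)
  exact monotone_filter_right _ fun t _ h => h.2

end Progressions

/-- Toggling a fixed `p ∈ T` pairs the subsets of `T`, and a pair contributes only if the truncation
separates its members. -/
lemma abs_ite_sub_sum_powerset_le {T : Finset ℕ} {y z : ℕ} (hT : ∀ p ∈ T, 0 < p)
    (hy : ∀ p ∈ T, p ≤ y) (hz : 0 < z) :
    |(if T = ∅ then (1 : ℝ) else 0) - ∑ S ∈ T.powerset with ∏ p ∈ S, p ≤ z, (-1 : ℝ) ^ #S| ≤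
      #{S ∈ T.powerset | z < ∏ p ∈ S, p ∧ ∏ p ∈ S, p ≤ y * z} := by
  rcases T.eq_empty_or_nonempty with rfl | ⟨p, hp⟩
  · simp [filter_singleton, Nat.one_le_iff_ne_zero.mpr hz.ne']
  rw [if_neg (ne_empty_of_mem hp), zero_sub, abs_neg, card_filter, sum_filter]
  push_cast
  rw [← insert_erase hp, sum_powerset_insert (notMem_erase p T),
    sum_powerset_insert (notMem_erase p T), ← sum_add_distrib, ← sum_add_distrib]
  refine (abs_sum_le_sum_abs _ _).trans (sum_le_sum fun S hS => ?_)
  have hpS : p ∉ S := fun h => notMem_erase p T (mem_powerset.mp hS h)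
  rw [prod_insert hpS, card_insert_of_notMem hpS, pow_succ]
  set d := ∏ q ∈ S, q
  have d_le : d ≤ p * d := Nat.le_mul_of_pos_left d (hT p hp)
  have le_mul : d ≤ z → p * d ≤ y * z := fun h => Nat.mul_le_mul (hy p hp) h
  have abs_pow : |(-1 : ℝ) ^ #S| = 1 := by rw [abs_neg_one_pow]
  split_ifs <;> first | lia | norm_num [abs_pow]

section InclusionExclusion

variable {ι : Type*} {I : Finset ι} {bad : ι → ℕ → Prop} [∀ n, DecidablePred (bad n)]
  {F : ι → ℂ} {P : Finset ℕ} {y z : ℕ}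

lemma norm_sum_filter_sub_sum_powerset_le (hF : ∀ n ∈ I, ‖F n‖ ≤ 1) (hP : ∀ p ∈ P, 0 < p)
    (hy : ∀ p ∈ P, p ≤ y) (hz : 0 < z) :
    ‖∑ n ∈ I with ∀ p ∈ P, ¬ bad n p, F n -
        ∑ S ∈ P.powerset with ∏ p ∈ S, p ≤ z, (-1) ^ #S * ∑ n ∈ I with ∀ p ∈ S, bad n p, F n‖ ≤
      ∑ S ∈ P.powerset with z < ∏ p ∈ S, p ∧ ∏ p ∈ S, p ≤ y * z,
        (#{n ∈ I | ∀ p ∈ S, bad n p} : ℝ) := by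
  set T : ι → Finset ℕ := fun n => {p ∈ P | bad n p} with hT
  have mem_iff : ∀ (S : Finset ℕ) n, S ∈ (T n).powerset ↔ S ∈ P.powerset ∧ ∀ p ∈ S, bad n p :=
    fun S n => by simp only [hT, mem_powerset, subset_iff, mem_filter]; grind
  have main : ∑ n ∈ I with ∀ p ∈ P, ¬ bad n p, F n -
      ∑ S ∈ P.powerset with ∏ p ∈ S, p ≤ z, (-1) ^ #S * ∑ n ∈ I with ∀ p ∈ S, bad n p, F n =
      ∑ n ∈ I, (((if T n = ∅ then 1 else 0) -
        ∑ S ∈ (T n).powerset with ∏ p ∈ S, p ≤ z, (-1) ^ #S : ℝ) : ℂ) * F n := by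
    simp_rw [mul_sum]
    rw [sum_comm' (t' := I) (s' := fun n => {S ∈ (T n).powerset | ∏ p ∈ S, p ≤ z})
      (fun S n => by simp only [mem_filter, mem_iff]; tauto), sum_filter, ← sum_sub_distrib]
    refine sum_congr rfl fun n _ => ?_
    have T_eq_empty : T n = ∅ ↔ ∀ p ∈ P, ¬ bad n p := filter_eq_empty_iff
    rw [← sum_mul, Complex.ofReal_sub, sub_mul]
    push_cast
    by_cases hn : ∀ p ∈ P, ¬ bad n p
    · rw [if_pos hn, if_pos (T_eq_empty.mpr hn), Complex.ofReal_one, one_mul]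
    · rw [if_neg hn, if_neg (mt T_eq_empty.mp hn), Complex.ofReal_zero, zero_mul]
  have count : ∑ S ∈ P.powerset with z < ∏ p ∈ S, p ∧ ∏ p ∈ S, p ≤ y * z,
        (#{n ∈ I | ∀ p ∈ S, bad n p} : ℝ) =
      ∑ n ∈ I, (#{S ∈ (T n).powerset | z < ∏ p ∈ S, p ∧ ∏ p ∈ S, p ≤ y * z} : ℝ) := by
    simp_rw [card_eq_sum_ones, Nat.cast_sum]
    exact sum_comm' fun S n => by simp only [mem_filter, mem_iff]; tauto
  rw [main, count]
  refine norm_sum_le_of_le _ fun n hn => ?_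
  rw [norm_mul, Complex.norm_real, Real.norm_eq_abs]
  exact (mul_le_of_le_one_right (abs_nonneg _) (hF n hn)).trans <| abs_ite_sub_sum_powerset_le
    (fun p hp => hP p (mem_filter.mp hp).1) (fun p hp => hy p (mem_filter.mp hp).1) hz

end InclusionExclusion

section Sieve

variable {P : Finset ℕ} {κ Q : ℕ}

lemma norm_sum_sifted_le {U : ℤ → Prop} [DecidablePred U] {R : ∀ p : ℕ, Finset (ZMod p)}
    {M y z : ℕ} {F : ℤ → ℂ} {E : ℕ → ℝ} (hP : ∀ p ∈ P, p.Prime) (hQ : 0 < Q)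
    (hPQ : ∀ p ∈ P, Nat.Coprime p Q) (hR : ∀ p ∈ P, #(R p) ≤ κ) (hU : Function.Periodic U (Q : ℤ))
    (hF : ∀ n, ‖F n‖ ≤ 1) (hy : ∀ p ∈ P, p ≤ y) (hz : 0 < z) (hE0 : ∀ d, 0 ≤ E d)
    (hE : ∀ d, 0 < d → d ≤ z → ∀ t u v : ℤ, v - u ≤ (M / (Q * d) + 1 : ℕ) →
      ‖∑ m ∈ Ico u v, F ((Q * d : ℕ) * m + t)‖ ≤ E d) :
    ‖∑ n ∈ Icc (1 : ℤ) M with U n ∧ ∀ p ∈ P, (n : ZMod p) ∉ R p, F n‖ ≤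
      ∑ S ∈ P.powerset with ∏ p ∈ S, p ≤ z, Q * κ ^ #S * E (∏ p ∈ S, p) +
      ∑ S ∈ P.powerset with z < ∏ p ∈ S, p ∧ ∏ p ∈ S, p ≤ y * z,
        Q * κ ^ #S * ((M / (Q * ∏ p ∈ S, p) + 1 : ℕ) : ℝ) := by
  have residues_le : ∀ S ∈ P.powerset, ∀ {G : ℤ → ℂ} {E : ℝ}, 0 ≤ E →
      (∀ t u v : ℤ, v - u ≤ (M / (Q * ∏ p ∈ S, p) + 1 : ℕ) →
        ‖∑ m ∈ Ico u v, G ((Q * ∏ p ∈ S, p : ℕ) * m + t)‖ ≤ E) →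
      ‖∑ n ∈ {n ∈ Icc (1 : ℤ) M | U n} with ∀ p ∈ S, (n : ZMod p) ∈ R p, G n‖ ≤
        Q * κ ^ #S * E := fun S hS G E hE0 hE => by
    have hSP := mem_powerset.mp hS
    rw [filter_filter]
    exact norm_sum_filter_residues_le (fun p hp => hP p (hSP hp)) hQ (fun p hp => hPQ p (hSP hp))
      (fun p hp => hR p (hSP hp)) hU hE0 hE
  rw [← filter_filter]
  have inclusion_exclusion := norm_sum_filter_sub_sum_powerset_le (I := {n ∈ Icc (1 : ℤ) M | U n})
    (bad := fun n p => (n : ZMod p) ∈ R p) (fun n _ => hF n) (fun p hp => (hP p hp).pos) hy hz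
  refine (norm_le_norm_add_norm_sub' _ _).trans
    (add_le_add ?_ (inclusion_exclusion.trans ?_))
  · refine norm_sum_le_of_le _ fun S hS => ?_
    obtain ⟨hSP, hSz⟩ := mem_filter.mp hS
    rw [norm_mul, norm_pow, norm_neg, norm_one, one_pow, one_mul]
    exact residues_le S hSP (hE0 _) (hE _
      (prod_pos fun p hp => (hP p (mem_powerset.mp hSP hp)).pos) hSz)
  · refine sum_le_sum fun S hS => ?_
    have card_le := residues_le S (mem_filter.mp hS).1 (G := fun _ => 1) (Nat.cast_nonneg _)
      fun _ u v huv => by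
        rw [sum_const, Int.card_Ico, nsmul_one, Complex.norm_natCast]
        exact Nat.cast_le.mpr (Int.toNat_le.mpr huv)
    rwa [sum_const, nsmul_one, Complex.norm_natCast] at card_le

lemma sum_powerset_pow_card_mul_prod (P : Finset ℕ) (c : ℝ) (h : ℕ → ℝ) :
    ∑ S ∈ P.powerset, c ^ #S * ∏ p ∈ S, h p = ∏ p ∈ P, (1 + c * h p) := by
  simp_rw [prod_one_add, prod_mul_distrib, prod_const]

/-- Rankin's trick: `1 / d ≤ ζ ^ (-δ) * d ^ (δ - 1)` whenever `ζ ≤ d`. -/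
lemma sum_powerset_truncated_le (hQ : 0 < Q) {M y z : ℕ} {X ζ δ : ℝ}
    (hM : M ≤ X) (hyz : y * z ≤ X) (hζ : 0 < ζ) (hζz : ζ ≤ z + 1) (hδ : 0 ≤ δ) :
    ∑ S ∈ P.powerset with z < ∏ p ∈ S, p ∧ ∏ p ∈ S, p ≤ y * z,
        Q * κ ^ #S * ((M / (Q * ∏ p ∈ S, p) + 1 : ℕ) : ℝ) ≤
      (1 + Q) * X * (ζ ^ (-δ) * ∏ p ∈ P, (1 + κ * (p : ℝ) ^ (δ - 1))) := by
  have : (0 : ℝ) < Q := Nat.cast_pos.mpr hQ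
  have hX0 : 0 ≤ X := (Nat.cast_nonneg M).trans hM
  rw [← sum_powerset_pow_card_mul_prod, mul_sum, mul_sum]
  refine (sum_le_sum fun S hS => ?_).trans <|
    sum_le_sum_of_subset_of_nonneg (filter_subset _ _) fun S _ _ => by
      have : 0 ≤ ∏ p ∈ S, (p : ℝ) ^ (δ - 1) := prod_nonneg fun p _ => by positivity
      positivity
  obtain ⟨-, lt_d, d_le⟩ := mem_filter.mp hS
  have prod_rpow : ∏ p ∈ S, (p : ℝ) ^ (δ - 1) = ((∏ p ∈ S, p : ℕ) : ℝ) ^ (δ - 1) := by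
    rw [Real.finsetProd_rpow _ _ fun p _ => p.cast_nonneg, Nat.cast_prod]
  rw [prod_rpow]
  set d := ∏ p ∈ S, p
  have hd : (0 : ℝ) < d := Nat.cast_pos.mpr (Nat.zero_lt_of_lt lt_d)
  have ζ_le : ζ ≤ d := hζz.trans (by exact_mod_cast lt_d)
  have d_le_X : (d : ℝ) ≤ X := le_trans (by exact_mod_cast d_le) hyz
  have length_le : ((M / (Q * d) + 1 : ℕ) : ℝ) ≤ X / (Q * d) + X / d := by
    rw [Nat.cast_add, Nat.cast_one]
    refine add_le_add (Nat.cast_div_le.trans ?_) ((one_le_div hd).mpr d_le_X)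
    rw [Nat.cast_mul]
    gcongr
  have rankin : 1 / (d : ℝ) ≤ ζ ^ (-δ) * (d : ℝ) ^ (δ - 1) := by
    rw [Real.rpow_sub_one hd.ne', Real.rpow_neg hζ.le, mul_div_assoc', inv_mul_eq_div,
      ← Real.div_rpow hd.le hζ.le]
    gcongr
    exact Real.one_le_rpow ((one_le_div hζ).mpr ζ_le) hδ
  calc Q * (κ : ℝ) ^ #S * ((M / (Q * d) + 1 : ℕ) : ℝ)
      ≤ Q * (κ : ℝ) ^ #S * (X / (Q * d) + X / d) := by gcongr
    _ = (1 + Q) * X * (κ ^ #S * (1 / d)) := by field_simp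
    _ ≤ (1 + Q) * X * (κ ^ #S * (ζ ^ (-δ) * (d : ℝ) ^ (δ - 1))) := by gcongr
    _ = _ := by ring

end Sieve

open scoped Classical Nat in
lemma exists_norm_sum_WSet_le {k : ℕ} (hk : 0 < k) {B : ℝ} (hB : 1 ≤ B) :
    ∃ C : ℝ, 0 < C ∧ ∀ {g : Polynomial ℤ}, g.natDegree = k → ∀ {X Y Z : ℝ}, 2 ≤ Y → 1 ≤ Z →
      Y * Z ≤ X → ∀ {F : ℤ → ℂ}, (∀ n, ‖F n‖ ≤ 1) → ∀ {E : ℕ → ℝ}, (∀ d, 0 ≤ E d) →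
      (∀ d, 0 < d → d ≤ ⌊Z ^ (1 / B)⌋₊ → ∀ t u v : ℤ, v - u ≤ (⌊X⌋₊ / (k ! ^ 2 * d) + 1 : ℕ) →
        ‖∑ m ∈ Ico u v, F ((k ! ^ 2 * d : ℕ) * m + t)‖ ≤ E d) →
      ‖∑ n ∈ Icc (1 : ℤ) ⌊X⌋₊ with n ∈ WSet g Y, F n‖ ≤
        ∑ S ∈ (primesIoc k Y).powerset with ∏ p ∈ S, p ≤ ⌊Z ^ (1 / B)⌋₊,
          (k ! ^ 2 : ℕ) * ((k - 1 : ℕ) : ℝ) ^ #S * E (∏ p ∈ S, p) +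
        C * Real.log Y ^ (2 * (k - 1)) * X * Real.exp (-Real.log Z / Real.log Y) := by
  obtain ⟨C, hC, prod_le⟩ := exists_prod_one_add_rpow_primesIoc_le (k - 1) (zero_le_one.trans hB)
  refine ⟨(1 + (k ! ^ 2 : ℕ)) * C, by positivity, ?_⟩
  rintro g rfl X Y Z hY hZ hYZ F hF E hE0 hE
  set k := g.natDegree
  obtain ⟨U, R, hU, hR, mem_WSet⟩ := exists_mem_WSet_iff hk Y
  have hP : ∀ p ∈ primesIoc k Y, p.Prime := fun p hp => (mem_primesIoc.mp hp).1
  have coprime : ∀ p ∈ primesIoc k Y, Nat.Coprime p (k ! ^ 2) := fun p hp => by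
    refine Nat.Coprime.pow_right 2 ?_
    rw [(hP p hp).coprime_iff_not_dvd, (hP p hp).dvd_factorial, not_le]
    exact (mem_primesIoc.mp hp).2.1
  have hZ0 : 0 < Z := zero_lt_one.trans_le hZ
  have hX0 : 0 ≤ X := le_trans (by positivity) hYZ
  have hlogY : 0 < Real.log Y := Real.log_pos (by linarith)
  have one_le_level : 1 ≤ Z ^ (1 / B) := Real.one_le_rpow hZ (by positivity)
  have level_le : Z ^ (1 / B) ≤ Z :=
    (Real.rpow_le_rpow_of_exponent_le hZ ((div_le_one (by positivity)).mpr hB)).trans_eq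
      (Real.rpow_one Z)
  have yz_le : (⌊Y⌋₊ * ⌊Z ^ (1 / B)⌋₊ : ℝ) ≤ X := le_trans (mul_le_mul
    (Nat.floor_le (by positivity)) ((Nat.floor_le (by positivity)).trans level_le)
    (Nat.cast_nonneg _) (by positivity)) hYZ
  rw [show {n ∈ Icc (1 : ℤ) ⌊X⌋₊ | n ∈ WSet g Y} = {n ∈ Icc (1 : ℤ) ⌊X⌋₊ |
    U n ∧ ∀ p ∈ primesIoc k Y, (n : ZMod p) ∉ R p} from filter_congr fun n _ => mem_WSet n]
  refine (norm_sum_sifted_le hP (by positivity) coprime (fun p _ => hR p) hU hF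
    (fun p hp => Nat.le_floor (mem_primesIoc.mp hp).2.2) (Nat.floor_pos.mpr one_le_level)
    hE0 hE).trans (add_le_add_right ?_ _)
  refine (sum_powerset_truncated_le (by positivity)
    (Nat.floor_le hX0) yz_le (zero_lt_one.trans_le one_le_level) (Nat.lt_floor_add_one _).le
    (div_nonneg (zero_le_one.trans hB) hlogY.le)).trans ?_
  have rpow_eq : (Z ^ (1 / B)) ^ (-(B / Real.log Y)) = Real.exp (-Real.log Z / Real.log Y) := by
    rw [← Real.rpow_mul hZ0.le, Real.rpow_def_of_pos hZ0]
    congr 1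
    field_simp
  calc _ ≤ (1 + (k ! ^ 2 : ℕ)) * X * (Real.exp (-Real.log Z / Real.log Y) *
        (C * Real.log Y ^ (2 * (k - 1)))) := by
        rw [rpow_eq]
        gcongr
        exact prod_le k Y hY
    _ = _ := by ring

end

section

open Finset

/-! ### Weyl means along progressions of small step -/

/-- `N` terms of an arithmetic progression of step `D` span a length comparable to `X`, and the
step is so small that its `(j + 2)`-nd power is at most of order `X ^ (1 / 16)`. -/
structure IsShortStep (c X : ℝ) (j N D : ℕ) : Prop where
  le_mul : X ≤ N * D
  mul_le : N * D ≤ c * X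
  pow_le : (D : ℝ) ^ (j + 2) ≤ c * X ^ (1 / 16 : ℝ)

namespace IsShortStep

variable {c X : ℝ} {j N D : ℕ}

lemma length_pos (h : IsShortStep c X j N D) (hX : 1 ≤ X) : 0 < N :=
  Nat.pos_of_ne_zero fun hN => by
    linarith [h.le_mul, mul_eq_zero_of_left (Nat.cast_eq_zero.mpr hN) (D : ℝ)]

lemma step_pos (h : IsShortStep c X j N D) (hX : 1 ≤ X) : 0 < D :=
  Nat.pos_of_ne_zero fun hD => by
    linarith [h.le_mul, mul_eq_zero_of_right (N : ℝ) (Nat.cast_eq_zero.mpr hD)]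

lemma one_div_length_le (h : IsShortStep c X j N D) (hX : 1 ≤ X) : 1 / (N : ℝ) ≤ D / X := by
  have hN : (0 : ℝ) < N := Nat.cast_pos.mpr (h.length_pos hX)
  rw [div_le_div_iff₀ hN (by linarith), one_mul, mul_comm]
  exact h.le_mul

lemma length_le (h : IsShortStep c X j N D) (hX : 1 ≤ X) : (N : ℝ) ≤ c * X :=
  (le_mul_of_one_le_right N.cast_nonneg (Nat.one_le_cast.mpr (h.step_pos hX))).trans h.mul_le

lemma step_le (h : IsShortStep c X j N D) (hX : 1 ≤ X) : (D : ℝ) ≤ c * X ^ (1 / 16 : ℝ) :=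
  (le_self_pow₀ (Nat.one_le_cast.mpr (h.step_pos hX)) (by lia)).trans h.pow_le

end IsShortStep

section Minor

variable {c X : ℝ} {j N D : ℕ}

lemma one_add_log_le_mul_rpow (hc : 1 ≤ c) (hX : 1 ≤ X) {x : ℝ} (hx : 0 < x)
    (hxX : x ≤ c * X ^ j) :
    1 + Real.log x ≤ (1 + Real.log c + 16 * j) * X ^ (1 / 16 : ℝ) := by
  have hX0 : 0 < X := by linarith
  have log_le : Real.log x ≤ Real.log c + j * Real.log X := by
    rw [← Real.log_pow, ← Real.log_mul (by positivity) (by positivity)]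
    exact Real.log_le_log hx hxX
  have log_X_le : Real.log X ≤ 16 * X ^ (1 / 16 : ℝ) := by
    have := Real.log_le_rpow_div hX0.le (ε := 1 / 16) (by norm_num)
    linarith
  calc 1 + Real.log x ≤ (1 + Real.log c) * 1 + j * Real.log X := by linarith
    _ ≤ (1 + Real.log c) * X ^ (1 / 16 : ℝ) + j * (16 * X ^ (1 / 16 : ℝ)) := by
        have := Real.log_nonneg hc
        gcongr
        exact Real.one_le_rpow hX (by norm_num)
    _ = _ := by ring

lemma exists_card_divisors_pow_le (hc : 1 ≤ c) (hj : 0 < j) :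
    ∃ C : ℝ, 1 ≤ C ∧ ∀ {X : ℝ} {N : ℕ}, 1 ≤ X → 0 < N → (N : ℝ) ≤ c * X →
      ∃ K : ℕ, 0 < K ∧ (∀ m ∈ Icc 1 (N ^ j), #m.divisors ≤ K) ∧
        (K : ℝ) ^ j ≤ C * X ^ (1 / 16 : ℝ) := by
  obtain ⟨C, hC, card_le⟩ :=
    exists_card_divisors_le_mul_rpow (ε := 1 / (16 * (j : ℝ) ^ 2)) (by positivity)
  refine ⟨C ^ j * c ^ (1 / 16 : ℝ), one_le_mul_of_one_le_of_one_le (one_le_pow₀ hC)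
    (Real.one_le_rpow hc (by norm_num)), fun {X N} hX hN hNX => ?_⟩
  have one_mem : 1 ∈ Icc 1 (N ^ j) := mem_Icc.mpr ⟨le_rfl, Nat.pow_pos hN⟩
  obtain ⟨m, hm, sup_eq⟩ := exists_mem_eq_sup _ ⟨1, one_mem⟩ fun m : ℕ => #m.divisors
  obtain ⟨hm1, hmN⟩ := mem_Icc.mp hm
  refine ⟨#m.divisors, card_pos.mpr ⟨1, Nat.one_mem_divisors.mpr (by lia)⟩, fun n hn => ?_, ?_⟩
  · rw [← sup_eq]
    exact le_sup (f := fun m : ℕ => #m.divisors) hn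
  · calc (#m.divisors : ℝ) ^ j ≤ (C * ((N ^ j : ℕ) : ℝ) ^ (1 / (16 * (j : ℝ) ^ 2))) ^ j := by
          gcongr
          exact (card_le m (by lia)).trans (by gcongr)
      _ = C ^ j * (N : ℝ) ^ (1 / 16 : ℝ) := by
          rw [mul_pow, Nat.cast_pow, ← Real.rpow_natCast_mul N.cast_nonneg,
            ← Real.rpow_mul_natCast N.cast_nonneg]
          congr 2
          field_simp
      _ ≤ C ^ j * (c * X) ^ (1 / 16 : ℝ) := by gcongr
      _ = C ^ j * c ^ (1 / 16 : ℝ) * X ^ (1 / 16 : ℝ) := by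
          rw [Real.mul_rpow (by linarith) (by linarith), mul_assoc]

lemma minor_arc_bound_div_le (hj : 0 < j) (h : IsShortStep c X j N D) (hX : 1 ≤ X)
    {K L r m τ : ℝ} (hK : 1 ≤ K) (hL : 1 ≤ L) (hr : 0 < r) (hm : 1 ≤ m)
    (hmr : m / r ≤ τ) (hmX : m / X ≤ τ) (hrX : r / X ^ (j + 1) ≤ τ) :
    (j * (2 * N) ^ j + (2 * K) ^ j *
      ((m * D ^ (j + 1) * (N : ℝ) ^ j / r + 1) * (10 * N + 12 * r * L))) / (2 * N) ^ (j + 1) ≤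
      (j + 22) * (K ^ j * (L * D ^ (j + 2) * τ)) := by
  have : 0 < X := by linarith
  have hN : (1 : ℝ) ≤ N := Nat.one_le_cast.mpr (h.length_pos hX)
  have hD : (1 : ℝ) ≤ D := Nat.one_le_cast.mpr (h.step_pos hX)
  have hN0 : (0 : ℝ) < N := by linarith
  have inv_le := h.one_div_length_le hX
  set M : ℝ := L * D ^ (j + 2) * τ with hM
  have pow_le_pow : (D : ℝ) ^ (j + 1) ≤ (D : ℝ) ^ (j + 2) := pow_le_pow_right₀ hD (by lia)
  have : 0 < τ := lt_of_lt_of_le (by positivity) hmr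
  have m_div_r_le : m * D ^ (j + 1) / r ≤ M :=
    calc m * D ^ (j + 1) / r = 1 * D ^ (j + 1) * (m / r) := by ring
      _ ≤ M := by rw [hM]; gcongr
  have m_div_N_le : m * D ^ (j + 1) * L / N ≤ M :=
    calc m * D ^ (j + 1) * L / N = m * D ^ (j + 1) * L * (1 / N) := by ring
      _ ≤ m * D ^ (j + 1) * L * (D / X) := by gcongr
      _ = L * D ^ (j + 2) * (m / X) := by ring
      _ ≤ M := by rw [hM]; gcongr
  have one_div_N_le : 1 / N ≤ M :=
    calc 1 / (N : ℝ) = 1 * 1 * 1 / N := by ring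
      _ ≤ m * D ^ (j + 1) * L / N := by gcongr; exact one_le_pow₀ hD
      _ ≤ M := m_div_N_le
  have one_div_pow_le : 1 / (N : ℝ) ^ j ≤ M :=
    (one_div_le_one_div_of_le hN0 (le_self_pow₀ hN hj.ne')).trans one_div_N_le
  have r_div_pow_le : r * L / N ^ (j + 1) ≤ M :=
    calc r * L / N ^ (j + 1) = r * L * (1 / N) ^ (j + 1) := by rw [div_pow, one_pow]; ring
      _ ≤ r * L * (D / X) ^ (j + 1) := by gcongr
      _ = L * D ^ (j + 1) * (r / X ^ (j + 1)) := by rw [div_pow]; ring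
      _ ≤ M := by rw [hM]; gcongr
  calc _ = j / 2 * (1 * (1 / N)) + K ^ j / 2 * (10 * (m * D ^ (j + 1) / r) +
        12 * (m * D ^ (j + 1) * L / N) + 10 * (1 / N ^ j) + 12 * (r * L / N ^ (j + 1))) := by
        rw [mul_pow, mul_pow, mul_pow, pow_succ 2 j, pow_succ (N : ℝ) j]
        field_simp
        ring
    _ ≤ j * (K ^ j * M) + K ^ j / 2 * (10 * M + 12 * M + 10 * M + 12 * M) := by
        have : (j : ℝ) / 2 ≤ j := half_le_self j.cast_nonneg
        gcongr
        exact one_le_pow₀ hK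
    _ = (j + 22) * (K ^ j * M) := by ring

lemma exists_weylMean_le_of_minor (hc : 1 ≤ c) (j : ℕ) :
    ∃ C : ℝ, 0 < C ∧ (0 < j → ∀ {X τ : ℝ} {N D : ℕ}, 1 ≤ X → τ ≤ 1 → IsShortStep c X j N D →
      ∀ {β : ℝ} {b : ℤ} {r m : ℕ} [NeZero r], IsCoprime b r → |β - b / r| ≤ 1 / (r : ℝ) ^ 2 →
        0 < m → m / r ≤ c * τ → m / X ≤ c * τ → r / X ^ (j + 1) ≤ c * τ →
        weylMean N j ((m * D ^ (j + 1) : ℕ) * β) ≤ C * X ^ (1 / 4 : ℝ) * τ) := by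
  rcases j.eq_zero_or_pos with rfl | hj
  · exact ⟨1, one_pos, fun hj => absurd hj (lt_irrefl 0)⟩
  obtain ⟨C, hC, exists_K⟩ := exists_card_divisors_pow_le hc hj
  have log_c_nonneg := Real.log_nonneg hc
  refine ⟨(j + 22) * (C * ((1 + Real.log c + 16 * (j + 1 : ℕ)) * c * c)), by positivity,
    fun _ X τ N D hX hτ h β b r m _ hb hβ hm hmr hmX hrX => ?_⟩
  have hX0 : 0 < X := by linarith
  have hr : (0 : ℝ) < r := Nat.cast_pos.mpr (NeZero.pos r)
  obtain ⟨K, hK, card_le, K_pow_le⟩ := exists_K hX (h.length_pos hX) (h.length_le hX)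
  have hτ0 : 0 ≤ c * τ := le_trans (by positivity) hmr
  have log_le : 1 + Real.log r ≤ (1 + Real.log c + 16 * (j + 1 : ℕ)) * X ^ (1 / 16 : ℝ) := by
    refine one_add_log_le_mul_rpow hc hX hr (((div_le_iff₀ (by positivity)).mp hrX).trans ?_)
    gcongr
    exact mul_le_of_le_one_right (by linarith) hτ
  calc weylMean N j ((m * D ^ (j + 1) : ℕ) * β)
      ≤ (j * (2 * N) ^ j + (2 * K) ^ j * ((m * D ^ (j + 1) * (N : ℝ) ^ j / r + 1) *
          (10 * N + 12 * r * (1 + Real.log r)))) / (2 * N) ^ (j + 1) := by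
        have := boxProductSum_geomKernel_le (h.length_pos hX) card_le hb hβ
          (c := m * D ^ (j + 1)) (Nat.mul_pos hm (Nat.pow_pos (h.step_pos hX)))
        rw [weylMean]
        gcongr
        simpa only [Nat.cast_mul, Nat.cast_pow] using this
    _ ≤ (j + 22) * (K ^ j * ((1 + Real.log r) * D ^ (j + 2) * (c * τ))) :=
        minor_arc_bound_div_le hj h hX (Nat.one_le_cast.mpr hK)
          (by linarith [Real.log_natCast_nonneg r]) hr (Nat.one_le_cast.mpr hm) hmr hmX hrX
    _ ≤ (j + 22) * (C * X ^ (1 / 16 : ℝ) * ((1 + Real.log c + 16 * (j + 1 : ℕ)) *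
          X ^ (1 / 16 : ℝ) * (c * X ^ (1 / 16 : ℝ)) * (c * τ))) := by
        gcongr
        exact h.pow_le
    _ = (j + 22) * (C * ((1 + Real.log c + 16 * (j + 1 : ℕ)) * c)) *
          X ^ (1 / 16 + 1 / 16 + 1 / 16 : ℝ) * (c * τ) := by
        rw [Real.rpow_add hX0, Real.rpow_add hX0]
        ring
    _ ≤ (j + 22) * (C * ((1 + Real.log c + 16 * (j + 1 : ℕ)) * c)) *
          X ^ (1 / 4 : ℝ) * (c * τ) := by
        gcongr
        norm_num
    _ = _ := by ring

end Minor
end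

section

open Finset

section Major

variable {c X β : ℝ} {j N D r : ℕ} {b : ℤ} [NeZero r]

lemma weylMean_le_of_close (hN : 0 < N) (j : ℕ) (hb : IsCoprime b r) {m : ℕ} (hm : 0 < m)
    {s : ℝ} (hs : 0 ≤ s) (hs1 : s < 1) (hsβ : s = 0 ∨ 0 < |β - b / r|)
    (hβ : 2 * (N : ℝ) ^ j * m * |β - b / r| ≤ 1 / r) :
    weylMean N j (m * β) ≤ (j + 4 * r) / (2 * N) +
      (#(r / r.gcd m).divisors / (1 - s)) ^ j / (r / r.gcd m : ℕ) *
        (N ^ (j + 1) * m * |β - b / r|) ^ (-s) := by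
  have hN0 : (0 : ℝ) < N := Nat.cast_pos.mpr hN
  have rpow_eq : ((N : ℝ) ^ (1 - s)) ^ j = (N : ℝ) ^ j * ((N : ℝ) ^ j) ^ (-s) := by
    rw [sub_eq_add_neg, Real.rpow_add hN0, Real.rpow_one, mul_pow,
      Real.rpow_pow_comm hN0.le]
  have split_pow : (N ^ (j + 1) * m * |β - b / r|) ^ (-s) =
      ((N : ℝ) ^ j) ^ (-s) * (N * m * |β - b / r|) ^ (-s) := by
    rw [← Real.mul_rpow (by positivity) (by positivity)]
    ring_nf
  have bound := boxProductSum_geomKernel_le_of_close hN j hb hm hs hs1 hsβ hβ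
  rw [mul_pow _ ((N : ℝ) ^ (1 - s)), rpow_eq, mul_pow (2 / (1 - s)), div_pow] at bound
  rw [weylMean, div_le_iff₀ (by positivity), split_pow, div_pow]
  refine bound.trans_eq ?_
  have : 1 - s ≠ 0 := by linarith
  rw [mul_pow 2 (N : ℝ), mul_pow 2 (N : ℝ), pow_succ, pow_succ (N : ℝ)]
  field_simp

lemma weylMean_le_of_major (hX : 1 ≤ X) (h : IsShortStep c X j N D) (hb : IsCoprime b r)
    (hβ : 2 * (N : ℝ) ^ j * (D ^ (j + 1) : ℕ) * |β - b / r| ≤ 1 / r) :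
    weylMean N j ((D ^ (j + 1) : ℕ) * β) ≤ (j + 4 * r) / (2 * N) +
      4 ^ j * (#(r / r.gcd (D ^ (j + 1))).divisors ^ j / (r / r.gcd (D ^ (j + 1)) : ℕ)) *
        max 1 (X ^ (j + 1) * |β - b / r|) ^ (-(3 / 4) : ℝ) := by
  have hN := h.length_pos hX
  have hm : 0 < D ^ (j + 1) := Nat.pow_pos (h.step_pos hX)
  rcases le_total (X ^ (j + 1) * |β - b / r|) 1 with hle | hge
  · refine (weylMean_le_of_close hN j hb hm le_rfl one_pos (Or.inl rfl) hβ).trans ?_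
    rw [max_eq_left hle, Real.one_rpow, neg_zero, Real.rpow_zero, sub_zero, div_one]
    gcongr
    exact le_mul_of_one_le_left (by positivity) (one_le_pow₀ (by norm_num))
  · have : 0 < X := by linarith
    have hη : 0 < |β - b / r| := pos_of_mul_pos_right (one_pos.trans_le hge) (by positivity)
    refine (weylMean_le_of_close hN j hb hm (s := 3 / 4) (by norm_num) (by norm_num) (Or.inr hη)
      hβ).trans ?_
    rw [max_eq_right hge, show (1 : ℝ) - 3 / 4 = 4⁻¹ by norm_num, div_inv_eq_mul, mul_pow,
      mul_comm _ ((4 : ℝ) ^ j), mul_div_assoc]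
    have scale_le : X ^ (j + 1) * |β - b / r| ≤
        N ^ (j + 1) * (D ^ (j + 1) : ℕ) * |β - b / r| := by
      rw [Nat.cast_pow, ← mul_pow]
      gcongr
      exact h.le_mul
    exact add_le_add_right (mul_le_mul_of_nonneg_left (Real.rpow_le_rpow_of_nonpos (by positivity)
      scale_le (by norm_num)) (by positivity)) _

end Major

lemma exists_card_divisors_pow_div_le (j : ℕ) :
    ∃ C : ℝ, 1 ≤ C ∧ ∀ n : ℕ, n ≠ 0 →
      (#n.divisors : ℝ) ^ j / n ≤ C * (n : ℝ) ^ (-(3 / 4) : ℝ) := by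
  obtain ⟨C, hC, card_pow_le⟩ :=
    exists_card_divisors_pow_le_mul_rpow (ε := 1 / 4) (by norm_num) j
  refine ⟨C, hC, fun n hn => ?_⟩
  rw [show (-(3 / 4) : ℝ) = 1 / 4 - 1 by norm_num, Real.rpow_sub_one (Nat.cast_ne_zero.mpr hn),
    ← mul_div_assoc]
  gcongr
  exact card_pow_le n hn

lemma exists_card_divisors_pow_div_mul_le (j : ℕ) :
    ∃ C : ℝ, 1 ≤ C ∧ ∀ {r m : ℕ} {V : ℝ}, 0 < r → 0 < V →
      (#(r / r.gcd m).divisors : ℝ) ^ j / (r / r.gcd m : ℕ) * V ^ (-(3 / 4) : ℝ) ≤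
        C * (r.gcd m / (r * V)) ^ (3 / 4 : ℝ) := by
  obtain ⟨C, hC, card_le⟩ := exists_card_divisors_pow_div_le j
  refine ⟨C, hC, fun {r m V} hr hV => ?_⟩
  have gcd_pos := Nat.gcd_pos_of_pos_left m hr
  have quot_pos := Nat.div_pos (Nat.gcd_le_left m hr) gcd_pos
  refine (mul_le_mul_of_nonneg_right (card_le _ quot_pos.ne') (by positivity)).trans_eq ?_
  rw [Nat.cast_div (Nat.gcd_dvd_left r m) (Nat.cast_ne_zero.mpr gcd_pos.ne'), mul_assoc,
    ← Real.mul_rpow (by positivity) hV.le, Real.rpow_neg (by positivity),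
    ← Real.inv_rpow (by positivity), div_mul_eq_mul_div, inv_div]

lemma exists_weylMean_le_of_major {c : ℝ} (hc : 1 ≤ c) (j : ℕ) :
    ∃ C : ℝ, 0 < C ∧ ∀ {X : ℝ} {N D : ℕ}, 1 ≤ X → IsShortStep c X j N D →
      ∀ {β : ℝ} {b : ℤ} {r : ℕ} [NeZero r], IsCoprime b r → r ≤ c * X ^ (1 / 2 : ℝ) →
        2 * (N : ℝ) ^ j * (D ^ (j + 1) : ℕ) * |β - b / r| ≤ 1 / r →
        weylMean N j ((D ^ (j + 1) : ℕ) * β) ≤ C * X ^ (-(1 / 4) : ℝ) +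
          C * (r.gcd (D ^ (j + 1)) / (r * max 1 (X ^ (j + 1) * |β - b / r|))) ^ (3 / 4 : ℝ) := by
  obtain ⟨C, hC, second_le⟩ := exists_card_divisors_pow_div_mul_le j
  refine ⟨(j + 4) * c * c + 4 ^ j * C, by positivity,
    fun {X N D} hX h β b r _ hb hr hβ => (weylMean_le_of_major hX h hb hβ).trans ?_⟩
  have hX0 : 0 < X := by linarith
  set V := max 1 (X ^ (j + 1) * |β - b / r|)
  have hV : 0 < V := one_pos.trans_le (le_max_left _ _)
  have first_le : (j + 4 * r) / (2 * (N : ℝ)) ≤ (j + 4) * c * c * X ^ (-(1 / 4) : ℝ) := by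
    have hr1 : (1 : ℝ) ≤ r := Nat.one_le_cast.mpr (NeZero.pos r)
    calc (j + 4 * r) / (2 * (N : ℝ)) = (j * 1 + 4 * r) * (1 / N) / 2 := by ring
      _ ≤ (j * r + 4 * r) * (1 / N) := (half_le_self (by positivity)).trans (by gcongr)
      _ = (j + 4) * r * (1 / N) := by ring
      _ ≤ (j + 4) * (c * X ^ (1 / 2 : ℝ)) * (c * X ^ (1 / 16 : ℝ) / X) := by
          have := (h.one_div_length_le hX).trans (div_le_div_of_nonneg_right (h.step_le hX) hX0.le)
          gcongr ?_ * ?_ * ?_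
      _ = (j + 4) * c * c * X ^ (1 / 2 + 1 / 16 - 1 : ℝ) := by
          rw [Real.rpow_sub_one hX0.ne', Real.rpow_add hX0]
          ring
      _ ≤ (j + 4) * c * c * X ^ (-(1 / 4) : ℝ) := by
          gcongr
          norm_num
  rw [mul_assoc (4 ^ j : ℝ)]
  refine add_le_add (first_le.trans ?_) ((mul_le_mul_of_nonneg_left
    (second_le (NeZero.pos r) hV) (by positivity)).trans ?_)
  · gcongr
    exact le_add_of_nonneg_right (by positivity)
  · rw [← mul_assoc]
    gcongr
    exact le_add_of_nonneg_left (by positivity)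

end

section

open Finset

/-! ### Two rational approximations to one number -/

lemma IsShortStep.mono {c c' X : ℝ} {j N D : ℕ} (h : IsShortStep c X j N D) (hX : 0 ≤ X)
    (hc : c ≤ c') : IsShortStep c' X j N D where
  le_mul := h.le_mul
  mul_le := h.mul_le.trans (by gcongr)
  pow_le := h.pow_le.trans (by gcongr)

lemma IsShortStep.pow_mul_pow_le {c X : ℝ} {j N D : ℕ} (h : IsShortStep c X j N D) (hX : 1 ≤ X) :
    (N : ℝ) ^ j * D ^ (j + 1) ≤ c ^ (j + 1) * (X ^ j * X ^ (1 / 2 : ℝ)) :=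
  have hc : 0 ≤ c := nonneg_of_mul_nonneg_left
    ((one_pos.le.trans hX).trans (h.le_mul.trans h.mul_le)) (one_pos.trans_le hX)
  calc (N : ℝ) ^ j * D ^ (j + 1) = (N * D) ^ j * D := by ring
    _ ≤ (c * X) ^ j * (c * X ^ (1 / 2 : ℝ)) := by
        have step_le : (D : ℝ) ≤ c * X ^ (1 / 2 : ℝ) := (h.step_le hX).trans
          (mul_le_mul_of_nonneg_left (Real.rpow_le_rpow_of_exponent_le hX (by norm_num)) hc)
        have := h.mul_le
        gcongr ?_ ^ j * ?_
    _ = _ := by ring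

lemma exists_coprime_approx (β : ℝ) {T : ℝ} (hT : 1 ≤ T) :
    ∃ (b : ℤ) (r : ℕ), 0 < r ∧ IsCoprime b r ∧ r ≤ 2 * T ∧
      |β - b / r| ≤ 1 / (r : ℝ) ^ 2 ∧ T * |β - b / r| ≤ 1 / r := by
  obtain ⟨w, abs_sub_le, den_le⟩ :=
    Real.exists_rat_abs_sub_le_and_den_le β (Nat.ceil_pos.mpr (one_pos.trans_le hT))
  rw [Rat.cast_def] at abs_sub_le
  have hr : (0 : ℝ) < w.den := Nat.cast_pos.mpr w.pos
  have hrT : (w.den : ℝ) ≤ ⌈T⌉₊ := Nat.cast_le.mpr den_le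
  have hTceil := Nat.le_ceil T
  have ceil_lt := Nat.ceil_lt_add_one (one_pos.le.trans hT)
  refine ⟨w.num, w.den, w.pos, Int.isCoprime_iff_gcd_eq_one.mpr w.reduced, by linarith,
    abs_sub_le.trans ?_, (mul_le_mul_of_nonneg_left abs_sub_le (by linarith)).trans ?_⟩
  · rw [sq]
    gcongr
    linarith
  · rw [mul_one_div, div_le_div_iff₀ (by positivity) hr, one_mul]
    gcongr
    linarith

lemma one_le_add_of_approx {q r m : ℕ} {a b : ℤ} {α : ℝ} (hq : 0 < q) (hr : 0 < r) (hm : 0 < m)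
    (ha : IsCoprime a q) (hα : |α - a / q| ≤ 1 / (q : ℝ) ^ 2) :
    1 ≤ r * q * |m * α - b / r| + r * (m / q) := by
  have hq0 : (0 : ℝ) < q := Nat.cast_pos.mpr hq
  have hr0 : (0 : ℝ) < r := Nat.cast_pos.mpr hr
  rcases eq_or_ne (b * q) (m * a * r) with heq | hne
  · have q_dvd : (q : ℤ) ∣ (m * r : ℕ) :=
      ha.symm.dvd_of_dvd_mul_right (z := a) ⟨b, by push_cast; linarith⟩
    have q_le : (q : ℝ) ≤ (m * r : ℕ) := Nat.cast_le.mpr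
      (Nat.le_of_dvd (Nat.mul_pos hm hr) (Int.natCast_dvd_natCast.mp q_dvd))
    refine le_add_of_nonneg_of_le (by positivity) ?_
    rw [mul_div_assoc', le_div_iff₀ hq0, one_mul, mul_comm (r : ℝ)]
    exact_mod_cast q_le
  · calc (1 : ℝ) ≤ |(b * q - m * a * r : ℤ)| := by
          exact_mod_cast Int.one_le_abs (sub_ne_zero.mpr hne)
      _ = r * q * |m * (α - a / q) - (m * α - b / r)| := by
          nth_rw 1 [← abs_of_pos (mul_pos hr0 hq0)]
          rw [← abs_mul, Int.cast_abs]
          congr 1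
          push_cast
          field_simp
          ring
      _ ≤ r * q * (m * (1 / (q : ℝ) ^ 2) + |m * α - b / r|) := by
          gcongr
          refine (abs_sub _ _).trans ?_
          rw [abs_mul, Nat.abs_cast]
          gcongr
      _ = r * q * |m * α - b / r| + r * (m / q) := by
          field_simp
          ring

lemma exists_weylMean_le_of_large_denominator {c : ℝ} (hc : 1 ≤ c) (j : ℕ) :
    ∃ C : ℝ, 0 < C ∧ (0 < j → ∀ {X : ℝ} {N D : ℕ}, 1 ≤ X → IsShortStep c X j N D →
      ∀ {β : ℝ} {b : ℤ} {r : ℕ} [NeZero r], IsCoprime b r → |β - b / r| ≤ 1 / (r : ℝ) ^ 2 →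
        X ^ (1 / 2 : ℝ) ≤ r → r ≤ c * (X ^ j * X ^ (1 / 2 : ℝ)) →
        weylMean N j ((D ^ (j + 1) : ℕ) * β) ≤ C * X ^ (-(1 / 4) : ℝ)) := by
  obtain ⟨C, hC, minor⟩ := exists_weylMean_le_of_minor hc j
  refine ⟨C, hC, fun hj X N D hX h β b r _ hb hβ r_ge r_le => ?_⟩
  have hX0 : 0 < X := by linarith
  have rpow_neg_le : X ^ (-(1 / 2) : ℝ) ≤ c * X ^ (-(1 / 2) : ℝ) :=
    le_mul_of_one_le_left (by positivity) hc
  have minor_le := minor hj hX (Real.rpow_le_one_of_one_le_of_nonpos hX (by norm_num)) h hb hβ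
    one_pos (τ := X ^ (-(1 / 2) : ℝ)) (rpow_neg_le.trans' ?_) (rpow_neg_le.trans' ?_) ?_
  · rw [one_mul, mul_assoc, ← Real.rpow_add hX0] at minor_le
    exact minor_le.trans_eq (by norm_num)
  · rw [Nat.cast_one, Real.rpow_neg hX0.le, one_div]
    gcongr
  · rw [Nat.cast_one, one_div, ← Real.rpow_neg_one]
    gcongr
    norm_num
  · rw [div_le_iff₀ (by positivity)]
    refine r_le.trans_eq ?_
    have sqrt_eq : X ^ (1 / 2 : ℝ) = X ^ (-(1 / 2) : ℝ) * X := by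
      rw [← Real.rpow_add_one hX0.ne']
      norm_num
    rw [sqrt_eq, pow_succ]
    ring

lemma exists_approx_weylMean_le {c : ℝ} (hc : 1 ≤ c) (j : ℕ) :
    ∃ C : ℝ, 0 < C ∧ ∀ {X : ℝ}, 1 ≤ X → ∀ β : ℝ, ∃ (b : ℤ) (r : ℕ), 0 < r ∧
      ∀ {N D : ℕ}, IsShortStep c X j N D →
        weylMean N j ((D ^ (j + 1) : ℕ) * β) ≤ C * X ^ (-(1 / 4) : ℝ) +
          C * (r.gcd (D ^ (j + 1)) / (r * max 1 (X ^ (j + 1) * |β - b / r|))) ^ (3 / 4 : ℝ) := by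
  have c_le : c ≤ c ^ (j + 1) := le_self_pow₀ hc j.succ_ne_zero
  have four_ge : 1 ≤ 4 * c ^ (j + 1) := by linarith
  obtain ⟨C, hC, small⟩ := exists_weylMean_le_of_major four_ge j
  obtain ⟨C', hC', large⟩ := exists_weylMean_le_of_large_denominator four_ge j
  refine ⟨C + C', by positivity, fun {X} hX β => ?_⟩
  have hX0 : 0 < X := by linarith
  have sqrt_ge : 1 ≤ X ^ (1 / 2 : ℝ) := Real.one_le_rpow hX (by norm_num)
  have bound_ge : 1 ≤ c ^ (j + 1) * (X ^ j * X ^ (1 / 2 : ℝ)) :=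
    one_le_mul_of_one_le_of_one_le (hc.trans c_le)
      (one_le_mul_of_one_le_of_one_le (one_le_pow₀ hX) sqrt_ge)
  obtain ⟨b, r, hr, hb, r_le, hβ, hT⟩ := exists_coprime_approx β
    (T := 2 * (c ^ (j + 1) * (X ^ j * X ^ (1 / 2 : ℝ)))) (by linarith)
  have : NeZero r := ⟨hr.ne'⟩
  refine ⟨b, r, hr, fun {N D} h => ?_⟩
  have h' : IsShortStep (4 * c ^ (j + 1)) X j N D := h.mono hX0.le (by linarith)
  rcases le_or_gt (r : ℝ) (4 * c ^ (j + 1) * X ^ (1 / 2 : ℝ)) with r_small | r_large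
  · refine (small hX h' hb r_small (le_trans ?_ hT)).trans (by gcongr <;> linarith)
    rw [Nat.cast_pow, mul_assoc 2]
    exact mul_le_mul_of_nonneg_right
      (mul_le_mul_of_nonneg_left (h.pow_mul_pow_le hX) zero_le_two) (abs_nonneg _)
  · have hj : 0 < j := Nat.pos_of_ne_zero fun hj => by
      subst hj
      linarith
    refine (large hj hX h' hb hβ ?_ (by linarith)).trans (le_add_of_le_of_nonneg ?_ (by positivity))
    · exact (le_mul_of_one_le_left (by positivity) four_ge).trans r_large.le
    · gcongr
      linarith

lemma one_le_mul_max_of_approx {q r m : ℕ} {a b : ℤ} {α δ M : ℝ} (hq : 0 < q) (hr : 0 < r)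
    (hm : 0 < m) (ha : IsCoprime a q) (hα : |α - a / q| ≤ 1 / (q : ℝ) ^ 2) (hM : 0 < M)
    (hmq : m / q ≤ δ) (hqM : q / M ≤ δ) :
    1 ≤ 2 * δ * (r * max 1 (M * |m * α - b / r|)) := by
  have hδ : 0 ≤ δ := le_trans (by positivity) hmq
  calc 1 ≤ r * q * |m * α - b / r| + r * (m / q) := one_le_add_of_approx hq hr hm ha hα
    _ ≤ r * (δ * M) * |m * α - b / r| + r * δ := by
        have := (div_le_iff₀ hM).mp hqM
        gcongr
    _ = δ * (r * (M * |m * α - b / r|)) + δ * (r * 1) := by ring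
    _ ≤ δ * (r * max 1 (M * |m * α - b / r|)) + δ * (r * max 1 (M * |m * α - b / r|)) := by
        gcongr
        exacts [le_max_right _ _, le_max_left _ _]
    _ = _ := by ring

lemma rpow_neg_half_le_of_div_le {X m q δ : ℝ} (hX : 0 < X) (hm : 1 ≤ m) (hq : 0 < q)
    (hmq : m / q ≤ δ) (hqX : q / X ≤ δ) : X ^ (-(1 / 2) : ℝ) ≤ δ := by
  have hδ : 0 ≤ δ := le_trans (by positivity) hqX
  refine le_of_sq_le_sq ?_ hδ
  calc (X ^ (-(1 / 2) : ℝ)) ^ 2 = 1 / X := by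
        rw [← Real.rpow_natCast, ← Real.rpow_mul hX.le]
        norm_num [Real.rpow_neg_one]
    _ ≤ m / X := by gcongr
    _ = m / q * (q / X) := by field_simp
    _ ≤ δ * δ := by gcongr
    _ = δ ^ 2 := (sq δ).symm

lemma exists_weylMean_le_sqrt_of_lt_rpow {c : ℝ} (hc : 1 ≤ c) (j : ℕ) :
    ∃ C : ℝ, 0 < C ∧ ∀ {X ρ : ℝ} {N D : ℕ}, 1 ≤ X → IsShortStep c X j N D →
      ∀ {α : ℝ} {a : ℤ} {q m : ℕ}, 0 < q → 0 < m → IsCoprime a q →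
        |α - a / q| ≤ 1 / (q : ℝ) ^ 2 → m / q ≤ c * ρ → m / X ≤ c * ρ → q / X ^ (j + 1) ≤ c * ρ →
        c * ρ < X ^ (-(1 / 2) : ℝ) →
        weylMean N j ((m * D ^ (j + 1) : ℕ) * α) ≤ C * ρ ^ (1 / 2 : ℝ) := by
  obtain ⟨C, hC, minor⟩ := exists_weylMean_le_of_minor hc j
  refine ⟨C, hC, fun {X ρ N D} hX h α a q m hq hm ha hα hmq hmX hqX ρ_small => ?_⟩
  have hX0 : 0 < X := by linarith
  have hq0 : (0 : ℝ) < q := Nat.cast_pos.mpr hq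
  have hm0 : (0 : ℝ) < m := Nat.cast_pos.mpr hm
  have hcρ : 0 < c * ρ := lt_of_lt_of_le (by positivity) hmq
  have hρ0 : 0 < ρ := pos_of_mul_pos_right hcρ (by linarith)
  have ρ_lt : ρ < X ^ (-(1 / 2) : ℝ) := (le_mul_of_one_le_left hρ0.le hc).trans_lt ρ_small
  have hj : 0 < j := Nat.pos_of_ne_zero fun hj => by
    rw [hj, zero_add, pow_one] at hqX
    exact (rpow_neg_half_le_of_div_le hX0 (Nat.one_le_cast.mpr hm) hq0 hmq hqX).not_gt ρ_small
  have : NeZero q := ⟨hq.ne'⟩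
  have ρ_le : ρ ≤ 1 := ρ_lt.le.trans (Real.rpow_le_one_of_one_le_of_nonpos hX (by norm_num))
  calc weylMean N j ((m * D ^ (j + 1) : ℕ) * α) ≤ C * X ^ (1 / 4 : ℝ) * ρ :=
        minor hj hX ρ_le h ha hα hm hmq hmX hqX
    _ = C * ((X ^ (1 / 4 : ℝ) * ρ ^ (1 / 2 : ℝ)) * ρ ^ (1 / 2 : ℝ)) := by
        rw [mul_assoc _ (ρ ^ (1 / 2 : ℝ)), ← Real.rpow_add hρ0]
        norm_num
        ring
    _ ≤ C * (1 * ρ ^ (1 / 2 : ℝ)) := by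
        gcongr
        calc X ^ (1 / 4 : ℝ) * ρ ^ (1 / 2 : ℝ)
            ≤ X ^ (1 / 4 : ℝ) * (X ^ (-(1 / 2) : ℝ)) ^ (1 / 2 : ℝ) := by gcongr
          _ = 1 := by
            rw [← Real.rpow_mul hX0.le, ← Real.rpow_add hX0]
            norm_num
    _ = C * ρ ^ (1 / 2 : ℝ) := by rw [one_mul]

lemma rpow_neg_quarter_le_of_rpow_neg_half_le {c X ρ : ℝ} (hX : 0 < X) (hc : 1 ≤ c) (hρ : 0 ≤ ρ)
    (hXρ : X ^ (-(1 / 2) : ℝ) ≤ c * ρ) : X ^ (-(1 / 4) : ℝ) ≤ c * ρ ^ (1 / 2 : ℝ) :=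
  calc X ^ (-(1 / 4) : ℝ) = (X ^ (-(1 / 2) : ℝ)) ^ (1 / 2 : ℝ) := by
        rw [← Real.rpow_mul hX.le]
        norm_num
    _ ≤ (c * ρ) ^ (1 / 2 : ℝ) := by gcongr
    _ = c ^ (1 / 2 : ℝ) * ρ ^ (1 / 2 : ℝ) := Real.mul_rpow (by linarith) hρ
    _ ≤ c * ρ ^ (1 / 2 : ℝ) := by
        gcongr
        exact Real.rpow_le_self_of_one_le hc (by norm_num)

lemma exists_weylMean_le_of_approx {c : ℝ} (hc : 1 ≤ c) (j : ℕ) :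
    ∃ C : ℝ, 0 < C ∧ ∀ {X ρ : ℝ}, 1 ≤ X → ρ ≤ 1 → ∀ {α : ℝ} {a : ℤ} {q m : ℕ}, 0 < q → 0 < m →
      IsCoprime a q → |α - a / q| ≤ 1 / (q : ℝ) ^ 2 →
      m / q ≤ c * ρ → m / X ≤ c * ρ → q / X ^ (j + 1) ≤ c * ρ →
      ∃ (r : ℕ) (R : ℝ), 0 < r ∧ r ≤ R ∧ 1 ≤ C * ρ * R ∧
        ∀ {N D : ℕ}, IsShortStep c X j N D → weylMean N j ((m * D ^ (j + 1) : ℕ) * α) ≤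
          C * ρ ^ (1 / 2 : ℝ) + C * (r.gcd (D ^ (j + 1)) / R) ^ (3 / 4 : ℝ) := by
  obtain ⟨C, hC, approx⟩ := exists_approx_weylMean_le hc j
  obtain ⟨C', hC', small⟩ := exists_weylMean_le_sqrt_of_lt_rpow hc j
  refine ⟨C * c + C' + 2 * c, by positivity,
    fun {X ρ} hX hρ α a q m hq hm ha hα hmq hmX hqX => ?_⟩
  have hX0 : 0 < X := by linarith
  have : (0 : ℝ) < m := Nat.cast_pos.mpr hm
  have hρ0 : 0 < ρ := pos_of_mul_pos_right (lt_of_lt_of_le (by positivity) hmX) (by linarith)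
  have := mul_pos hC (one_pos.trans_le hc)
  rcases le_or_gt (X ^ (-(1 / 2) : ℝ)) (c * ρ) with ρ_large | ρ_small
  · obtain ⟨b, r, hr, weylMean_le⟩ := approx hX (m * α)
    refine ⟨r, r * max 1 (X ^ (j + 1) * |m * α - b / r|), hr,
      le_mul_of_one_le_right r.cast_nonneg (le_max_left _ _),
      (one_le_mul_max_of_approx (b := b) hq hr hm ha hα (by positivity) hmq hqX).trans ?_,
      fun {N D} h => ?_⟩
    · rw [← mul_assoc 2]
      gcongr
      linarith
    · rw [show ((m * D ^ (j + 1) : ℕ) : ℝ) * α = (D ^ (j + 1) : ℕ) * (m * α) by push_cast; ring]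
      refine (weylMean_le h).trans (add_le_add ?_ ?_)
      · have rpow_le := rpow_neg_quarter_le_of_rpow_neg_half_le hX0 hc hρ0.le ρ_large
        refine (mul_le_mul_of_nonneg_left rpow_le hC.le).trans ?_
        rw [← mul_assoc]
        gcongr
        linarith
      · gcongr
        nlinarith
  · refine ⟨1, 1 / ρ, one_pos, ?_, ?_, fun {N D} h => ?_⟩
    · rw [Nat.cast_one, le_div_iff₀ hρ0, one_mul]
      exact hρ
    · rw [mul_assoc, mul_one_div_cancel hρ0.ne']
      linarith
    · refine (small hX h hq hm ha hα hmq hmX hqX ρ_small).trans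
        (le_add_of_le_of_nonneg ?_ (by positivity))
      gcongr
      linarith
end

section

open Finset

/-! ### Polynomial exponential sums along progressions -/

lemma isShortStep_progression {Q d j : ℕ} (hQ : 0 < Q) (hd : 0 < d) {X : ℝ} (hX : 1 ≤ X)
    (hdX : (d : ℝ) ≤ X ^ (1 / (16 * ((j : ℝ) + 2)))) :
    IsShortStep (2 * (Q : ℝ) ^ (j + 2)) X j (⌊X⌋₊ / (Q * d) + 1) (Q * d) where
  le_mul := by
    have lt_mul : ⌊X⌋₊ < (⌊X⌋₊ / (Q * d) + 1) * (Q * d) := by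
      rw [mul_comm]
      exact Nat.lt_mul_div_succ _ (Nat.mul_pos hQ hd)
    calc X ≤ ((⌊X⌋₊ + 1 : ℕ) : ℝ) := by exact_mod_cast (Nat.lt_floor_add_one X).le
      _ ≤ _ := by exact_mod_cast lt_mul
  mul_le := by
    have hQ1 : (1 : ℝ) ≤ Q := Nat.one_le_cast.mpr hQ
    have d_le : (d : ℝ) ≤ X := hdX.trans <| Real.rpow_le_self_of_one_le hX <|
      (div_le_one (by positivity)).mpr (by linarith [j.cast_nonneg (α := ℝ)])
    calc ((⌊X⌋₊ / (Q * d) + 1 : ℕ) : ℝ) * (Q * d : ℕ)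
        ≤ ((⌊X⌋₊ + Q * d : ℕ) : ℝ) := by
          rw [← Nat.cast_mul, add_one_mul]
          exact_mod_cast Nat.add_le_add_right (Nat.div_mul_le_self _ _) _
      _ = ⌊X⌋₊ + Q * d := by push_cast; rfl
      _ ≤ Q * X + Q * X := add_le_add ((Nat.floor_le (by linarith)).trans
          (le_mul_of_one_le_left (by linarith) hQ1)) (by gcongr)
      _ = 2 * Q * X := by ring
      _ ≤ 2 * (Q : ℝ) ^ (j + 2) * X := by
          have := le_self_pow₀ hQ1 (show j + 2 ≠ 0 by lia)
          gcongr
  pow_le := by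
    have hX0 : 0 < X := by linarith
    calc ((Q * d : ℕ) : ℝ) ^ (j + 2) = (Q : ℝ) ^ (j + 2) * (d : ℝ) ^ (j + 2) := by
          push_cast
          ring
      _ ≤ (Q : ℝ) ^ (j + 2) * (X ^ (1 / (16 * ((j : ℝ) + 2)))) ^ (j + 2) := by gcongr
      _ = (Q : ℝ) ^ (j + 2) * X ^ (1 / 16 : ℝ) := by
          rw [← Real.rpow_mul_natCast hX0.le]
          congr 2
          push_cast
          field_simp
      _ ≤ 2 * (Q : ℝ) ^ (j + 2) * X ^ (1 / 16 : ℝ) := by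
          gcongr
          exact le_mul_of_one_le_left (by positivity) one_le_two

section Progression

variable {g : Polynomial ℤ} {D : ℕ} {t : ℤ} {α : ℝ}

/-- The polynomial `α * g (D * x + t)` with real coefficients, whose values at the integers are the
phases of the exponential sum of `α * g` along the progression `D * m + t`. -/
noncomputable def progressionPhase (g : Polynomial ℤ) (α : ℝ) (D : ℕ) (t : ℤ) : Polynomial ℝ :=
  .C α * (g.map (Int.castRingHom ℝ)).comp (.C (D : ℝ) * .X + .C (t : ℝ))

lemma eval_progressionPhase (m : ℤ) :
    (progressionPhase g α D t).eval (m : ℝ) = (g.eval (D * m + t) : ℤ) * α := by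
  have eval_linear : (.C (D : ℝ) * .X + .C (t : ℝ) : Polynomial ℝ).eval (m : ℝ) =
      Int.castRingHom ℝ (D * m + t) := by simp
  rw [progressionPhase, Polynomial.eval_mul, Polynomial.eval_C, Polynomial.eval_comp, eval_linear,
    Polynomial.eval_map, Polynomial.eval₂_hom, eq_intCast, mul_comm]

lemma natDegree_progressionPhase_le (hD : 0 < D) :
    (progressionPhase g α D t).natDegree ≤ g.natDegree := by
  refine (Polynomial.natDegree_C_mul_le _ _).trans ?_
  rw [Polynomial.natDegree_comp, Polynomial.natDegree_linear (Nat.cast_ne_zero.mpr hD.ne'), mul_one]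
  exact Polynomial.natDegree_map_le

lemma coeff_natDegree_progressionPhase (hD : 0 < D) :
    (progressionPhase g α D t).coeff g.natDegree =
      α * (g.leadingCoeff * (D : ℝ) ^ g.natDegree) := by
  have hD0 : (D : ℝ) ≠ 0 := Nat.cast_ne_zero.mpr hD.ne'
  have natDegree_linear := Polynomial.natDegree_linear (b := (t : ℝ)) hD0
  have coeff_comp := Polynomial.coeff_comp_degree_mul_degree (p := g.map (Int.castRingHom ℝ))
    (q := .C (D : ℝ) * .X + .C (t : ℝ)) (by rw [natDegree_linear]; exact one_ne_zero)
  rw [natDegree_linear, mul_one, Polynomial.leadingCoeff_linear hD0,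
    Polynomial.natDegree_map_eq_of_injective (RingHom.injective_int _),
    Polynomial.leadingCoeff_map_of_injective (RingHom.injective_int _)] at coeff_comp
  rw [progressionPhase, Polynomial.coeff_C_mul, coeff_comp, eq_intCast]

lemma norm_sum_e_eval_progression_le {j N : ℕ} (hg : g.natDegree = j + 1) (hN : 0 < N) (hD : 0 < D)
    {u v : ℤ} (huv : v - u ≤ N) :
    ‖∑ m ∈ Ico u v, e ((g.eval (D * m + t) : ℤ) * α)‖ ≤ 2 * N *
      weylMean N j (((j + 1).factorial * g.leadingCoeff.natAbs * D ^ (j + 1) : ℕ) * α) ^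
        ((2 : ℝ) ^ j)⁻¹ := by
  have weyl := norm_sum_e_div_pow_le_weylMean hN j (φ := progressionPhase g α D t)
    ((natDegree_progressionPhase_le hD).trans hg.le) huv
  have coeff_eq : (progressionPhase g α D t).coeff (j + 1) =
      α * (g.leadingCoeff * D ^ (j + 1)) := by
    rw [← hg, coeff_natDegree_progressionPhase hD]
  have weylMean_eq : weylMean N j ((j + 1).factorial * (progressionPhase g α D t).coeff (j + 1)) =
      weylMean N j (((j + 1).factorial * g.leadingCoeff.natAbs * D ^ (j + 1) : ℕ) * α) := by
    rw [coeff_eq]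
    push_cast
    rw [Nat.cast_natAbs, Int.cast_abs]
    rcases abs_choice (g.leadingCoeff : ℝ) with h | h <;> rw [h]
    · congr 1
      ring
    · rw [← weylMean_neg]
      congr 1
      ring
  simp only [eval_progressionPhase, weylMean_eq] at weyl
  have : (0 : ℝ) < N := Nat.cast_pos.mpr hN
  rw [← div_le_iff₀' (by positivity)]
  refine (Real.le_rpow_inv_iff_of_pos (by positivity) (weylMean_nonneg _ _ _)
    (by positivity)).mpr ?_
  exact_mod_cast weyl

end Progression

lemma gcd_mul_pow_le {r Q : ℕ} (hr : 0 < r) (hQ : 0 < Q) (d k : ℕ) :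
    r.gcd ((Q * d) ^ k) ≤ Q ^ k * r.gcd d ^ k := by
  have : 0 < r.gcd d := Nat.gcd_pos_of_pos_left _ hr
  refine Nat.le_of_dvd (by positivity) ?_
  rw [mul_pow]
  exact (Nat.gcd_mul_right_dvd_mul_gcd r (Q ^ k) (d ^ k)).trans
    (mul_dvd_mul (Nat.gcd_dvd_right _ _) (gcd_pow_right_dvd_pow_gcd (a := r) (b := d) (k := k)))

lemma rpow_two_mul_le {P C ρ G R θ : ℝ} {k : ℕ} (hP : 0 ≤ P) (hC : 1 ≤ C) (hρ : 0 ≤ ρ) (hG : 1 ≤ G)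
    (hR : 0 < R) (hk : 0 < k) (hθ : 0 ≤ θ) (hkθ : k * (2 * θ) ≤ 1)
    (h : P ≤ C * (ρ ^ (1 / 2 : ℝ) + (G ^ k / R) ^ (3 / 4 : ℝ))) :
    P ^ (2 * θ) ≤ C * (ρ ^ θ + G * R ^ (-(3 / 2 * θ))) := by
  have hk1 : (1 : ℝ) ≤ k := Nat.one_le_cast.mpr hk
  have hθ1 : 2 * θ ≤ 1 := (le_mul_of_one_le_left (by positivity) hk1).trans hkθ
  calc P ^ (2 * θ) ≤ (C * (ρ ^ (1 / 2 : ℝ) + (G ^ k / R) ^ (3 / 4 : ℝ))) ^ (2 * θ) := by gcongr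
    _ = C ^ (2 * θ) * (ρ ^ (1 / 2 : ℝ) + (G ^ k / R) ^ (3 / 4 : ℝ)) ^ (2 * θ) :=
        Real.mul_rpow (by positivity) (by positivity)
    _ ≤ C * ((ρ ^ (1 / 2 : ℝ)) ^ (2 * θ) + ((G ^ k / R) ^ (3 / 4 : ℝ)) ^ (2 * θ)) :=
        mul_le_mul (Real.rpow_le_self_of_one_le hC hθ1)
          (Real.rpow_add_le_add_rpow (by positivity) (by positivity) (by positivity) hθ1)
          (by positivity) (by positivity)
    _ = C * (ρ ^ θ + G ^ (3 / 4 * (k * (2 * θ))) * R ^ (-(3 / 2 * θ))) := by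
        rw [← Real.rpow_mul hρ, ← Real.rpow_mul (by positivity),
          Real.div_rpow (by positivity) hR.le, ← Real.rpow_natCast G k,
          ← Real.rpow_mul (by positivity), Real.rpow_neg hR.le, div_eq_mul_inv]
        ring_nf
    _ ≤ C * (ρ ^ θ + G * R ^ (-(3 / 2 * θ))) := by
        gcongr
        exact Real.rpow_le_self_of_one_le hG (by linarith)

lemma exists_weylMean_le_of_approx_of_mul {c : ℝ} (hc : 1 ≤ c) {Q : ℕ} (hQ : 0 < Q) (j : ℕ) :
    ∃ C : ℝ, 1 ≤ C ∧ ∀ {X ρ : ℝ}, 1 ≤ X → ρ ≤ 1 → ∀ {α : ℝ} {a : ℤ} {q m : ℕ}, 0 < q → 0 < m →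
      IsCoprime a q → |α - a / q| ≤ 1 / (q : ℝ) ^ 2 →
      m / q ≤ c * ρ → m / X ≤ c * ρ → q / X ^ (j + 1) ≤ c * ρ →
      ∃ (r : ℕ) (R : ℝ), 0 < r ∧ r ≤ R ∧ 1 ≤ C * ρ * R ∧
        ∀ {N d : ℕ}, IsShortStep c X j N (Q * d) →
          weylMean N j ((m * (Q * d) ^ (j + 1) : ℕ) * α) ≤
            C * (ρ ^ (1 / 2 : ℝ) + ((r.gcd d : ℝ) ^ (j + 1) / R) ^ (3 / 4 : ℝ)) := by
  have hQ1 : (1 : ℝ) ≤ (Q : ℝ) ^ (j + 1) := one_le_pow₀ (Nat.one_le_cast.mpr hQ)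
  obtain ⟨C, hC, approx⟩ := exists_weylMean_le_of_approx hc j
  refine ⟨C * (Q : ℝ) ^ (j + 1) + 1, le_add_of_nonneg_left (by positivity),
    fun {X ρ} hX hρ α a q m hq hm ha hα hmq hmX hqX => ?_⟩
  have C_le : C ≤ C * (Q : ℝ) ^ (j + 1) + 1 := by nlinarith
  obtain ⟨r, R, hr, hrR, hρR, weylMean_le⟩ := approx hX hρ hq hm ha hα hmq hmX hqX
  have hR : 0 < R := (Nat.cast_pos.mpr hr).trans_le hrR
  have hρ0 : 0 < ρ := by
    by_contra! h
    nlinarith [mul_pos hC hR]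
  refine ⟨r, R, hr, hrR, hρR.trans (by gcongr), fun {N d} h => (weylMean_le h).trans ?_⟩
  have gcd_le : (r.gcd ((Q * d) ^ (j + 1)) : ℝ) ≤ (Q : ℝ) ^ (j + 1) * (r.gcd d : ℝ) ^ (j + 1) := by
    exact_mod_cast gcd_mul_pow_le hr hQ d (j + 1)
  have rpow_le : ((r.gcd ((Q * d) ^ (j + 1)) : ℝ) / R) ^ (3 / 4 : ℝ) ≤
      (Q : ℝ) ^ (j + 1) * ((r.gcd d : ℝ) ^ (j + 1) / R) ^ (3 / 4 : ℝ) := calc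
    _ ≤ ((Q : ℝ) ^ (j + 1) * ((r.gcd d : ℝ) ^ (j + 1) / R)) ^ (3 / 4 : ℝ) := by
      rw [mul_div_assoc']
      gcongr
    _ = ((Q : ℝ) ^ (j + 1)) ^ (3 / 4 : ℝ) * ((r.gcd d : ℝ) ^ (j + 1) / R) ^ (3 / 4 : ℝ) :=
      Real.mul_rpow (by positivity) (by positivity)
    _ ≤ _ := by
      gcongr
      exact Real.rpow_le_self_of_one_le hQ1 (by norm_num)
  rw [mul_add]
  refine add_le_add (by gcongr) ((mul_le_mul_of_nonneg_left rpow_le hC.le).trans ?_)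
  rw [← mul_assoc]
  gcongr
  exact le_add_of_nonneg_right zero_le_one

lemma norm_sum_e_eval_le_of_weylMean_le {c C X ρ G R θ α : ℝ} {j N Q d : ℕ} {g : Polynomial ℤ}
    (hg : g.natDegree = j + 1) (hX : 1 ≤ X) (h : IsShortStep c X j N (Q * d)) (hC : 1 ≤ C)
    (hρ : 0 ≤ ρ) (hG : 1 ≤ G) (hR : 0 < R) (hθ : 2 * θ = ((2 : ℝ) ^ j)⁻¹)
    (hP : weylMean N j (((j + 1).factorial * g.leadingCoeff.natAbs * (Q * d) ^ (j + 1) : ℕ) * α) ≤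
      C * (ρ ^ (1 / 2 : ℝ) + (G ^ (j + 1) / R) ^ (3 / 4 : ℝ)))
    (t : ℤ) {u v : ℤ} (huv : v - u ≤ N) :
    ‖∑ m ∈ Ico u v, e ((g.eval ((Q * d : ℕ) * m + t) : ℤ) * α)‖ ≤
      2 * c * C * X * (ρ ^ θ * (1 / d) + R ^ (-(3 / 2 * θ)) * (G / d)) := by
  obtain ⟨hQ, hd⟩ : 0 < Q ∧ 0 < d := CanonicallyOrderedAdd.mul_pos.mp (h.step_pos hX)
  have hd0 : (0 : ℝ) < d := Nat.cast_pos.mpr hd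
  have hkθ : ((j + 1 : ℕ) : ℝ) * (2 * θ) ≤ 1 := by
    rw [hθ, ← div_eq_mul_inv, div_le_one (by positivity)]
    exact_mod_cast Nat.lt_two_pow_self (n := j)
  have hθ0 : 0 ≤ θ := by
    have : 0 < ((2 : ℝ) ^ j)⁻¹ := by positivity
    linarith
  have N_le : (N : ℝ) ≤ c * X / d := by
    rw [le_div_iff₀ hd0]
    refine le_trans ?_ h.mul_le
    gcongr
    exact Nat.le_mul_of_pos_left d hQ
  calc ‖∑ m ∈ Ico u v, e ((g.eval ((Q * d : ℕ) * m + t) : ℤ) * α)‖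
      ≤ 2 * N * weylMean N j
          (((j + 1).factorial * g.leadingCoeff.natAbs * (Q * d) ^ (j + 1) : ℕ) * α) ^ (2 * θ) :=
        hθ ▸ norm_sum_e_eval_progression_le hg (h.length_pos hX) (h.step_pos hX) huv
    _ ≤ 2 * N * (C * (ρ ^ θ + G * R ^ (-(3 / 2 * θ)))) := by
        gcongr
        exact rpow_two_mul_le (weylMean_nonneg _ _ _) hC hρ hG hR j.succ_pos hθ0 hkθ hP
    _ ≤ 2 * (c * X / d) * (C * (ρ ^ θ + G * R ^ (-(3 / 2 * θ)))) := by gcongr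
    _ = _ := by ring

lemma exists_norm_sum_e_eval_progression_le {Q : ℕ} (hQ : 0 < Q) (j : ℕ) {θ : ℝ}
    (hθ : 2 * θ = ((2 : ℝ) ^ j)⁻¹) :
    ∃ C : ℝ, 1 ≤ C ∧ ∀ {g : Polynomial ℤ}, g.natDegree = j + 1 → ∀ {X ρ : ℝ}, 1 ≤ X → ρ ≤ 1 →
      ∀ {α : ℝ} {a : ℤ} {q : ℕ}, 0 < q → IsCoprime a q → |α - a / q| ≤ 1 / (q : ℝ) ^ 2 →
      |(g.leadingCoeff : ℝ)| / q ≤ ρ → |(g.leadingCoeff : ℝ)| / X ≤ ρ → q / X ^ (j + 1) ≤ ρ →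
      ∃ (r : ℕ) (R : ℝ), 0 < r ∧ r ≤ R ∧ 1 ≤ C * ρ * R ∧
        ∀ d : ℕ, 0 < d → (d : ℝ) ≤ X ^ (1 / (16 * ((j : ℝ) + 2))) →
        ∀ t u v : ℤ, v - u ≤ (⌊X⌋₊ / (Q * d) + 1 : ℕ) →
          ‖∑ m ∈ Ico u v, e ((g.eval ((Q * d : ℕ) * m + t) : ℤ) * α)‖ ≤
            C * X * (ρ ^ θ * (1 / d) + R ^ (-(3 / 2 * θ)) * (r.gcd d / d)) := by
  obtain ⟨c, hc, factorial_le, step_le⟩ : ∃ c : ℝ, 1 ≤ c ∧ (j + 1).factorial ≤ c ∧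
      2 * (Q : ℝ) ^ (j + 2) ≤ c :=
    ⟨(j + 1).factorial + 2 * (Q : ℝ) ^ (j + 2),
      le_add_of_le_of_nonneg (Nat.one_le_cast.mpr (j + 1).factorial_pos) (by positivity),
      le_add_of_nonneg_right (by positivity), le_add_of_nonneg_left (by positivity)⟩
  obtain ⟨C, hC, approx⟩ := exists_weylMean_le_of_approx_of_mul hc hQ j
  have C_le : C ≤ 2 * c * C := le_mul_of_one_le_left (by linarith) (by linarith)
  refine ⟨2 * c * C, hC.trans C_le, fun {g} hg X ρ hX hρ α a q hq ha hα hgq hgX hqX => ?_⟩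
  have hg0 : 0 < g.leadingCoeff.natAbs := Int.natAbs_pos.mpr <|
    Polynomial.leadingCoeff_ne_zero.mpr <| Polynomial.ne_zero_of_natDegree_gt (n := j) (by lia)
  have hρ0 : 0 ≤ ρ := le_trans (by positivity) hgq
  have scale {y : ℝ} (hy : |(g.leadingCoeff : ℝ)| / y ≤ ρ) :
      ((j + 1).factorial * g.leadingCoeff.natAbs : ℕ) / y ≤ c * ρ := by
    rw [Nat.cast_mul, Nat.cast_natAbs, Int.cast_abs, mul_div_assoc]
    exact (mul_le_mul_of_nonneg_left hy (Nat.cast_nonneg _)).trans (by gcongr)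
  obtain ⟨r, R, hr, hrR, hρR, weylMean_le⟩ :=
    approx hX hρ hq (Nat.mul_pos (j + 1).factorial_pos hg0) ha hα (scale hgq) (scale hgX)
      (hqX.trans (le_mul_of_one_le_left hρ0 hc))
  have hR : 0 < R := (Nat.cast_pos.mpr hr).trans_le hrR
  refine ⟨r, R, hr, hrR, hρR.trans (by gcongr), fun d hd hdX t u v huv => ?_⟩
  have short := (isShortStep_progression hQ hd hX hdX).mono (by linarith) step_le
  exact norm_sum_e_eval_le_of_weylMean_le hg hX short hC hρ0
    (Nat.one_le_cast.mpr (Nat.gcd_pos_of_pos_left d hr)) hR hθ (weylMean_le short) t huv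
end

section

open Finset Real

/-! ### Summation over the sieving moduli -/

lemma two_pow_card_primeFactors_le_card_divisors {n : ℕ} (hn : n ≠ 0) :
    2 ^ #n.primeFactors ≤ #n.divisors := by
  rw [Nat.card_divisors hn, ← prod_const]
  refine prod_le_prod' fun p hp => ?_
  have := (Nat.prime_of_mem_primeFactors hp).factorization_pos_of_dvd hn
    (Nat.dvd_of_mem_primeFactors hp)
  lia

lemma gcd_prod_le_prod_gcd {r : ℕ} (hr : 0 < r) (S : Finset ℕ) :
    r.gcd (∏ p ∈ S, p) ≤ ∏ p ∈ S, r.gcd p := by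
  induction S using Finset.induction_on with
  | empty => simp
  | insert p S hp ih =>
    rw [prod_insert hp, prod_insert hp]
    have : 0 < r.gcd p * r.gcd (∏ p ∈ S, p) :=
      Nat.mul_pos (Nat.gcd_pos_of_pos_left _ hr) (Nat.gcd_pos_of_pos_left _ hr)
    exact (Nat.le_of_dvd this (Nat.gcd_mul_right_dvd_mul_gcd r p _)).trans
      (Nat.mul_le_mul_left _ ih)

lemma exists_prod_ite_dvd_le (κ : ℕ) {ε : ℝ} (hε : 0 < ε) :
    ∃ C : ℝ, 1 ≤ C ∧ ∀ (k : ℕ) (Y : ℝ) {r : ℕ}, 0 < r →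
      ∏ p ∈ primesIoc k Y, (if p ∣ r then (κ : ℝ) + 1 else 1) ≤ C * (r : ℝ) ^ ε := by
  obtain ⟨C, hC, card_divisors_le⟩ := exists_card_divisors_pow_le_mul_rpow hε κ
  refine ⟨C, hC, fun k Y r hr => ?_⟩
  have subset_primeFactors : {p ∈ primesIoc k Y | p ∣ r} ⊆ r.primeFactors := fun p hp => by
    rw [mem_filter, mem_primesIoc] at hp
    exact Nat.mem_primeFactors.mpr ⟨hp.1.1, hp.2, hr.ne'⟩
  calc ∏ p ∈ primesIoc k Y, (if p ∣ r then (κ : ℝ) + 1 else 1)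
      = ((κ : ℝ) + 1) ^ #{p ∈ primesIoc k Y | p ∣ r} := by
        rw [prod_ite, prod_const_one, mul_one, prod_const]
    _ ≤ ((κ : ℝ) + 1) ^ #r.primeFactors :=
        pow_le_pow_right₀ (by linarith [κ.cast_nonneg (α := ℝ)]) (card_le_card subset_primeFactors)
    _ ≤ (2 ^ κ) ^ #r.primeFactors := by
        gcongr
        exact_mod_cast Nat.succ_le_of_lt κ.lt_two_pow_self
    _ = ((2 ^ #r.primeFactors : ℕ) : ℝ) ^ κ := by rw [← pow_mul, mul_comm, pow_mul]; norm_cast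
    _ ≤ (#r.divisors : ℝ) ^ κ := by
        gcongr
        exact two_pow_card_primeFactors_le_card_divisors hr.ne'
    _ ≤ C * (r : ℝ) ^ ε := card_divisors_le r hr.ne'

lemma one_add_mul_gcd_div_le (κ : ℕ) {p : ℕ} (hp : p.Prime) (r : ℕ) :
    1 + κ * ((r.gcd p : ℝ) / p) ≤ (1 + κ * (p : ℝ)⁻¹) * (if p ∣ r then (κ : ℝ) + 1 else 1) := by
  split_ifs with hdvd
  · have : (p : ℝ) ≠ 0 := Nat.cast_ne_zero.mpr hp.ne_zero
    rw [Nat.gcd_eq_right hdvd, div_self this, mul_one, add_comm]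
    exact le_mul_of_one_le_left (by positivity) (le_add_of_nonneg_right (by positivity))
  · rw [Nat.gcd_comm, (hp.coprime_iff_not_dvd.mpr hdvd : p.gcd r = 1)]
    simp

lemma exists_sum_powerset_primesIoc_gcd_le (κ : ℕ) {ε : ℝ} (hε : 0 < ε) :
    ∃ C : ℝ, 0 < C ∧ ∀ (k : ℕ) {r : ℕ}, 0 < r → ∀ {Y : ℝ}, 2 ≤ Y →
      ∑ S ∈ (primesIoc k Y).powerset,
          (κ : ℝ) ^ #S * ((r.gcd (∏ p ∈ S, p) : ℝ) / (∏ p ∈ S, p : ℕ)) ≤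
        C * log Y ^ (2 * κ) * (r : ℝ) ^ ε := by
  obtain ⟨C₁, hC₁, prod_le⟩ := exists_prod_one_add_rpow_primesIoc_le κ le_rfl
  obtain ⟨C₂, hC₂, prod_ite_le⟩ := exists_prod_ite_dvd_le κ hε
  refine ⟨C₁ * C₂, by positivity, fun k r hr Y hY => ?_⟩
  have : 0 ≤ log Y := log_nonneg (by linarith)
  calc ∑ S ∈ (primesIoc k Y).powerset,
        (κ : ℝ) ^ #S * ((r.gcd (∏ p ∈ S, p) : ℝ) / (∏ p ∈ S, p : ℕ))
      ≤ ∑ S ∈ (primesIoc k Y).powerset, (κ : ℝ) ^ #S * ∏ p ∈ S, ((r.gcd p : ℝ) / p) := by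
        refine sum_le_sum fun S _ => ?_
        rw [prod_div_distrib, Nat.cast_prod]
        gcongr
        exact_mod_cast gcd_prod_le_prod_gcd hr S
    _ = ∏ p ∈ primesIoc k Y, (1 + κ * ((r.gcd p : ℝ) / p)) := sum_powerset_pow_card_mul_prod ..
    _ ≤ ∏ p ∈ primesIoc k Y,
          ((1 + κ * (p : ℝ) ^ (0 / log Y - 1)) * (if p ∣ r then (κ : ℝ) + 1 else 1)) := by
        refine prod_le_prod (fun p _ => by positivity) fun p hp => ?_
        rw [zero_div, zero_sub, rpow_neg_one]
        exact one_add_mul_gcd_div_le κ (mem_primesIoc.mp hp).1 r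
    _ ≤ (C₁ * log Y ^ (2 * κ)) * (C₂ * (r : ℝ) ^ ε) := by
        rw [prod_mul_distrib]
        exact mul_le_mul (prod_le k Y hY) (prod_ite_le k Y hr)
          (prod_nonneg fun p _ => by split_ifs <;> positivity) (by positivity)
    _ = C₁ * C₂ * log Y ^ (2 * κ) * (r : ℝ) ^ ε := by ring

lemma rpow_neg_mul_rpow_le {θ C ρ r R : ℝ} (hθ₀ : 0 ≤ θ) (hθ₁ : θ ≤ 1) (hC : 1 ≤ C) (hρ : 0 ≤ ρ)
    (hr : 0 < r) (hrR : r ≤ R) (hR : 1 ≤ C * ρ * R) :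
    R ^ (-(3 / 2 * θ)) * r ^ (θ / 2) ≤ C * ρ ^ θ := by
  have hR₀ : 0 < R := hr.trans_le hrR
  have inv_le : R⁻¹ ≤ C * ρ := by rwa [inv_le_iff_one_le_mul₀ hR₀]
  calc R ^ (-(3 / 2 * θ)) * r ^ (θ / 2) ≤ R ^ (-(3 / 2 * θ)) * R ^ (θ / 2) := by gcongr
    _ = R⁻¹ ^ θ := by
        rw [← rpow_add hR₀, inv_rpow hR₀.le, ← rpow_neg hR₀.le]
        ring_nf
    _ ≤ (C * ρ) ^ θ := by gcongr
    _ = C ^ θ * ρ ^ θ := mul_rpow (by linarith) hρ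
    _ ≤ C * ρ ^ θ := by gcongr; exact rpow_le_self_of_one_le hC hθ₁

lemma exists_sum_powerset_primesIoc_progression_bound_le (κ : ℕ) {θ : ℝ} (hθ₀ : 0 < θ)
    (hθ₁ : θ ≤ 1) :
    ∃ D : ℝ, 0 < D ∧ ∀ (k : ℕ) {C ρ R Y : ℝ} {r : ℕ}, 1 ≤ C → 0 ≤ ρ → 0 < r → r ≤ R →
      1 ≤ C * ρ * R → 2 ≤ Y →
      ∑ S ∈ (primesIoc k Y).powerset, (κ : ℝ) ^ #S *
          (ρ ^ θ * (1 / (∏ p ∈ S, p : ℕ)) +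
            R ^ (-(3 / 2 * θ)) * ((r.gcd (∏ p ∈ S, p) : ℝ) / (∏ p ∈ S, p : ℕ))) ≤
        D * C * log Y ^ (2 * κ) * ρ ^ θ := by
  obtain ⟨D, hD, sum_gcd_le⟩ := exists_sum_powerset_primesIoc_gcd_le κ (half_pos hθ₀)
  refine ⟨2 * D, by positivity, fun k C ρ R Y r hC hρ hr hrR hR hY => ?_⟩
  have hr' : (0 : ℝ) < r := Nat.cast_pos.mpr hr
  have : 0 < R := hr'.trans_le hrR
  have : 0 ≤ log Y := log_nonneg (by linarith)
  have sum_inv_le : ∑ S ∈ (primesIoc k Y).powerset, (κ : ℝ) ^ #S * (1 / (∏ p ∈ S, p : ℕ)) ≤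
      D * log Y ^ (2 * κ) := by simpa using sum_gcd_le k one_pos hY
  set L := log Y ^ (2 * κ)
  calc _ = ρ ^ θ * ∑ S ∈ (primesIoc k Y).powerset, (κ : ℝ) ^ #S * (1 / (∏ p ∈ S, p : ℕ)) +
        R ^ (-(3 / 2 * θ)) * ∑ S ∈ (primesIoc k Y).powerset,
          (κ : ℝ) ^ #S * ((r.gcd (∏ p ∈ S, p) : ℝ) / (∏ p ∈ S, p : ℕ)) := by
        rw [mul_sum, mul_sum, ← sum_add_distrib]
        exact sum_congr rfl fun S _ => by ring
    _ ≤ ρ ^ θ * (D * L) + R ^ (-(3 / 2 * θ)) * (D * L * (r : ℝ) ^ (θ / 2)) := by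
        gcongr
        exact sum_gcd_le k hr hY
    _ = D * L * (ρ ^ θ + R ^ (-(3 / 2 * θ)) * (r : ℝ) ^ (θ / 2)) := by ring
    _ ≤ D * L * (C * ρ ^ θ + C * ρ ^ θ) := by
        gcongr _ * (?_ + ?_)
        · exact le_mul_of_one_le_left (by positivity) hC
        · exact rpow_neg_mul_rpow_le hθ₀.le hθ₁ hC hρ hr' hrR hR
    _ = 2 * D * C * L * ρ ^ θ := by ring

end

section

open Finset Real

/-! ### Exponential sums over `W(g;Y)` -/

lemma exp_neg_log_div_div_log {X Y : ℝ} (hX : 0 < X) (hY : 1 < Y) :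
    exp (-log (X / Y) / log Y) = exp 1 * exp (-log X / log Y) := by
  have : log Y ≠ 0 := (log_pos hY).ne'
  rw [← exp_add, log_div hX.ne' (by linarith)]
  congr 1
  field_simp
  ring

lemma one_le_inv_log_two_mul_log {Y : ℝ} (hY : 2 ≤ Y) : 1 ≤ (log 2)⁻¹ * log Y := by
  rw [inv_mul_eq_div, one_le_div (log_pos one_lt_two)]
  exact log_le_log two_pos hY

open scoped Classical in
lemma norm_sum_e_filter_le {X : ℝ} (hX : 0 ≤ X) (P : ℤ → Prop) (f : ℤ → ℝ) :
    ‖∑ n ∈ Icc (1 : ℤ) ⌊X⌋₊ with P n, e (f n)‖ ≤ X :=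
  calc ‖∑ n ∈ Icc (1 : ℤ) ⌊X⌋₊ with P n, e (f n)‖
      ≤ #{n ∈ Icc (1 : ℤ) ⌊X⌋₊ | P n} := by
        simpa [norm_e] using norm_sum_le {n ∈ Icc (1 : ℤ) ⌊X⌋₊ | P n} fun n => e (f n)
    _ ≤ #(Icc (1 : ℤ) ⌊X⌋₊) := Nat.cast_le.mpr (card_filter_le _ _)
    _ = ⌊X⌋₊ := by simp
    _ ≤ X := Nat.floor_le hX

open scoped Classical Nat in
lemma exists_norm_sum_e_eval_WSet_le_sum_powerset (j : ℕ) {θ : ℝ}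
    (hθ : 2 * θ = ((2 : ℝ) ^ j)⁻¹) :
    ∃ C : ℝ, 1 ≤ C ∧ ∀ {g : Polynomial ℤ}, g.natDegree = j + 1 →
      ∀ {X Y ρ : ℝ}, 2 ≤ Y → Y ≤ X → ρ ≤ 1 →
      ∀ {α : ℝ} {a : ℤ} {q : ℕ}, 0 < q → IsCoprime a q → |α - a / q| ≤ 1 / (q : ℝ) ^ 2 →
      |(g.leadingCoeff : ℝ)| / q ≤ ρ → |(g.leadingCoeff : ℝ)| / X ≤ ρ → q / X ^ (j + 1) ≤ ρ →
      ∃ (r : ℕ) (R : ℝ), 0 < r ∧ r ≤ R ∧ 1 ≤ C * ρ * R ∧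
        ‖∑ n ∈ Icc (1 : ℤ) ⌊X⌋₊ with n ∈ WSet g Y, e ((g.eval n : ℤ) * α)‖ ≤
          ((j + 1)! ^ 2 : ℕ) * (C * X) * ∑ S ∈ (primesIoc (j + 1) Y).powerset, (j : ℝ) ^ #S *
            (ρ ^ θ * (1 / (∏ p ∈ S, p : ℕ)) +
              R ^ (-(3 / 2 * θ)) * ((r.gcd (∏ p ∈ S, p) : ℝ) / (∏ p ∈ S, p : ℕ))) +
          C * log Y ^ (2 * j) * X * exp (-log X / log Y) := by
  obtain ⟨C₁, hC₁, progression⟩ :=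
    exists_norm_sum_e_eval_progression_le (Q := (j + 1)! ^ 2) (by positivity) j hθ
  have one_le_B : 1 ≤ 16 * ((j : ℝ) + 2) := by linarith [j.cast_nonneg (α := ℝ)]
  obtain ⟨C₂, hC₂, sieve⟩ := exists_norm_sum_WSet_le (k := j + 1) j.succ_pos one_le_B
  have C₁_le : C₁ ≤ C₁ + C₂ * exp 1 := le_add_of_nonneg_right (by positivity)
  refine ⟨C₁ + C₂ * exp 1, hC₁.trans C₁_le,
    fun {g} hg {X Y ρ} hY hYX hρ {α a q} hq haq hα hρq hρX hρqX => ?_⟩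
  have : 0 ≤ ρ := le_trans (by positivity) hρq
  have : 0 < X := by linarith
  have : 0 ≤ log Y := log_nonneg (by linarith)
  have one_le_Z : 1 ≤ X / Y := (one_le_div (by linarith)).mpr hYX
  have Z_le_X : X / Y ≤ X := div_le_self (by linarith) (by linarith)
  obtain ⟨r, R, hr, hrR, hR, sum_progression_le⟩ :=
    progression hg (one_le_Z.trans Z_le_X) hρ hq haq hα hρq hρX hρqX
  have : 0 < R := (Nat.cast_pos.mpr hr).trans_le hrR
  refine ⟨r, R, hr, hrR, hR.trans (by gcongr), ?_⟩
  have sieve_bound := sieve hg hY one_le_Z (mul_div_cancel₀ X (by linarith : Y ≠ 0)).le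
    (F := fun n => e ((g.eval n : ℤ) * α)) (fun n => (norm_e _).le)
    (E := fun d => C₁ * X * (ρ ^ θ * (1 / d) + R ^ (-(3 / 2 * θ)) * (r.gcd d / d)))
    (fun d => by positivity)
    fun d hd hdZ => sum_progression_le d hd <| (Nat.le_floor_iff (by positivity)).mp hdZ |>.trans <|
      rpow_le_rpow (by linarith) Z_le_X (by positivity)
  rw [exp_neg_log_div_div_log (by linarith) (by linarith), Nat.add_sub_cancel] at sieve_bound
  refine sieve_bound.trans (add_le_add ?_ ?_)
  · refine (sum_le_sum_of_subset_of_nonneg (filter_subset _ _) fun S _ _ => by positivity).trans ?_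
    rw [mul_sum]
    refine sum_le_sum fun S _ => ?_
    rw [mul_assoc, mul_left_comm ((j : ℝ) ^ #S), ← mul_assoc]
    gcongr
  · calc C₂ * log Y ^ (2 * j) * X * (exp 1 * exp (-log X / log Y))
        = C₂ * exp 1 * log Y ^ (2 * j) * X * exp (-log X / log Y) := by ring
      _ ≤ _ := by gcongr; linarith

open scoped Classical Nat in
lemma exists_norm_sum_e_eval_WSet_le_of_le_one (j : ℕ) {θ : ℝ} (hθ : 2 * θ = ((2 : ℝ) ^ j)⁻¹) :
    ∃ C : ℝ, 0 < C ∧ ∀ {g : Polynomial ℤ}, g.natDegree = j + 1 →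
      ∀ {X Y ρ : ℝ}, 2 ≤ Y → Y ≤ X → ρ ≤ 1 →
      ∀ {α : ℝ} {a : ℤ} {q : ℕ}, 0 < q → IsCoprime a q → |α - a / q| ≤ 1 / (q : ℝ) ^ 2 →
      |(g.leadingCoeff : ℝ)| / q ≤ ρ → |(g.leadingCoeff : ℝ)| / X ≤ ρ → q / X ^ (j + 1) ≤ ρ →
      ‖∑ n ∈ Icc (1 : ℤ) ⌊X⌋₊ with n ∈ WSet g Y, e ((g.eval n : ℤ) * α)‖ ≤
        C * log Y ^ (2 * j) * X * (exp (-log X / log Y) + ρ ^ θ) := by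
  have hθ₀ : 0 < θ := by have := inv_pos.mpr (pow_pos two_pos j : (0 : ℝ) < 2 ^ j); linarith
  have hθ₁ : θ ≤ 1 := by linarith [inv_le_one_of_one_le₀ (one_le_pow₀ one_le_two : (1 : ℝ) ≤ 2 ^ j)]
  obtain ⟨C, hC, norm_sum_le_sum⟩ := exists_norm_sum_e_eval_WSet_le_sum_powerset j hθ
  obtain ⟨D, hD, sum_le⟩ := exists_sum_powerset_primesIoc_progression_bound_le j hθ₀ hθ₁
  set Q := (((j + 1)! ^ 2 : ℕ) : ℝ)
  refine ⟨C + Q * C ^ 2 * D, by positivity,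
    fun {g} hg {X Y ρ} hY hYX hρ {α a q} hq haq hα hρq hρX hρqX => ?_⟩
  obtain ⟨r, R, hr, hrR, hR, norm_le⟩ :=
    norm_sum_le_sum hg hY hYX hρ hq haq hα hρq hρX hρqX
  have hρ₀ : 0 ≤ ρ := le_trans (by positivity) hρq
  have : 0 ≤ X := by linarith
  have : 0 ≤ log Y := log_nonneg (by linarith)
  set L := log Y ^ (2 * j)
  calc ‖∑ n ∈ Icc (1 : ℤ) ⌊X⌋₊ with n ∈ WSet g Y, e ((g.eval n : ℤ) * α)‖
      ≤ Q * (C * X) * (D * C * L * ρ ^ θ) + C * L * X * exp (-log X / log Y) := by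
        refine norm_le.trans ?_
        gcongr
        exact sum_le (j + 1) hC hρ₀ hr hrR hR hY
    _ = C * L * X * exp (-log X / log Y) + Q * C ^ 2 * D * L * X * ρ ^ θ := by ring
    _ ≤ (C + Q * C ^ 2 * D) * L * X * exp (-log X / log Y) +
        (C + Q * C ^ 2 * D) * L * X * ρ ^ θ := by
        gcongr
        · exact le_add_of_nonneg_right (by positivity)
        · exact le_add_of_nonneg_left (by positivity)
    _ = _ := by ring

lemma cont_pos {g : Polynomial ℤ} (hg : 0 < g.natDegree) : 0 < cont g := by
  refine Nat.pos_of_ne_zero fun h => ?_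
  have leadingCoeff_eq_zero : g.leadingCoeff = 0 := Int.natAbs_eq_zero.mp <|
    Finset.gcd_eq_zero_iff.mp h g.natDegree (mem_Icc.mpr ⟨hg, le_rfl⟩)
  rw [Polynomial.leadingCoeff_eq_zero.mp leadingCoeff_eq_zero] at hg
  simp at hg

lemma log_pow_le_mul_log_rpow {m : ℕ} {s : ℝ} (hms : m ≤ s) {Y : ℝ} (hY : 2 ≤ Y) :
    log Y ^ m ≤ (log 2)⁻¹ ^ s * log Y ^ s := by
  have log_two_pos : 0 < log 2 := log_pos one_lt_two
  have log_Y_nonneg : 0 ≤ log Y := log_nonneg (by linarith)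
  have one_le_inv : 1 ≤ (log 2)⁻¹ := one_le_inv_iff₀.mpr ⟨log_two_pos, by linarith [log_two_lt_d9]⟩
  calc log Y ^ m ≤ ((log 2)⁻¹ * log Y) ^ (m : ℝ) := by
        rw [rpow_natCast]
        gcongr
        exact le_mul_of_one_le_left log_Y_nonneg one_le_inv
    _ ≤ ((log 2)⁻¹ * log Y) ^ s :=
        rpow_le_rpow_of_exponent_le (one_le_inv_log_two_mul_log hY) hms
    _ = (log 2)⁻¹ ^ s * log Y ^ s := mul_rpow (by positivity) log_Y_nonneg

lemma log_pow_two_mul_pred_le_mul_log_rpow (k : ℕ) {Y : ℝ} (hY : 2 ≤ Y) :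
    log Y ^ (2 * (k - 1)) ≤ (log 2)⁻¹ ^ (exp 1 * k) * log Y ^ (exp 1 * k) := by
  refine log_pow_le_mul_log_rpow ?_ hY
  calc ((2 * (k - 1) : ℕ) : ℝ) ≤ 2 * k := by exact_mod_cast (by lia : 2 * (k - 1) ≤ 2 * k)
    _ ≤ exp 1 * k := by gcongr; linarith [exp_one_gt_d9]

lemma div_add_div_add_div_pow_le {A q X Z : ℝ} (hA : 1 ≤ A) (hq : 1 ≤ q) (hX : 4 ≤ X) (hZ : 1 ≤ Z)
    (k m : ℕ) :
    A / q + A / X + q / X ^ k ≤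
      A * log (A * q * X) ^ m * (q⁻¹ + Z / X + q * Z ^ k / (A * X ^ k)) := by
  have one_le_log : 1 ≤ log (A * q * X) := by
    rw [le_log_iff_exp_le (by positivity)]
    linarith [exp_one_lt_d9, le_mul_of_one_le_left (by linarith : 0 ≤ X)
      (one_le_mul_of_one_le_of_one_le hA hq)]
  calc A / q + A / X + q / X ^ k
      = A * 1 * (q⁻¹ + 1 / X + q * 1 / (A * X ^ k)) := by field_simp
    _ ≤ A * log (A * q * X) ^ m * (q⁻¹ + Z / X + q * Z ^ k / (A * X ^ k)) := by
        gcongr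
        · exact one_le_pow₀ one_le_log
        · exact one_le_pow₀ hZ

open scoped Classical in
-- The coercion of `Finset.Icc 1 ⌊X⌋₊` to `Finset ℤ` in `stmt11` elaborates to this monadic lift.
lemma natCast_lift_Icc_one (N : ℕ) :
    (do let n ← Icc 1 N; pure (n : ℤ) : Finset ℤ) = Icc (1 : ℤ) N := by
  ext n
  simp only [bind_def, pure_def, mem_sup, mem_singleton, mem_Icc]
  constructor
  · rintro ⟨i, hi, rfl⟩
    lia
  · rintro ⟨h₁, h₂⟩
    exact ⟨n.toNat, by lia, by lia⟩

open scoped Classical in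
theorem stmt11_general (k : ℕ) (hk : 0 < k) :
    ∃ C : ℝ, 0 < C ∧ ∀ g : Polynomial ℤ, g.natDegree = k →
      ∀ X Y : ℝ, 2 ≤ Y → Y ≤ X →
      ∀ (a : ℤ) (q : ℕ), 0 < q → IsCoprime a q →
      ∀ α : ℝ, |α - a / q| ≤ 1 / (q : ℝ) ^ 2 →
      ‖∑ n ∈ Icc (1 : ℤ) ⌊X⌋₊ with n ∈ WSet g Y, e ((g.eval n : ℤ) * α)‖ ≤
        C * log Y ^ (2 * (k - 1)) * X *
          (exp (-log X / log Y) +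
            (|(g.leadingCoeff : ℝ)| / q + |(g.leadingCoeff : ℝ)| / X + q / X ^ k) ^
              ((2 : ℝ) ^ (-(k : ℝ)))) := by
  obtain ⟨j, rfl⟩ : ∃ j, k = j + 1 := ⟨k - 1, (Nat.sub_add_cancel hk).symm⟩
  set θ : ℝ := 2 ^ (-((j + 1 : ℕ) : ℝ)) with θ_def
  have hθ : 2 * θ = ((2 : ℝ) ^ j)⁻¹ := by
    rw [θ_def, rpow_neg two_pos.le, rpow_natCast, pow_succ']
    field_simp
  obtain ⟨C, hC, norm_sum_le_of_le_one⟩ := exists_norm_sum_e_eval_WSet_le_of_le_one j hθ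
  refine ⟨C + (log 2)⁻¹ ^ (2 * j), by positivity, fun g hg X Y hY hYX a q hq haq α hα => ?_⟩
  have : 0 < X := by linarith
  have : 0 ≤ log Y := log_nonneg (by linarith)
  rw [Nat.add_sub_cancel]
  set ρ := |(g.leadingCoeff : ℝ)| / q + |(g.leadingCoeff : ℝ)| / X + q / X ^ (j + 1)
  have : 0 ≤ ρ := by positivity
  have : 0 ≤ |(g.leadingCoeff : ℝ)| / q := by positivity
  have : 0 ≤ |(g.leadingCoeff : ℝ)| / X := by positivity
  have : 0 ≤ q / X ^ (j + 1) := by positivity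
  rcases le_total ρ 1 with hρ | hρ
  · refine (norm_sum_le_of_le_one hg hY hYX hρ hq haq hα (by linarith) (by linarith)
      (by linarith)).trans ?_
    gcongr
    exact le_add_of_nonneg_right (by positivity)
  · have one_le_rpow : 1 ≤ ρ ^ θ := Real.one_le_rpow hρ (by positivity)
    calc ‖∑ n ∈ Icc (1 : ℤ) ⌊X⌋₊ with n ∈ WSet g Y, e ((g.eval n : ℤ) * α)‖
        ≤ X := norm_sum_e_filter_le (by positivity) (· ∈ WSet g Y) _
      _ ≤ ((log 2)⁻¹ * log Y) ^ (2 * j) * X * ρ ^ θ := by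
          rw [mul_right_comm]
          exact le_mul_of_one_le_left (by positivity) <|
            one_le_mul_of_one_le_of_one_le (one_le_pow₀ (one_le_inv_log_two_mul_log hY)) one_le_rpow
      _ ≤ (C + (log 2)⁻¹ ^ (2 * j)) * log Y ^ (2 * j) * X * (exp (-log X / log Y) + ρ ^ θ) := by
          rw [mul_pow]
          gcongr
          · exact le_add_of_nonneg_left hC.le
          · exact le_add_of_nonneg_left (exp_pos _).le

end

open scoped Classical in
/-- Lemma 4.5 (Rice): the Weyl-type minor-arc bound for
`∑_{1 ≤ n ≤ X, n ∈ W(g;Y)} e(g(n)α)` when `|α - a/q| < 1/q²`. -/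
theorem stmt11 (k : ℕ) (hk : 0 < k) :
    ∃ C : ℝ, 0 < C ∧
      ∀ g : Polynomial ℤ, g.natDegree = k → 0 < g.leadingCoeff →
        ∀ X Y Z : ℝ, 2 ≤ X → 2 ≤ Y → 2 ≤ Z → Y * Z ≤ X →
          ∀ a q : ℕ, 0 < a → 0 < q → Nat.gcd a q = 1 →
            ∀ α : ℝ, |α - (a : ℝ) / q| < 1 / (q : ℝ) ^ 2 →
              ‖∑ n ∈ (Finset.Icc 1 ⌊X⌋₊).filter (fun n => (n : ℤ) ∈ WSet g Y),
                  e (((g.eval (n : ℤ) : ℤ) : ℝ) * α)‖ ≤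
                C * (cont g : ℝ) ^ 6 * Real.log Y ^ (Real.exp 1 * k) * X *
                  (Real.exp (-Real.log Z / Real.log Y) +
                    ((g.leadingCoeff : ℝ) *
                        Real.log ((g.leadingCoeff : ℝ) * q * X) ^ (k ^ 2) *
                        ((q : ℝ)⁻¹ + Z / X + (q : ℝ) * Z ^ k /
                          ((g.leadingCoeff : ℝ) * X ^ k))) ^ ((2 : ℝ) ^ (-(k : ℝ)))) := by
  obtain ⟨C, hC, norm_sum_le⟩ := stmt11_general k hk
  refine ⟨C * (Real.log 2)⁻¹ ^ (Real.exp 1 * k), by positivity, ?_⟩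
  intro g hg hlc X Y Z hX hY hZ hYZ a q _ hq haq α hα
  have hX4 : 4 ≤ X := by nlinarith
  have : 0 ≤ Real.log Y := Real.log_nonneg (by linarith)
  have one_le_cont : (1 : ℝ) ≤ (cont g : ℝ) ^ 6 :=
    one_le_pow₀ (Nat.one_le_cast.mpr (cont_pos (hg ▸ hk)))
  have one_le_leadingCoeff : (1 : ℝ) ≤ g.leadingCoeff := by exact_mod_cast hlc
  rw [natCast_lift_Icc_one]
  refine (norm_sum_le g hg X Y hY (by nlinarith) a q hq
    (Nat.isCoprime_iff_coprime.mpr haq) α (by simpa using hα.le)).trans ?_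
  rw [abs_of_pos (by linarith)]
  gcongr ?_ * X * (Real.exp (-Real.log ?_ / _) + ?_ ^ _)
  · rw [mul_right_comm, mul_assoc C]
    refine le_trans ?_ (le_mul_of_one_le_right (by positivity) one_le_cont)
    exact mul_le_mul_of_nonneg_left (log_pow_two_mul_pred_le_mul_log_rpow k hY) hC.le
  · nlinarith
  · exact div_add_div_add_div_pow_le one_le_leadingCoeff (Nat.one_le_cast.mpr hq) hX4
      (by linarith) k (k ^ 2)
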